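/- There exist absolute constants 𝒦₂ > 0 and 𝒦₃ > 0 such that: for every n ≥ 2, every n×n real matrix A with σ_A > 0, and every constant 𝒞₁ > 0, if |Δ_y² F_B(z)| ≤ 𝒞₁·(D_A² + y²) for all z ∈ ℝ, all 0 ≤ y ≤ D_A, and all B ∈ N(8, Â), then ‖ℱ_A − e_{1,A}‖ ≤ (𝒦₂·𝒞₁ + 𝒦₃)·D_A². -/

import Mathlib

open Finset MeasureTheory

/-- Density of the standard normal distribution. -/
noncomputable def gaussD (x : ℝ) : ℝ := (Real.sqrt (2 * Real.pi))⁻¹ * Real.exp (-(x ^ 2) / 2)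

/-- Distribution function of the standard normal distribution. -/
noncomputable def gaussCDF (x : ℝ) : ℝ := ∫ t in Set.Iic x, gaussD t

section RankDefs

variable {m : ℕ}

/-- Row mean `a_{i·}`. -/
noncomputable def rowMean (A : Matrix (Fin m) (Fin m) ℝ) (i : Fin m) : ℝ := (∑ j, A i j) / (m : ℝ)

/-- Column mean `a_{·j}`. -/
noncomputable def colMean (A : Matrix (Fin m) (Fin m) ℝ) (j : Fin m) : ℝ := (∑ i, A i j) / (m : ℝ)

/-- Grand mean `a_{··}`. -/
noncomputable def totMean (A : Matrix (Fin m) (Fin m) ℝ) : ℝ := (∑ i, ∑ j, A i j) / (m : ℝ) ^ 2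

/-- Centered entries `a_{ij} − a_{i·} − a_{·j} + a_{··}`. -/
noncomputable def ctr (A : Matrix (Fin m) (Fin m) ℝ) (i j : Fin m) : ℝ :=
  A i j - rowMean A i - colMean A j + totMean A

/-- `σ_A²`. -/
noncomputable def sigma2 (A : Matrix (Fin m) (Fin m) ℝ) : ℝ :=
  (∑ i, ∑ j, ctr A i j ^ 2) / ((m : ℝ) - 1)

/-- `σ_A`. -/
noncomputable def sdev (A : Matrix (Fin m) (Fin m) ℝ) : ℝ := Real.sqrt (sigma2 A)

/-- Standardized matrix `Â = (â_{ij})`. -/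
noncomputable def hatM (A : Matrix (Fin m) (Fin m) ℝ) : Matrix (Fin m) (Fin m) ℝ :=
  fun i j => ctr A i j / sdev A

/-- `μ_A = n·a_{··}`. -/
noncomputable def muM (A : Matrix (Fin m) (Fin m) ℝ) : ℝ := (m : ℝ) * totMean A

/-- The linear rank statistic `T_A(π) = Σ_i a_{iπ(i)}`. -/
noncomputable def rankT (A : Matrix (Fin m) (Fin m) ℝ) (π : Equiv.Perm (Fin m)) : ℝ :=
  ∑ i, A i (π i)

/-- Expectation with respect to the uniform distribution on permutations. -/
noncomputable def permExp (f : Equiv.Perm (Fin m) → ℝ) : ℝ :=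
  (∑ π : Equiv.Perm (Fin m), f π) / (Nat.factorial m : ℝ)

/-- The standardized rank statistic `𝒯_A = (T_A − μ_A)/σ_A`. -/
noncomputable def rankTstd (A : Matrix (Fin m) (Fin m) ℝ) (π : Equiv.Perm (Fin m)) : ℝ :=
  (rankT A π - muM A) / sdev A

/-- `F_A`, the distribution function of `T_A`. -/
noncomputable def Fr (A : Matrix (Fin m) (Fin m) ℝ) (z : ℝ) : ℝ :=
  permExp (fun π => if rankT A π ≤ z then (1 : ℝ) else 0)

/-- `ℱ_A`, the distribution function of `𝒯_A`. -/
noncomputable def Fstd (A : Matrix (Fin m) (Fin m) ℝ) (z : ℝ) : ℝ :=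
  permExp (fun π => if rankTstd A π ≤ z then (1 : ℝ) else 0)

/-- `β_A = Σ_{i,j} |â_{ij}|³`. -/
noncomputable def betaM (A : Matrix (Fin m) (Fin m) ℝ) : ℝ := ∑ i, ∑ j, |hatM A i j| ^ 3

/-- `δ_A = Σ_{i,j} |â_{ij}|⁴`. -/
noncomputable def deltaM (A : Matrix (Fin m) (Fin m) ℝ) : ℝ := ∑ i, ∑ j, |hatM A i j| ^ 4

/-- `η_A = Σ_{i,j} |â_{ij}|⁵`. -/
noncomputable def etaM (A : Matrix (Fin m) (Fin m) ℝ) : ℝ := ∑ i, ∑ j, |hatM A i j| ^ 5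

/-- `D_A = (δ_A/n)^{1/2}`. -/
noncomputable def DM (A : Matrix (Fin m) (Fin m) ℝ) : ℝ := Real.sqrt (deltaM A / (m : ℝ))

/-- `E_A = (η_A/n)^{1/3}`. -/
noncomputable def EM (A : Matrix (Fin m) (Fin m) ℝ) : ℝ := (etaM A / (m : ℝ)) ^ ((1 : ℝ) / 3)

/-- `λ_{1,A} = (1/n)Σ_{i,j} â_{ij}³`. -/
noncomputable def lam1 (A : Matrix (Fin m) (Fin m) ℝ) : ℝ := (∑ i, ∑ j, hatM A i j ^ 3) / (m : ℝ)

/-- `λ_{2,A}`. -/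
noncomputable def lam2 (A : Matrix (Fin m) (Fin m) ℝ) : ℝ :=
  (∑ i, ∑ j, hatM A i j ^ 4) / (m : ℝ) + 3 / (m : ℝ)
    - 3 / (m : ℝ) ^ 2 *
        ∑ i, ∑ j, ∑ k, (hatM A i j ^ 2 * hatM A i k ^ 2 + hatM A i j ^ 2 * hatM A k j ^ 2)

/-- First-order Edgeworth expansion `e_{1,A}`. -/
noncomputable def edge1 (A : Matrix (Fin m) (Fin m) ℝ) (x : ℝ) : ℝ :=
  gaussCDF x - gaussD x * (lam1 A / 6) * (x ^ 2 - 1)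

/-- Second-order Edgeworth expansion `e_{2,A}`. -/
noncomputable def edge2 (A : Matrix (Fin m) (Fin m) ℝ) (x : ℝ) : ℝ :=
  gaussCDF x - gaussD x *
    (lam1 A / 6 * (x ^ 2 - 1) + lam2 A / 24 * (x ^ 3 - 3 * x)
      + lam1 A ^ 2 / 72 * (x ^ 5 - 10 * x ^ 3 + 15 * x))

/-- `k`-th iterated difference `Δ_y^k G`. -/
noncomputable def Δiter (y : ℝ) (k : ℕ) (G : ℝ → ℝ) : ℝ → ℝ :=
  (fun (G : ℝ → ℝ) (z : ℝ) => G (z + y) - G z)^[k] G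

/-- The interpolating polynomial `P_y^k(x; z, F)` of `F` at the points `z, z+y, …, z+ky`. -/
noncomputable def interp (y : ℝ) (k : ℕ) (z : ℝ) (F : ℝ → ℝ) (x : ℝ) : ℝ :=
  F z + ∑ s ∈ Finset.Icc 1 k,
    Δiter y s F z * ∏ i ∈ Finset.Icc 1 s, (x - z - ((i : ℝ) - 1) * y) / ((i : ℝ) * y)

end RankDefs

section PartA

section Comb
variable {n : ℕ}

open Classical in
/-- Bijections `R → C`, extended by the identity off `R`. -/
noncomputable def BJ (R C : Finset (Fin n)) : Finset (Fin n → Fin n) :=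
  Finset.univ.filter (fun σ => Set.BijOn σ (R : Set (Fin n)) (C : Set (Fin n)) ∧
    ∀ r, r ∉ R → σ r = r)

theorem mem_BJ {R C : Finset (Fin n)} {σ : Fin n → Fin n} :
    σ ∈ BJ R C ↔ Set.BijOn σ (R : Set (Fin n)) (C : Set (Fin n)) ∧ ∀ r, r ∉ R → σ r = r := by
  simp [BJ]

theorem BJ_fiber (R C : Finset (Fin n)) (i : Fin n) (hi : i ∈ R) (F : (Fin n → Fin n) → ℝ) :
    ∑ σ ∈ BJ R C, F σ =
      ∑ l ∈ C, ∑ σ ∈ BJ (R.erase i) (C.erase l), F (Function.update σ i l) := by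
  rw [Finset.sum_sigma']
  refine Finset.sum_bij' (fun σ _ => ⟨σ i, Function.update σ i i⟩)
    (fun p _ => Function.update p.2 i p.1) ?_ ?_ ?_ ?_ ?_
  · intro σ hσ
    rw [mem_BJ] at hσ
    obtain ⟨hb, ho⟩ := hσ
    rw [Finset.mem_sigma]
    refine ⟨hb.mapsTo hi, ?_⟩
    rw [mem_BJ]
    dsimp only
    refine ⟨⟨?_, ?_, ?_⟩, ?_⟩
    · intro r hr
      simp only [coe_erase, Set.mem_sdiff, mem_coe, Set.mem_singleton_iff] at hr ⊢
      rw [Function.update_of_ne hr.2]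
      exact ⟨hb.mapsTo hr.1, fun h => hr.2 (hb.injOn hr.1 hi h)⟩
    · intro r hr r' hr' h
      simp only [coe_erase, Set.mem_sdiff, mem_coe, Set.mem_singleton_iff] at hr hr'
      rw [Function.update_of_ne hr.2, Function.update_of_ne hr'.2] at h
      exact hb.injOn hr.1 hr'.1 h
    · intro c hc
      simp only [coe_erase, Set.mem_sdiff, mem_coe, Set.mem_singleton_iff] at hc
      obtain ⟨r, hr, rfl⟩ := hb.surjOn hc.1
      have hne : r ≠ i := fun h => hc.2 (by rw [h])
      refine ⟨r, by simpa using ⟨hr, hne⟩, ?_⟩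
      rw [Function.update_of_ne hne]
    · intro r hr
      by_cases h : r = i
      · subst h; simp
      · rw [Function.update_of_ne h]
        exact ho r (fun h' => hr (by simp [h, h']))
  · rintro ⟨l, σ⟩ hp
    rw [Finset.mem_sigma] at hp
    obtain ⟨hl, hσ⟩ := hp
    simp only at hl hσ
    rw [mem_BJ] at hσ
    obtain ⟨hb, ho⟩ := hσ
    rw [mem_BJ]
    simp only
    have key : ∀ r ∈ R, r ≠ i → σ r ∈ C ∧ σ r ≠ l := by
      intro r hr h
      have := hb.mapsTo (show r ∈ ((R.erase i : Finset (Fin n)) : Set (Fin n)) by simp [h, hr])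
      simpa using this
    refine ⟨⟨?_, ?_, ?_⟩, ?_⟩
    · intro r hr
      by_cases h : r = i
      · subst h; simpa using hl
      · rw [Function.update_of_ne h]
        exact (key r hr h).1
    · intro r hr r' hr' h
      by_cases h1 : r = i <;> by_cases h2 : r' = i
      · rw [h1, h2]
      · subst h1
        rw [Function.update_self, Function.update_of_ne h2] at h
        exact absurd h.symm (key r' hr' h2).2
      · subst h2
        rw [Function.update_self, Function.update_of_ne h1] at h
        exact absurd h (key r hr h1).2
      · rw [Function.update_of_ne h1, Function.update_of_ne h2] at h
        exact hb.injOn (by simpa using ⟨hr, h1⟩) (by simpa using ⟨hr', h2⟩) h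
    · intro c hc
      by_cases h : c = l
      · exact ⟨i, hi, by simp [h]⟩
      · obtain ⟨r, hr, rfl⟩ := hb.surjOn (show c ∈ ((C.erase l : Finset (Fin n)) : Set (Fin n)) by
          simpa using ⟨hc, h⟩)
        have hr' : r ≠ i ∧ r ∈ R := by simpa [and_comm] using hr
        exact ⟨r, hr'.2, by rw [Function.update_of_ne hr'.1]⟩
    · intro r hr
      have h : r ≠ i := fun h => hr (h ▸ hi)
      rw [Function.update_of_ne h]
      exact ho r (by simp [hr])
  · intro σ hσ
    simp
  · rintro ⟨l, σ⟩ hp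
    rw [Finset.mem_sigma] at hp
    have := (mem_BJ.1 hp.2).2 i (by simp)
    simp only [Function.update_self, Function.update_idem]
    congr 1
    rw [Function.update_eq_self_iff]
    exact this.symm
  · intro σ hσ
    simp

/-- Averages of `φ (x + T_B)` over the rank statistic with rows `R` and columns `C`. -/
noncomputable def gE (a : Fin n → Fin n → ℝ) (R C : Finset (Fin n)) (φ : ℝ → ℝ) (x : ℝ) : ℝ :=
  (∑ σ ∈ BJ R C, φ (x + ∑ r ∈ R, a r (σ r))) / (Nat.factorial R.card : ℝ)

theorem sum_update (a : Fin n → Fin n → ℝ) (R : Finset (Fin n)) (i l : Fin n) (hi : i ∈ R)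
    (σ : Fin n → Fin n) :
    ∑ r ∈ R, a r (Function.update σ i l r) = a i l + ∑ r ∈ R.erase i, a r (σ r) := by
  rw [← Finset.add_sum_erase R _ hi, Function.update_self]
  congr 1
  refine Finset.sum_congr rfl fun r hr => ?_
  rw [Function.update_of_ne (Finset.ne_of_mem_erase hr)]

theorem gE_row (a : Fin n → Fin n → ℝ) (R C : Finset (Fin n)) (φ : ℝ → ℝ) (x : ℝ) (i : Fin n)
    (hi : i ∈ R) :
    gE a R C φ x = (∑ l ∈ C, gE a (R.erase i) (C.erase l) φ (x + a i l)) / (R.card : ℝ) := by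
  have hpos : 0 < R.card := Finset.card_pos.2 ⟨i, hi⟩
  have hc : (R.erase i).card = R.card - 1 := Finset.card_erase_of_mem hi
  have hf : (Nat.factorial R.card : ℝ) = R.card * (Nat.factorial (R.card - 1) : ℝ) := by
    rw [← Nat.mul_factorial_pred hpos.ne']; push_cast; ring
  unfold gE
  rw [BJ_fiber R C i hi, hc, ← Finset.sum_div, hf, div_div, mul_comm (R.card : ℝ)]
  congr 1
  refine Finset.sum_congr rfl fun l _ => Finset.sum_congr rfl fun σ _ => ?_
  rw [sum_update a R i l hi σ, add_assoc]

/-- relation to permutations -/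
theorem BJ_perm {m : ℕ} (R C : Finset (Fin n)) (hR : R.card = m) (hC : C.card = m)
    (a : Fin n → Fin n → ℝ) (F : ℝ → ℝ) :
    ∑ σ ∈ BJ R C, F (∑ r ∈ R, a r (σ r)) =
      ∑ π : Equiv.Perm (Fin m),
        F (∑ i, a (R.orderEmbOfFin hR i) (C.orderEmbOfFin hC (π i))) := by
  classical
  symm
  set eR := R.orderIsoOfFin hR
  set eC := C.orderIsoOfFin hC
  refine Finset.sum_bij
    (fun π _ => fun r => if h : r ∈ R then ((eC (π (eR.symm ⟨r, h⟩)) : C) : Fin n) else r)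
    ?_ ?_ ?_ ?_
  · intro π _
    rw [mem_BJ]
    refine ⟨⟨?_, ?_, ?_⟩, ?_⟩
    · intro r hr
      have hr' : r ∈ R := hr
      simp [hr']
    · intro r hr r' hr' h
      have h1 : r ∈ R := hr
      have h2 : r' ∈ R := hr'
      simp only [h1, h2, dif_pos] at h
      have := π.injective (eC.injective (Subtype.ext h))
      have := eR.symm.injective this
      simpa using this
    · intro c hc
      have hc' : c ∈ C := hc
      refine ⟨eR (π.symm (eC.symm ⟨c, hc'⟩)), (eR _).2, ?_⟩
      simp
    · intro r hr
      simp [hr]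
  · intro π _ π' _ h
    ext1 i
    have := congrFun h (eR i)
    simp only [(eR i).2, dif_pos, Subtype.coe_eta, OrderIso.symm_apply_apply] at this
    exact eC.injective (Subtype.ext this)
  · intro σ hσ
    rw [mem_BJ] at hσ
    obtain ⟨hb, ho⟩ := hσ
    let e : R ≃ C := Set.BijOn.equiv σ hb
    refine ⟨(eR.toEquiv.trans e).trans eC.toEquiv.symm, Finset.mem_univ _, ?_⟩
    funext r
    by_cases h : r ∈ R
    · simp [h, e, Set.BijOn.equiv]
    · simp [h, ho r h]
  · intro π _
    congr 1
    rw [← Finset.sum_coe_sort R, ← Equiv.sum_comp eR.toEquiv]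
    refine Finset.sum_congr rfl fun i _ => ?_
    have h1 : ((eR i : R) : Fin n) = R.orderEmbOfFin hR i := rfl
    have h2 : ∀ k, ((eC k : C) : Fin n) = C.orderEmbOfFin hC k := fun _ => rfl
    have h3 : ((eR i : R) : Fin n) ∈ R := (eR i).2
    simp only [RelIso.coe_fn_toEquiv, h3, dif_pos, Subtype.coe_eta, OrderIso.symm_apply_apply, h2]
    rw [h1]

theorem gE_eq_perm {m : ℕ} (R C : Finset (Fin n)) (hR : R.card = m) (hC : C.card = m)
    (a : Fin n → Fin n → ℝ) (φ : ℝ → ℝ) (x : ℝ) :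
    gE a R C φ x = permExp (fun π : Equiv.Perm (Fin m) =>
      φ (x + rankT (fun i j => a (R.orderEmbOfFin hR i) (C.orderEmbOfFin hC j)) π)) := by
  unfold gE permExp rankT
  rw [BJ_perm R C hR hC a (fun t => φ (x + t)), hR]

theorem gE_univ (a : Fin n → Fin n → ℝ) (φ : ℝ → ℝ) (x : ℝ) :
    gE a univ univ φ x = permExp (fun π : Equiv.Perm (Fin n) => φ (x + rankT a π)) := by
  have h : (univ : Finset (Fin n)).card = n := by simp
  rw [gE_eq_perm univ univ h h]
  have : ∀ i, (univ : Finset (Fin n)).orderEmbOfFin h i = i := by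
    intro i
    have := Finset.orderEmbOfFin_unique' (s := (univ : Finset (Fin n))) h
      (f := RelEmbedding.refl _) (fun x => Finset.mem_univ _)
    rw [← this]; rfl
  simp only [this]

theorem gE_transpose (a : Fin n → Fin n → ℝ) (R C : Finset (Fin n)) (h : R.card = C.card)
    (φ : ℝ → ℝ) (x : ℝ) :
    gE a R C φ x = gE (fun i j => a j i) C R φ x := by
  rw [gE_eq_perm R C h rfl, gE_eq_perm C R rfl h]
  unfold permExp
  congr 1
  rw [← Equiv.sum_comp (Equiv.inv (Equiv.Perm (Fin C.card)))]
  refine Finset.sum_congr rfl fun π _ => ?_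
  congr 2
  unfold rankT
  rw [← Equiv.sum_comp π]
  simp

theorem gE_col (a : Fin n → Fin n → ℝ) (R C : Finset (Fin n)) (h : R.card = C.card)
    (φ : ℝ → ℝ) (x : ℝ) (j : Fin n) (hj : j ∈ C) :
    gE a R C φ x = (∑ k ∈ R, gE a (R.erase k) (C.erase j) φ (x + a k j)) / (R.card : ℝ) := by
  rw [gE_transpose a R C h, gE_row _ C R φ x j hj, h]
  congr 1
  refine Finset.sum_congr rfl fun k hk => ?_
  rw [gE_transpose a (R.erase k) (C.erase j)]
  rw [Finset.card_erase_of_mem hk, Finset.card_erase_of_mem hj, h]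

theorem gE_hasDeriv (a : Fin n → Fin n → ℝ) (R C : Finset (Fin n)) (f f' : ℝ → ℝ)
    (hf : ∀ t, HasDerivAt f (f' t) t) (x : ℝ) :
    HasDerivAt (gE a R C f) (gE a R C f' x) x := by
  unfold gE
  refine HasDerivAt.div_const ?_ _
  refine HasDerivAt.fun_sum fun σ _ => ?_
  exact (hf _).comp_add_const x _

end Comb

end PartA

section PartB

section Stein
variable {n : ℕ}

/-- The change of the statistic caused by a transposition. -/
noncomputable def dsw (a : Fin n → Fin n → ℝ) (i k j l : Fin n) : ℝ :=
  a i j + a k l - a i l - a k j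

theorem rankT_swap (a : Fin n → Fin n → ℝ) (i k : Fin n) (π : Equiv.Perm (Fin n)) :
    rankT a (π * Equiv.swap i k) = rankT a π - dsw a i k (π i) (π k) := by
  unfold rankT dsw
  by_cases hik : i = k
  · subst hik; simp
  rw [← Finset.add_sum_erase univ _ (Finset.mem_univ i),
    ← Finset.add_sum_erase univ (fun r => a r (π r)) (Finset.mem_univ i)]
  have hk : k ∈ univ.erase i := by simp [Ne.symm hik]
  rw [← Finset.add_sum_erase _ _ hk, ← Finset.add_sum_erase _ (fun r => a r (π r)) hk]
  have : ∑ x ∈ (univ.erase i).erase k, a x ((π * Equiv.swap i k) x) =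
      ∑ x ∈ (univ.erase i).erase k, a x (π x) := by
    refine Finset.sum_congr rfl fun r hr => ?_
    simp only [mem_erase, mem_univ, and_true] at hr
    rw [Equiv.Perm.mul_apply, Equiv.swap_apply_of_ne_of_ne hr.2 hr.1]
  rw [this]
  simp
  ring

theorem stein_pair (a : Fin n → Fin n → ℝ) (hrow : ∀ i, ∑ j, a i j = 0)
    (hcol : ∀ j, ∑ i, a i j = 0) (f : ℝ → ℝ) :
    4 * (n : ℝ) * permExp (fun π => rankT a π * f (rankT a π)) =
      ∑ i, ∑ k, permExp (fun π => dsw a i k (π i) (π k) *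
        (f (rankT a π) - f (rankT a π - dsw a i k (π i) (π k)))) := by
  have h1 : ∀ π : Equiv.Perm (Fin n), ∑ i, ∑ k, dsw a i k (π i) (π k) = 2 * n * rankT a π := by
    intro π
    unfold dsw rankT
    have e1 : ∀ i, ∑ k, a i (π k) = 0 := fun i => by
      rw [Equiv.sum_comp π (fun j => a i j)]; exact hrow i
    simp only [Finset.sum_sub_distrib, Finset.sum_add_distrib, e1]
    rw [Finset.sum_comm (f := fun i k => a k (π i))]
    simp only [e1]
    simp [← Finset.mul_sum]
    ring
  have h2 : ∀ i k, permExp (fun π : Equiv.Perm (Fin n) => dsw a i k (π i) (π k) * f (rankT a π)) =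
      - permExp (fun π : Equiv.Perm (Fin n) => dsw a i k (π i) (π k) *
        f (rankT a π - dsw a i k (π i) (π k))) := by
    intro i k
    unfold permExp
    rw [← neg_div, ← Finset.sum_neg_distrib, ← Equiv.sum_comp (Equiv.mulRight (Equiv.swap i k))]
    congr 1
    refine Finset.sum_congr rfl fun π _ => ?_
    rw [Equiv.coe_mulRight, rankT_swap]
    simp [dsw]
    ring
  have h3 : ∀ i k, permExp (fun π => dsw a i k (π i) (π k) *
        (f (rankT a π) - f (rankT a π - dsw a i k (π i) (π k)))) =
      2 * permExp (fun π : Equiv.Perm (Fin n) => dsw a i k (π i) (π k) * f (rankT a π)) := by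
    intro i k
    have : permExp (fun π => dsw a i k (π i) (π k) *
        (f (rankT a π) - f (rankT a π - dsw a i k (π i) (π k)))) =
      permExp (fun π : Equiv.Perm (Fin n) => dsw a i k (π i) (π k) * f (rankT a π)) -
      permExp (fun π : Equiv.Perm (Fin n) => dsw a i k (π i) (π k) *
        f (rankT a π - dsw a i k (π i) (π k))) := by
      unfold permExp
      rw [← sub_div, ← Finset.sum_sub_distrib]
      simp only [mul_sub]
    rw [this, h2 i k]
    have := h2 i k
    linarith
  simp only [h3]
  unfold permExp
  simp only [← Finset.mul_sum, ← Finset.sum_div]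
  have h4 : ∑ i, ∑ k, ∑ π : Equiv.Perm (Fin n), dsw a i k (π i) (π k) * f (rankT a π) =
      ∑ π : Equiv.Perm (Fin n), 2 * n * rankT a π * f (rankT a π) := by
    calc _ = ∑ i, ∑ π : Equiv.Perm (Fin n), ∑ k, dsw a i k (π i) (π k) * f (rankT a π) :=
          Finset.sum_congr rfl fun i _ => Finset.sum_comm
      _ = ∑ π : Equiv.Perm (Fin n), ∑ i, ∑ k, dsw a i k (π i) (π k) * f (rankT a π) :=
          Finset.sum_comm
      _ = _ := by
          refine Finset.sum_congr rfl fun π _ => ?_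
          rw [← h1 π]
          simp only [Finset.sum_mul]
  rw [h4]
  simp only [mul_assoc, ← Finset.mul_sum]
  ring

theorem BJ_univ_sum (F : (Fin n → Fin n) → ℝ) :
    ∑ π : Equiv.Perm (Fin n), F π = ∑ σ ∈ BJ (univ : Finset (Fin n)) univ, F σ := by
  refine Finset.sum_bij (fun π _ => ⇑π) ?_ ?_ ?_ ?_
  · intro π _
    rw [mem_BJ]
    refine ⟨?_, by simp⟩
    simpa using π.bijective
  · intro π _ π' _ h
    exact DFunLike.coe_injective h
  · intro σ hσ
    have hb : Function.Bijective σ := by simpa using (mem_BJ.1 hσ).1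
    exact ⟨Equiv.ofBijective σ hb, Finset.mem_univ _, rfl⟩
  · intro π _; rfl

theorem perm_two (a : Fin n → Fin n → ℝ) (i k : Fin n) (hik : i ≠ k) (u v : Fin n → Fin n → ℝ)
    (f : ℝ → ℝ) :
    permExp (fun π : Equiv.Perm (Fin n) => u (π i) (π k) * f (rankT a π - v (π i) (π k))) =
      (∑ j, ∑ l ∈ univ.erase j, u j l * gE a ((univ.erase i).erase k) ((univ.erase j).erase l) f
        (a i j + a k l - v j l)) / ((n : ℝ) * ((n : ℝ) - 1)) := by
  have hk : k ∈ univ.erase i := by simp [Ne.symm hik]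
  have hcard : ((univ.erase i).erase k).card = n - 2 := by
    rw [Finset.card_erase_of_mem hk, Finset.card_erase_of_mem (Finset.mem_univ i)]
    simp; omega
  have hn : 2 ≤ n := by
    have := Finset.card_pos.2 ⟨k, hk⟩
    rw [Finset.card_erase_of_mem (Finset.mem_univ i)] at this
    simp at this; omega
  have hfac : (Nat.factorial n : ℝ) = (n : ℝ) * ((n : ℝ) - 1) * (Nat.factorial (n - 2) : ℝ) := by
    obtain ⟨m, rfl⟩ := Nat.exists_eq_add_of_le' hn
    simp only [Nat.add_sub_cancel]
    rw [Nat.factorial_succ, Nat.factorial_succ]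
    push_cast
    ring
  unfold permExp gE
  have hsum : ∑ π : Equiv.Perm (Fin n), u (π i) (π k) * f (rankT a π - v (π i) (π k)) =
      ∑ σ ∈ BJ (univ : Finset (Fin n)) univ,
        u (σ i) (σ k) * f ((∑ r, a r (σ r)) - v (σ i) (σ k)) :=
    BJ_univ_sum (fun σ => u (σ i) (σ k) * f ((∑ r, a r (σ r)) - v (σ i) (σ k)))
  simp only []
  rw [hsum, hcard, BJ_fiber univ univ i (Finset.mem_univ i), hfac]
  simp only [mul_div_assoc']
  simp only [← Finset.sum_div]
  rw [div_div, mul_comm (Nat.factorial (n - 2) : ℝ)]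
  congr 1
  refine Finset.sum_congr rfl fun j _ => ?_
  rw [BJ_fiber _ _ k hk]
  refine Finset.sum_congr rfl fun l _ => ?_
  rw [Finset.mul_sum]
  refine Finset.sum_congr rfl fun σ _ => ?_
  rw [sum_update a univ i j (Finset.mem_univ i), sum_update a _ k l hk]
  simp only [Function.update_self, Function.update_of_ne (Ne.symm hik)]
  congr 2
  ring

theorem stein_sum (a : Fin n → Fin n → ℝ) (hn : 2 ≤ n) (hrow : ∀ i, ∑ j, a i j = 0)
    (hcol : ∀ j, ∑ i, a i j = 0) (f : ℝ → ℝ) :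
    4 * (n : ℝ) ^ 2 * ((n : ℝ) - 1) * permExp (fun π => rankT a π * f (rankT a π)) =
      ∑ i, ∑ k, ∑ j, ∑ l, dsw a i k j l *
        (gE a ((univ.erase i).erase k) ((univ.erase j).erase l) f (a i j + a k l) -
         gE a ((univ.erase i).erase k) ((univ.erase j).erase l) f (a i l + a k j)) := by
  have hn' : (2 : ℝ) ≤ n := by exact_mod_cast hn
  have hne : (n : ℝ) * ((n : ℝ) - 1) ≠ 0 := by
    have : 0 < (n : ℝ) * ((n : ℝ) - 1) := mul_pos (by linarith) (by linarith)
    exact this.ne'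
  have h := stein_pair a hrow hcol f
  have key : ∀ i k, (n : ℝ) * ((n : ℝ) - 1) * permExp (fun π => dsw a i k (π i) (π k) *
        (f (rankT a π) - f (rankT a π - dsw a i k (π i) (π k)))) =
      ∑ j, ∑ l, dsw a i k j l *
        (gE a ((univ.erase i).erase k) ((univ.erase j).erase l) f (a i j + a k l) -
         gE a ((univ.erase i).erase k) ((univ.erase j).erase l) f (a i l + a k j)) := by
    intro i k
    by_cases hik : i = k
    · subst hik
      have : ∀ j l, dsw a i i j l = 0 := fun j l => by unfold dsw; ring
      simp [this, permExp]
    have e1 := perm_two a i k hik (fun j l => dsw a i k j l) (fun _ _ => 0) f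
    have e2 := perm_two a i k hik (fun j l => dsw a i k j l) (fun j l => dsw a i k j l) f
    have e3 : permExp (fun π => dsw a i k (π i) (π k) *
        (f (rankT a π) - f (rankT a π - dsw a i k (π i) (π k)))) =
        permExp (fun π : Equiv.Perm (Fin n) => dsw a i k (π i) (π k) * f (rankT a π - 0)) -
        permExp (fun π : Equiv.Perm (Fin n) => dsw a i k (π i) (π k) *
          f (rankT a π - dsw a i k (π i) (π k))) := by
      unfold permExp
      rw [← sub_div, ← Finset.sum_sub_distrib]
      simp only [mul_sub, sub_zero]
    rw [e3, e1, e2, ← sub_div, mul_div_cancel₀ _ hne, ← Finset.sum_sub_distrib]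
    refine Finset.sum_congr rfl fun j _ => ?_
    rw [← Finset.sum_sub_distrib, ← Finset.add_sum_erase univ _ (Finset.mem_univ j)]
    have : dsw a i k j j = 0 := by unfold dsw; ring
    rw [this, zero_mul, zero_add]
    refine Finset.sum_congr rfl fun l _ => ?_
    rw [mul_sub, sub_zero]
    congr 3
    unfold dsw; ring
  simp only [← key, ← Finset.mul_sum]
  rw [← h]
  ring

end Stein

end PartB

section PartC

theorem taylor1 (g g' : ℝ → ℝ) (L : ℝ) (hg : ∀ t, HasDerivAt g (g' t) t)
    (hL : ∀ x y, |g' x - g' y| ≤ L * |x - y|) (u v : ℝ) :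
    |g u - g v - (u - v) * g' 0| ≤ L * |u - v| * (|u| + |v|) := by
  have hL0 : 0 ≤ L := by
    have := hL 1 0
    have h2 := abs_nonneg (g' 1 - g' 0)
    norm_num at this; linarith
  set M := |u| + |v|
  have hd : ∀ t ∈ Set.Icc (-M) M, HasDerivWithinAt (fun t => g t - t * g' 0) (g' t - g' 0)
      (Set.Icc (-M) M) t := by
    intro t _
    have := (hg t).sub ((hasDerivAt_id t).mul_const (g' 0))
    simp only [one_mul] at this
    exact this.hasDerivWithinAt
  have hb : ∀ t ∈ Set.Icc (-M) M, ‖g' t - g' 0‖ ≤ L * M := by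
    intro t ht
    rw [Real.norm_eq_abs]
    refine (hL t 0).trans ?_
    rw [sub_zero]
    exact mul_le_mul_of_nonneg_left (abs_le.2 ht) hL0
  have hu : u ∈ Set.Icc (-M) M := abs_le.1 (by simp [M])
  have hv : v ∈ Set.Icc (-M) M := abs_le.1 (by simp [M])
  have := Convex.norm_image_sub_le_of_norm_hasDerivWithin_le hd hb (convex_Icc _ _) hv hu
  rw [Real.norm_eq_abs, Real.norm_eq_abs] at this
  calc |g u - g v - (u - v) * g' 0| = |g u - u * g' 0 - (g v - v * g' 0)| := by congr 1; ring
    _ ≤ L * M * |u - v| := this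
    _ = _ := by ring

theorem taylor2 (g g' g'' : ℝ → ℝ) (L : ℝ) (hg : ∀ t, HasDerivAt g (g' t) t)
    (hg' : ∀ t, HasDerivAt g' (g'' t) t)
    (hL : ∀ x y, |g'' x - g'' y| ≤ L * |x - y|) (u v : ℝ) :
    |g u - g v - (u - v) * g' 0 - (u ^ 2 - v ^ 2) / 2 * g'' 0| ≤
      L * |u - v| * (|u| + |v|) ^ 2 := by
  have hL0 : 0 ≤ L := by
    have := hL 1 0
    have h2 := abs_nonneg (g'' 1 - g'' 0)
    norm_num at this; linarith
  set M := |u| + |v|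
  have hM : 0 ≤ M := by positivity
  have hd : ∀ t ∈ Set.Icc (-M) M, HasDerivWithinAt
      (fun t => g t - t * g' 0 - t ^ 2 / 2 * g'' 0) (g' t - g' 0 - t * g'' 0)
      (Set.Icc (-M) M) t := by
    intro t _
    have h1 := ((hg t).sub ((hasDerivAt_id t).mul_const (g' 0))).sub
      ((((hasDerivAt_id t).pow 2).div_const 2).mul_const (g'' 0))
    refine (h1.congr_deriv ?_).hasDerivWithinAt
    simp
  have hb : ∀ t ∈ Set.Icc (-M) M, ‖g' t - g' 0 - t * g'' 0‖ ≤ L * M ^ 2 := by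
    intro t ht
    rw [Real.norm_eq_abs]
    have h1 := taylor1 g' g'' L hg' hL t 0
    simp only [sub_zero, abs_zero, add_zero] at h1
    have h2 : |t| ≤ M := abs_le.2 ht
    refine h1.trans ?_
    rw [mul_assoc, pow_two]
    exact mul_le_mul_of_nonneg_left (mul_le_mul h2 h2 (abs_nonneg _) hM) hL0
  have hu : u ∈ Set.Icc (-M) M := abs_le.1 (by simp [M])
  have hv : v ∈ Set.Icc (-M) M := abs_le.1 (by simp [M])
  have := Convex.norm_image_sub_le_of_norm_hasDerivWithin_le hd hb (convex_Icc _ _) hv hu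
  rw [Real.norm_eq_abs, Real.norm_eq_abs] at this
  calc _ = |g u - u * g' 0 - u ^ 2 / 2 * g'' 0 - (g v - v * g' 0 - v ^ 2 / 2 * g'' 0)| := by
        congr 1; ring
    _ ≤ L * M ^ 2 * |u - v| := this
    _ = _ := by ring

section Cmp
variable {n : ℕ}

/-- Square of the majorant of an entry. -/
noncomputable def b2 (a : Fin n → Fin n → ℝ) (i j : Fin n) : ℝ :=
  a i j ^ 2 + (∑ l, a i l ^ 2) / n + (∑ k, a k j ^ 2) / n + (∑ k, ∑ l, a k l ^ 2) / (n : ℝ) ^ 2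

/-- Majorant of an entry and of the local averages. -/
noncomputable def bb (a : Fin n → Fin n → ℝ) (i j : Fin n) : ℝ := Real.sqrt (b2 a i j)

theorem b2_nonneg (a : Fin n → Fin n → ℝ) (i j : Fin n) : 0 ≤ b2 a i j := by
  unfold b2; positivity

theorem bb_nonneg (a : Fin n → Fin n → ℝ) (i j : Fin n) : 0 ≤ bb a i j := Real.sqrt_nonneg _

theorem bb_sq (a : Fin n → Fin n → ℝ) (i j : Fin n) : bb a i j ^ 2 = b2 a i j :=
  Real.sq_sqrt (b2_nonneg a i j)

theorem abs_le_bb (a : Fin n → Fin n → ℝ) (i j : Fin n) : |a i j| ≤ bb a i j := by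
  apply abs_le_of_sq_le_sq _ (bb_nonneg a i j)
  rw [bb_sq]
  unfold b2
  have h1 : 0 ≤ (∑ l, a i l ^ 2) / (n : ℝ) := by positivity
  have h2 : 0 ≤ (∑ k, a k j ^ 2) / (n : ℝ) := by positivity
  have h3 : 0 ≤ (∑ k, ∑ l, a k l ^ 2) / (n : ℝ) ^ 2 := by positivity
  linarith

theorem sum_abs_le_aux {ι : Type*} (s : Finset ι) (f : ι → ℝ) (N B : ℝ)
    (hN : (s.card : ℝ) = N) (hB : 0 ≤ B) (h : ∑ x ∈ s, f x ^ 2 ≤ N * B ^ 2) :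
    ∑ x ∈ s, |f x| ≤ N * B := by
  have hN0 : 0 ≤ N := hN ▸ Nat.cast_nonneg _
  have h1 := sq_sum_le_card_mul_sum_sq (s := s) (f := fun x => |f x|)
  simp only [sq_abs] at h1
  rw [hN] at h1
  refine le_trans (le_abs_self _) (abs_le_of_sq_le_sq ?_ (by positivity))
  calc _ ≤ _ := h1
    _ ≤ N * (N * B ^ 2) := mul_le_mul_of_nonneg_left h hN0
    _ = _ := by ring

theorem b2_parts (a : Fin n → Fin n → ℝ) (hn : 0 < n) (i j : Fin n) :
    ∑ l, a i l ^ 2 ≤ n * b2 a i j ∧ ∑ k, a k j ^ 2 ≤ n * b2 a i j ∧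
      ∑ k, ∑ l, a k l ^ 2 ≤ (n : ℝ) ^ 2 * b2 a i j := by
  have hn' : (0 : ℝ) < n := by exact_mod_cast hn
  have h0 : 0 ≤ a i j ^ 2 := by positivity
  have h1 : 0 ≤ (∑ l, a i l ^ 2) / (n : ℝ) := by positivity
  have h2 : 0 ≤ (∑ k, a k j ^ 2) / (n : ℝ) := by positivity
  have h3 : 0 ≤ (∑ k, ∑ l, a k l ^ 2) / (n : ℝ) ^ 2 := by positivity
  refine ⟨?_, ?_, ?_⟩
  · rw [mul_comm, ← div_le_iff₀ hn']; unfold b2; linarith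
  · rw [mul_comm, ← div_le_iff₀ hn']; unfold b2; linarith
  · rw [mul_comm, ← div_le_iff₀ (by positivity)]; unfold b2; linarith

theorem row_abs (a : Fin n → Fin n → ℝ) (hn : 0 < n) (i j : Fin n) :
    ∑ l, |a i l| ≤ n * bb a i j :=
  sum_abs_le_aux univ (fun l => a i l) n _ (by simp) (bb_nonneg a i j)
    (by rw [bb_sq]; exact (b2_parts a hn i j).1)

theorem col_abs (a : Fin n → Fin n → ℝ) (hn : 0 < n) (i j : Fin n) :
    ∑ k, |a k j| ≤ n * bb a i j :=
  sum_abs_le_aux univ (fun k => a k j) n _ (by simp) (bb_nonneg a i j)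
    (by rw [bb_sq]; exact (b2_parts a hn i j).2.1)

theorem tot_abs (a : Fin n → Fin n → ℝ) (hn : 0 < n) (i j : Fin n) :
    ∑ k, ∑ l, |a k l| ≤ (n : ℝ) ^ 2 * bb a i j := by
  have := sum_abs_le_aux (univ : Finset (Fin n × Fin n)) (fun p => a p.1 p.2) ((n : ℝ) ^ 2) _
    (by simp [pow_two]) (bb_nonneg a i j)
    (by rw [bb_sq, Fintype.sum_prod_type]; exact (b2_parts a hn i j).2.2)
  rwa [Fintype.sum_prod_type] at this

theorem b2_row_sum (a : Fin n → Fin n → ℝ) (hn : 0 < n) (i : Fin n) :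
    ∑ l, b2 a i l = 2 * (∑ l, a i l ^ 2) + 2 * ((∑ k, ∑ l, a k l ^ 2) / n) := by
  have hn' : (0 : ℝ) < n := by exact_mod_cast hn
  unfold b2
  simp only [Finset.sum_add_distrib, Finset.sum_const, card_univ, Fintype.card_fin, nsmul_eq_mul,
    ← Finset.sum_div]
  rw [Finset.sum_comm (f := fun x i => a i x ^ 2)]
  field_simp
  ring

theorem b2_col_sum (a : Fin n → Fin n → ℝ) (hn : 0 < n) (j : Fin n) :
    ∑ k, b2 a k j = 2 * (∑ k, a k j ^ 2) + 2 * ((∑ k, ∑ l, a k l ^ 2) / n) := by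
  have hn' : (0 : ℝ) < n := by exact_mod_cast hn
  unfold b2
  simp only [Finset.sum_add_distrib, Finset.sum_const, card_univ, Fintype.card_fin, nsmul_eq_mul,
    ← Finset.sum_div]
  field_simp
  ring

theorem b2_tot_sum (a : Fin n → Fin n → ℝ) (hn : 0 < n) :
    ∑ k, ∑ l, b2 a k l = 4 * ∑ k, ∑ l, a k l ^ 2 := by
  have hn' : (0 : ℝ) < n := by exact_mod_cast hn
  simp only [b2_row_sum a hn]
  simp only [Finset.sum_add_distrib, Finset.sum_const, card_univ, Fintype.card_fin, nsmul_eq_mul,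
    ← Finset.mul_sum]
  field_simp
  ring

theorem b2_row_le (a : Fin n → Fin n → ℝ) (hn : 0 < n) (i j : Fin n) :
    ∑ l, b2 a i l ≤ n * (4 * b2 a i j) := by
  have hn' : (0 : ℝ) < n := by exact_mod_cast hn
  rw [b2_row_sum a hn]
  obtain ⟨h1, -, h3⟩ := b2_parts a hn i j
  have : (∑ k, ∑ l, a k l ^ 2) / n ≤ n * b2 a i j := by
    rw [div_le_iff₀ hn']; nlinarith
  linarith

theorem b2_col_le (a : Fin n → Fin n → ℝ) (hn : 0 < n) (i j : Fin n) :
    ∑ k, b2 a k j ≤ n * (4 * b2 a i j) := by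
  have hn' : (0 : ℝ) < n := by exact_mod_cast hn
  rw [b2_col_sum a hn]
  obtain ⟨-, h1, h3⟩ := b2_parts a hn i j
  have : (∑ k, ∑ l, a k l ^ 2) / n ≤ n * b2 a i j := by
    rw [div_le_iff₀ hn']; nlinarith
  linarith

theorem b2_tot_le (a : Fin n → Fin n → ℝ) (hn : 0 < n) (i j : Fin n) :
    ∑ k, ∑ l, b2 a k l ≤ (n : ℝ) ^ 2 * (4 * b2 a i j) := by
  rw [b2_tot_sum a hn]
  obtain ⟨-, -, h3⟩ := b2_parts a hn i j
  linarith

theorem b2_sq_sum (a : Fin n → Fin n → ℝ) (hn : 0 < n) :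
    ∑ i, ∑ j, b2 a i j ^ 2 ≤ 16 * ∑ i, ∑ j, a i j ^ 4 := by
  have hn' : (0 : ℝ) < n := by exact_mod_cast hn
  have h4 : ∀ w x y z : ℝ, (w + x + y + z) ^ 2 ≤ 4 * (w ^ 2 + x ^ 2 + y ^ 2 + z ^ 2) := by
    intro w x y z
    nlinarith [sq_nonneg (w - x), sq_nonneg (w - y), sq_nonneg (w - z), sq_nonneg (x - y),
      sq_nonneg (x - z), sq_nonneg (y - z)]
  have hr : ∀ i, ((∑ l, a i l ^ 2) / (n : ℝ)) ^ 2 ≤ (∑ l, a i l ^ 4) / n := by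
    intro i
    have := sq_sum_le_card_mul_sum_sq (s := (univ : Finset (Fin n))) (f := fun l => a i l ^ 2)
    simp only [card_univ, Fintype.card_fin, ← pow_mul] at this
    rw [div_pow, div_le_div_iff₀ (by positivity) hn']
    nlinarith
  have hc : ∀ j, ((∑ k, a k j ^ 2) / (n : ℝ)) ^ 2 ≤ (∑ k, a k j ^ 4) / n := by
    intro j
    have := sq_sum_le_card_mul_sum_sq (s := (univ : Finset (Fin n))) (f := fun k => a k j ^ 2)
    simp only [card_univ, Fintype.card_fin, ← pow_mul] at this
    rw [div_pow, div_le_div_iff₀ (by positivity) hn']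
    nlinarith
  have ht : ((∑ k, ∑ l, a k l ^ 2) / (n : ℝ) ^ 2) ^ 2 ≤ (∑ k, ∑ l, a k l ^ 4) / (n : ℝ) ^ 2 := by
    have := sq_sum_le_card_mul_sum_sq (s := (univ : Finset (Fin n × Fin n)))
      (f := fun p => a p.1 p.2 ^ 2)
    simp only [card_univ, Fintype.card_fin, ← pow_mul, Fintype.sum_prod_type, Fintype.card_prod,
      Nat.cast_mul] at this
    rw [div_pow, div_le_div_iff₀ (by positivity) (by positivity)]
    have h2 : (0 : ℝ) < (n : ℝ) ^ 2 := by positivity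
    nlinarith
  calc ∑ i, ∑ j, b2 a i j ^ 2 ≤ ∑ i, ∑ j, 4 * (a i j ^ 4 + (∑ l, a i l ^ 4) / n +
        (∑ k, a k j ^ 4) / n + (∑ k, ∑ l, a k l ^ 4) / (n : ℝ) ^ 2) := by
        refine Finset.sum_le_sum fun i _ => Finset.sum_le_sum fun j _ => ?_
        unfold b2
        refine (h4 _ _ _ _).trans ?_
        have e : (a i j ^ 2) ^ 2 = a i j ^ 4 := by ring
        rw [e]
        have := hr i; have := hc j
        linarith
    _ = _ := by
        simp only [← Finset.mul_sum, Finset.sum_add_distrib, Finset.sum_const, card_univ,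
          Fintype.card_fin, nsmul_eq_mul, ← Finset.sum_div]
        rw [Finset.sum_comm (f := fun x i => a i x ^ 4)]
        field_simp
        ring

theorem avg_bound (R' C' : Finset (Fin n)) (m : ℝ) (hR : (R'.card : ℝ) = m - 1)
    (hC : (C'.card : ℝ) = m - 1) (hm : (n : ℝ) ≤ 2 * (m - 1)) (u v : Fin n → ℝ)
    (t : Fin n → Fin n → ℝ) (hu : ∀ l, 0 ≤ u l) (hv : ∀ l, 0 ≤ v l) (ht : ∀ k l, 0 ≤ t k l)
    (W B : ℝ) (hW : 0 ≤ W) (hB : 0 ≤ B) (hu' : ∑ l, u l ≤ n * W) (hv' : ∑ l, v l ≤ n * W)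
    (ht' : ∑ k, ∑ l, t k l ≤ (n : ℝ) ^ 2 * W) :
    ∑ k ∈ R', ∑ l ∈ C', (u l + v k + t k l + B) ≤ m * (m - 1) * (8 * W + B) := by
  have hn0 : (0 : ℝ) ≤ n := Nat.cast_nonneg n
  have hm1 : 0 ≤ m - 1 := by linarith
  have e1 : ∑ l ∈ C', u l ≤ n * W :=
    (Finset.sum_le_sum_of_subset_of_nonneg (Finset.subset_univ _) fun l _ _ => hu l).trans hu'
  have e2 : ∑ l ∈ R', v l ≤ n * W :=
    (Finset.sum_le_sum_of_subset_of_nonneg (Finset.subset_univ _) fun l _ _ => hv l).trans hv'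
  have e3 : ∑ k ∈ R', ∑ l ∈ C', t k l ≤ (n : ℝ) ^ 2 * W := by
    refine le_trans ?_ ht'
    refine (Finset.sum_le_sum_of_subset_of_nonneg (Finset.subset_univ R') fun k _ _ =>
      Finset.sum_nonneg fun l _ => ht k l).trans ?_
    exact Finset.sum_le_sum fun k _ =>
      Finset.sum_le_sum_of_subset_of_nonneg (Finset.subset_univ C') fun l _ _ => ht k l
  simp only [Finset.sum_add_distrib, Finset.sum_const, nsmul_eq_mul, hR, hC, ← Finset.mul_sum]
  have f1 : (m - 1) * ∑ l ∈ C', u l ≤ (m - 1) * (2 * (m - 1) * W) :=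
    mul_le_mul_of_nonneg_left (e1.trans (mul_le_mul_of_nonneg_right hm hW)) hm1
  have f2 : (m - 1) * ∑ l ∈ R', v l ≤ (m - 1) * (2 * (m - 1) * W) :=
    mul_le_mul_of_nonneg_left (e2.trans (mul_le_mul_of_nonneg_right hm hW)) hm1
  have f3 : (n : ℝ) ^ 2 * W ≤ (2 * (m - 1)) ^ 2 * W :=
    mul_le_mul_of_nonneg_right (pow_le_pow_left₀ hn0 hm 2) hW
  have h5 : 0 ≤ (m - 1) * W := mul_nonneg hm1 hW
  have h6 : 0 ≤ (m - 1) * B := mul_nonneg hm1 hB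
  nlinarith

theorem two_exp (a : Fin n → Fin n → ℝ) (R C : Finset (Fin n)) (h : R.card = C.card)
    (hm : 2 ≤ R.card) (i j : Fin n) (hi : i ∈ R) (hj : j ∈ C) (φ : ℝ → ℝ) (x : ℝ) :
    gE a R C φ x - gE a (R.erase i) (C.erase j) φ x =
      (gE a (R.erase i) (C.erase j) φ (x + a i j) - gE a (R.erase i) (C.erase j) φ x) / R.card +
      (∑ k ∈ R.erase i, ∑ l ∈ C.erase j,
        (gE a ((R.erase i).erase k) ((C.erase j).erase l) φ (x + a i l + a k j) -
         gE a ((R.erase i).erase k) ((C.erase j).erase l) φ (x + a k l))) /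
        ((R.card : ℝ) * ((R.card : ℝ) - 1)) := by
  have hm' : (2 : ℝ) ≤ R.card := by exact_mod_cast hm
  have hm0 : (R.card : ℝ) ≠ 0 := by linarith
  have hm1 : (R.card : ℝ) - 1 ≠ 0 := by linarith
  have hRc : ((R.erase i).card : ℝ) = (R.card : ℝ) - 1 := by
    rw [Finset.card_erase_of_mem hi, Nat.cast_sub (by omega)]; simp
  have hcc : (R.erase i).card = (C.erase j).card := by
    rw [Finset.card_erase_of_mem hi, Finset.card_erase_of_mem hj, h]
  have e1 : gE a R C φ x = (gE a (R.erase i) (C.erase j) φ (x + a i j) +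
      ∑ l ∈ C.erase j, (∑ k ∈ R.erase i,
        gE a ((R.erase i).erase k) ((C.erase j).erase l) φ (x + a i l + a k j)) /
          ((R.card : ℝ) - 1)) / R.card := by
    rw [gE_row a R C φ x i hi, ← Finset.add_sum_erase C _ hj]
    congr 2
    refine Finset.sum_congr rfl fun l hl => ?_
    have hl' := Finset.mem_erase.1 hl
    rw [gE_col a (R.erase i) (C.erase l) _ φ _ j (Finset.mem_erase.2 ⟨Ne.symm hl'.1, hj⟩), hRc]
    · congr 1
      refine Finset.sum_congr rfl fun k _ => ?_
      rw [Finset.erase_right_comm (s := C) (a := l) (b := j)]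
    · rw [Finset.card_erase_of_mem hi, Finset.card_erase_of_mem hl'.2, h]
  have e2 : ((R.card : ℝ) - 1) * gE a (R.erase i) (C.erase j) φ x = ∑ k ∈ R.erase i,
      (∑ l ∈ C.erase j, gE a ((R.erase i).erase k) ((C.erase j).erase l) φ (x + a k l)) /
        ((R.card : ℝ) - 1) := by
    rw [← hRc, ← nsmul_eq_mul, ← Finset.sum_const]
    refine Finset.sum_congr rfl fun k hk => ?_
    rw [gE_row a _ _ φ x k hk]
  simp only [Finset.sum_sub_distrib]
  rw [e1]
  rw [← Finset.sum_div] at e2 ⊢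
  rw [Finset.sum_comm (s := C.erase j)]
  have e3 : ∑ k ∈ R.erase i, ∑ l ∈ C.erase j,
      gE a ((R.erase i).erase k) ((C.erase j).erase l) φ (x + a k l) =
      ((R.card : ℝ) - 1) * (((R.card : ℝ) - 1) * gE a (R.erase i) (C.erase j) φ x) := by
    rw [e2]; field_simp
  rw [e3]
  field_simp
  ring

end Cmp

end PartC

section PartD

section Steps
variable {n : ℕ}

/-- Averaged Lipschitz condition over the submatrices. -/
def LipH (a : Fin n → Fin n → ℝ) (f : ℝ → ℝ) (L : ℝ) : Prop :=
  ∀ R C : Finset (Fin n), R.card = C.card → n ≤ R.card + 8 →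
    ∀ x y, |gE a R C f x - gE a R C f y| ≤ L * |x - y|

theorem step1 (a : Fin n → Fin n → ℝ) (hn : 16 ≤ n) (f : ℝ → ℝ) (L : ℝ) (hL0 : 0 ≤ L)
    (hL : LipH a f L) (R C : Finset (Fin n)) (h : R.card = C.card) (hc : n ≤ R.card + 6)
    (i j : Fin n) (hi : i ∈ R) (hj : j ∈ C) (x : ℝ) :
    |gE a R C f x - gE a (R.erase i) (C.erase j) f x| ≤ 9 * L * bb a i j := by
  have hRc : (R.erase i).card = R.card - 1 := Finset.card_erase_of_mem hi
  have hCc : (C.erase j).card = R.card - 1 := by rw [Finset.card_erase_of_mem hj, h]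
  have hm1 : ((R.card - 1 : ℕ) : ℝ) = (R.card : ℝ) - 1 := by
    rw [Nat.cast_sub (by omega)]; simp
  have hmn : (n : ℝ) ≤ 2 * ((R.card : ℝ) - 1) := by
    rw [← hm1]; norm_cast; omega
  have hn' : (16 : ℝ) ≤ n := by exact_mod_cast hn
  have hm0 : (1 : ℝ) ≤ R.card := by linarith
  have hmm : 0 < (R.card : ℝ) * ((R.card : ℝ) - 1) := mul_pos (by linarith) (by linarith)
  have hb := bb_nonneg a i j
  rw [two_exp a R C h (by omega) i j hi hj]
  have t1 : |(gE a (R.erase i) (C.erase j) f (x + a i j) -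
      gE a (R.erase i) (C.erase j) f x) / R.card| ≤ L * bb a i j := by
    rw [abs_div, abs_of_pos (show (0 : ℝ) < R.card by linarith)]
    have h1 := hL (R.erase i) (C.erase j) (by rw [hRc, hCc]) (by rw [hRc]; omega) (x + a i j) x
    rw [add_sub_cancel_left] at h1
    have h2 : L * |a i j| ≤ L * bb a i j := mul_le_mul_of_nonneg_left (abs_le_bb a i j) hL0
    exact (div_le_self (abs_nonneg _) hm0).trans (h1.trans h2)
  have t2 : |∑ k ∈ R.erase i, ∑ l ∈ C.erase j,
        (gE a ((R.erase i).erase k) ((C.erase j).erase l) f (x + a i l + a k j) -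
         gE a ((R.erase i).erase k) ((C.erase j).erase l) f (x + a k l))| ≤
      L * ((R.card : ℝ) * ((R.card : ℝ) - 1) * (8 * bb a i j + 0)) := by
    refine le_trans ?_ (mul_le_mul_of_nonneg_left (avg_bound (R.erase i) (C.erase j) R.card
      (by rw [hRc, hm1]) (by rw [hCc, hm1]) hmn (fun l => |a i l|) (fun k => |a k j|)
      (fun k l => |a k l|) (fun _ => abs_nonneg _) (fun _ => abs_nonneg _)
      (fun _ _ => abs_nonneg _) (bb a i j) 0 hb le_rfl (row_abs a (by omega) i j)
      (col_abs a (by omega) i j) (tot_abs a (by omega) i j)) hL0)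
    rw [Finset.mul_sum]
    refine (Finset.abs_sum_le_sum_abs _ _).trans (Finset.sum_le_sum fun k hk => ?_)
    rw [Finset.mul_sum]
    refine (Finset.abs_sum_le_sum_abs _ _).trans (Finset.sum_le_sum fun l hl => ?_)
    have h1 := hL ((R.erase i).erase k) ((C.erase j).erase l)
      (by rw [Finset.card_erase_of_mem hk, Finset.card_erase_of_mem hl, hRc, hCc])
      (by rw [Finset.card_erase_of_mem hk, hRc]; omega) (x + a i l + a k j) (x + a k l)
    refine h1.trans (mul_le_mul_of_nonneg_left ?_ hL0)
    have : x + a i l + a k j - (x + a k l) = a i l + a k j - a k l := by ring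
    rw [this, add_zero]
    exact (abs_sub _ _).trans (add_le_add (abs_add_le _ _) le_rfl)
  have t3 : |(∑ k ∈ R.erase i, ∑ l ∈ C.erase j,
        (gE a ((R.erase i).erase k) ((C.erase j).erase l) f (x + a i l + a k j) -
         gE a ((R.erase i).erase k) ((C.erase j).erase l) f (x + a k l))) /
        ((R.card : ℝ) * ((R.card : ℝ) - 1))| ≤ 8 * L * bb a i j := by
    rw [abs_div, abs_of_pos hmm, div_le_iff₀ hmm]
    refine t2.trans (le_of_eq ?_)
    ring
  calc _ ≤ _ := abs_add_le _ _
    _ ≤ L * bb a i j + 8 * L * bb a i j := add_le_add t1 t3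
    _ = _ := by ring

/-- First order coefficient in the comparison step. -/
noncomputable def cf (a : Fin n → Fin n → ℝ) (R C : Finset (Fin n)) (i j : Fin n) : ℝ :=
  a i j / R.card + (∑ k ∈ R.erase i, ∑ l ∈ C.erase j, (a i l + a k j - a k l)) /
    ((R.card : ℝ) * ((R.card : ℝ) - 1))

theorem poly_aux1 (L b β t q : ℝ) (hL : 0 ≤ L) (hb : 0 ≤ b) (hβ : 0 ≤ β) (ht : |t| ≤ b)
    (hq : |q| ≤ 9 * L * (β + b)) : L * |t| * (|t| + 0) + |t| * |q| ≤ 15 * L * (b ^ 2 + β ^ 2) := by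
  have h0 := abs_nonneg t
  have h1 : |t| * (|t| + 0) ≤ b * b := by rw [add_zero]; exact mul_le_mul ht ht h0 hb
  have h2 : |t| * |q| ≤ b * (9 * L * (β + b)) := mul_le_mul ht hq (abs_nonneg _) hb
  have h3 : L * (|t| * (|t| + 0)) ≤ L * (b * b) := mul_le_mul_of_nonneg_left h1 hL
  have h4 : 0 ≤ L * (b - β) ^ 2 := by positivity
  have h5 : 0 ≤ L * b ^ 2 := by positivity
  have h6 : 0 ≤ L * β ^ 2 := by positivity
  nlinarith

theorem poly_aux2 (L b β c1 c2 c3 u v q : ℝ) (hL : 0 ≤ L) (hb : 0 ≤ b) (hβ : 0 ≤ β)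
    (h1 : 0 ≤ c1) (h2 : 0 ≤ c2) (h3 : 0 ≤ c3) (hu : |u| ≤ c1 + c2) (hv : |v| ≤ c3)
    (hq : |q| ≤ 9 * L * (β + b + c3)) :
    L * |u - v| * (|u| + |v|) + |u - v| * |q| ≤
      30 * L * (c1 ^ 2 + c2 ^ 2 + c3 ^ 2 + (b ^ 2 + β ^ 2)) := by
  have huv : |u - v| ≤ c1 + c2 + c3 := (abs_sub _ _).trans (add_le_add hu hv)
  have e1 : |u - v| * (|u| + |v|) ≤ (c1 + c2 + c3) * (c1 + c2 + c3) :=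
    mul_le_mul huv (by linarith) (by positivity) (by positivity)
  have e2 : |u - v| * |q| ≤ (c1 + c2 + c3) * (9 * L * (β + b + c3)) :=
    mul_le_mul huv hq (by positivity) (by positivity)
  have e3 : L * (|u - v| * (|u| + |v|)) ≤ L * ((c1 + c2 + c3) * (c1 + c2 + c3)) :=
    mul_le_mul_of_nonneg_left e1 hL
  have e4 : (c1 + c2 + c3) * (c1 + c2 + c3) + (c1 + c2 + c3) * (9 * (β + b + c3)) ≤
      30 * (c1 ^ 2 + c2 ^ 2 + c3 ^ 2 + (b ^ 2 + β ^ 2)) := by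
    nlinarith [sq_nonneg (c1 - c2), sq_nonneg (c1 - c3), sq_nonneg (c2 - c3), sq_nonneg (c1 - β),
      sq_nonneg (c1 - b), sq_nonneg (c2 - β), sq_nonneg (c2 - b), sq_nonneg (c3 - β),
      sq_nonneg (c3 - b), sq_nonneg (β - b)]
  have e5 := mul_le_mul_of_nonneg_left e4 hL
  linarith

theorem step2 (a : Fin n → Fin n → ℝ) (hn : 16 ≤ n) (f1 f2 : ℝ → ℝ)
    (hd : ∀ t, HasDerivAt f1 (f2 t) t) (L : ℝ) (hL0 : 0 ≤ L)
    (hL : LipH a f2 L) (R C : Finset (Fin n)) (h : R.card = C.card) (hc : n ≤ R.card + 4)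
    (i j : Fin n) (hi : i ∈ R) (hj : j ∈ C) (p β : ℝ) (hβ : 0 ≤ β)
    (hp : |gE a R C f2 0 - p| ≤ 9 * L * β) :
    |gE a R C f1 0 - gE a (R.erase i) (C.erase j) f1 0 - p * cf a R C i j| ≤
      1005 * L * (bb a i j ^ 2 + β ^ 2) := by
  have hRc : (R.erase i).card = R.card - 1 := Finset.card_erase_of_mem hi
  have hCc : (C.erase j).card = R.card - 1 := by rw [Finset.card_erase_of_mem hj, h]
  have hm1 : ((R.card - 1 : ℕ) : ℝ) = (R.card : ℝ) - 1 := by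
    rw [Nat.cast_sub (by omega)]; simp
  have hmn : (n : ℝ) ≤ 2 * ((R.card : ℝ) - 1) := by
    rw [← hm1]; norm_cast; omega
  have hn' : (16 : ℝ) ≤ n := by exact_mod_cast hn
  have hm0 : (1 : ℝ) ≤ R.card := by linarith
  have hmm : 0 < (R.card : ℝ) * ((R.card : ℝ) - 1) := mul_pos (by linarith) (by linarith)
  have hb := bb_nonneg a i j
  have hp1 : |gE a (R.erase i) (C.erase j) f2 0 - p| ≤ 9 * L * (β + bb a i j) := by
    have := step1 a hn f2 L hL0 hL R C h (by omega) i j hi hj 0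
    rw [abs_sub_comm] at this
    calc _ = |(gE a (R.erase i) (C.erase j) f2 0 - gE a R C f2 0) + (gE a R C f2 0 - p)| := by
          congr 1; ring
      _ ≤ _ := abs_add_le _ _
      _ ≤ _ := by linarith
  have hp2 : ∀ k ∈ R.erase i, ∀ l ∈ C.erase j,
      |gE a ((R.erase i).erase k) ((C.erase j).erase l) f2 0 - p| ≤
        9 * L * (β + bb a i j + bb a k l) := by
    intro k hk l hl
    have := step1 a hn f2 L hL0 hL (R.erase i) (C.erase j) (by rw [hRc, hCc])
      (by rw [hRc]; omega) k l hk hl 0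
    rw [abs_sub_comm] at this
    calc _ = |(gE a ((R.erase i).erase k) ((C.erase j).erase l) f2 0 -
            gE a (R.erase i) (C.erase j) f2 0) + (gE a (R.erase i) (C.erase j) f2 0 - p)| := by
          congr 1; ring
      _ ≤ _ := abs_add_le _ _
      _ ≤ _ := by linarith
  have t1 : |(gE a (R.erase i) (C.erase j) f1 (0 + a i j) -
      gE a (R.erase i) (C.erase j) f1 0 - a i j * p)| ≤
      15 * L * (bb a i j ^ 2 + β ^ 2) := by
    have h1 := taylor1 _ _ L (gE_hasDeriv a (R.erase i) (C.erase j) f1 f2 hd)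
      (hL (R.erase i) (C.erase j) (by rw [hRc, hCc]) (by rw [hRc]; omega)) (0 + a i j) 0
    have h2 := poly_aux1 L (bb a i j) β (a i j) (gE a (R.erase i) (C.erase j) f2 0 - p) hL0 hb hβ
      (abs_le_bb a i j) hp1
    refine le_trans ?_ h2
    rw [zero_add, sub_zero, abs_zero] at h1
    rw [← abs_mul]
    rw [zero_add]
    calc _ = |(gE a (R.erase i) (C.erase j) f1 (a i j) - gE a (R.erase i) (C.erase j) f1 0 -
            a i j * gE a (R.erase i) (C.erase j) f2 0) +
            a i j * (gE a (R.erase i) (C.erase j) f2 0 - p)| := by congr 1; ring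
      _ ≤ _ := abs_add_le _ _
      _ ≤ _ := add_le_add h1 le_rfl
  have t2 : |∑ k ∈ R.erase i, ∑ l ∈ C.erase j,
        (gE a ((R.erase i).erase k) ((C.erase j).erase l) f1 (0 + a i l + a k j) -
         gE a ((R.erase i).erase k) ((C.erase j).erase l) f1 (0 + a k l) -
         (a i l + a k j - a k l) * p)| ≤
      30 * L * ((R.card : ℝ) * ((R.card : ℝ) - 1) * (8 * (4 * (bb a i j ^ 2 + β ^ 2)) +
        (bb a i j ^ 2 + β ^ 2))) := by
    have hβ2 : 0 ≤ β ^ 2 := by positivity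
    have hb2 : bb a i j ^ 2 = b2 a i j := bb_sq a i j
    have hn0 : (0 : ℝ) ≤ n := by positivity
    refine le_trans ?_ (mul_le_mul_of_nonneg_left (avg_bound (R.erase i) (C.erase j) R.card
      (by rw [hRc, hm1]) (by rw [hCc, hm1]) hmn (fun l => b2 a i l) (fun k => b2 a k j)
      (fun k l => b2 a k l) (fun _ => b2_nonneg _ _ _) (fun _ => b2_nonneg _ _ _)
      (fun _ _ => b2_nonneg _ _ _) (4 * (bb a i j ^ 2 + β ^ 2)) (bb a i j ^ 2 + β ^ 2)
      (by positivity) (by positivity)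
      ((b2_row_le a (by omega) i j).trans (mul_le_mul_of_nonneg_left (by linarith) hn0))
      ((b2_col_le a (by omega) i j).trans (mul_le_mul_of_nonneg_left (by linarith) hn0))
      ((b2_tot_le a (by omega) i j).trans (mul_le_mul_of_nonneg_left (by linarith)
        (by positivity)))) (by positivity : (0 : ℝ) ≤ 30 * L))
    rw [Finset.mul_sum]
    refine (Finset.abs_sum_le_sum_abs _ _).trans (Finset.sum_le_sum fun k hk => ?_)
    rw [Finset.mul_sum]
    refine (Finset.abs_sum_le_sum_abs _ _).trans (Finset.sum_le_sum fun l hl => ?_)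
    have h1 := taylor1 _ _ L (gE_hasDeriv a ((R.erase i).erase k) ((C.erase j).erase l) f1 f2 hd)
      (hL ((R.erase i).erase k) ((C.erase j).erase l)
      (by rw [Finset.card_erase_of_mem hk, Finset.card_erase_of_mem hl, hRc, hCc])
      (by rw [Finset.card_erase_of_mem hk, hRc]; omega)) (a i l + a k j) (a k l)
    have h2 := poly_aux2 L (bb a i j) β (bb a i l) (bb a k j) (bb a k l) (a i l + a k j) (a k l)
      (gE a ((R.erase i).erase k) ((C.erase j).erase l) f2 0 - p) hL0 hb hβ
      (bb_nonneg _ _ _) (bb_nonneg _ _ _) (bb_nonneg _ _ _)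
      ((abs_add_le _ _).trans (add_le_add (abs_le_bb _ _ _) (abs_le_bb _ _ _)))
      (abs_le_bb _ _ _) (hp2 k hk l hl)
    rw [bb_sq a i l, bb_sq a k j, bb_sq a k l] at h2
    refine le_trans ?_ h2
    rw [← abs_mul, zero_add, zero_add]
    refine le_trans ?_ (add_le_add h1 le_rfl)
    refine le_trans (le_of_eq ?_) (abs_add_le _ _)
    congr 1
    ring
  have t3 : |(∑ k ∈ R.erase i, ∑ l ∈ C.erase j,
        (gE a ((R.erase i).erase k) ((C.erase j).erase l) f1 (0 + a i l + a k j) -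
         gE a ((R.erase i).erase k) ((C.erase j).erase l) f1 (0 + a k l) -
         (a i l + a k j - a k l) * p)) /
        ((R.card : ℝ) * ((R.card : ℝ) - 1))| ≤ 990 * L * (bb a i j ^ 2 + β ^ 2) := by
    rw [abs_div, abs_of_pos hmm, div_le_iff₀ hmm]
    refine t2.trans (le_of_eq ?_)
    ring
  have t1' : |(gE a (R.erase i) (C.erase j) f1 (0 + a i j) -
      gE a (R.erase i) (C.erase j) f1 0 - a i j * p) / R.card| ≤
      15 * L * (bb a i j ^ 2 + β ^ 2) := by
    rw [abs_div, abs_of_pos (show (0 : ℝ) < R.card by linarith)]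
    exact (div_le_self (abs_nonneg _) hm0).trans t1
  rw [two_exp a R C h (by omega) i j hi hj]
  have e : ∀ s1 s2 : ℝ, ∀ P Q : ℝ, (s1 / R.card + s2 / ((R.card : ℝ) * ((R.card : ℝ) - 1))) -
      p * (P / R.card + Q / ((R.card : ℝ) * ((R.card : ℝ) - 1))) =
      (s1 - P * p) / R.card + (s2 - Q * p) / ((R.card : ℝ) * ((R.card : ℝ) - 1)) := by
    intro s1 s2 P Q; ring
  unfold cf
  rw [e]
  have e2 : (∑ k ∈ R.erase i, ∑ l ∈ C.erase j,
        (gE a ((R.erase i).erase k) ((C.erase j).erase l) f1 (0 + a i l + a k j) -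
         gE a ((R.erase i).erase k) ((C.erase j).erase l) f1 (0 + a k l))) -
        (∑ k ∈ R.erase i, ∑ l ∈ C.erase j, (a i l + a k j - a k l)) * p =
      ∑ k ∈ R.erase i, ∑ l ∈ C.erase j,
        (gE a ((R.erase i).erase k) ((C.erase j).erase l) f1 (0 + a i l + a k j) -
         gE a ((R.erase i).erase k) ((C.erase j).erase l) f1 (0 + a k l) -
         (a i l + a k j - a k l) * p) := by
    simp only [Finset.sum_sub_distrib, Finset.sum_mul, Finset.sum_add_distrib, sub_mul, add_mul]
  rw [e2]
  refine (abs_add_le _ _).trans ((add_le_add t1' t3).trans (le_of_eq ?_))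
  ring

end Steps

end PartD

section PartE

section SteinRem
variable {n : ℕ}

theorem sum_sq_diff (u v : Fin n → ℝ) (hu : ∑ i, u i = 0) (hv : ∑ i, v i = 0) :
    ∑ j, ∑ l, (u j - u l) ^ 2 * (v j + v l) = 2 * n * ∑ j, u j ^ 2 * v j := by
  have e : ∀ j l, (u j - u l) ^ 2 * (v j + v l) = u j ^ 2 * v j + u j ^ 2 * v l
      - 2 * (u j * v j) * u l - 2 * u j * (u l * v l) + v j * u l ^ 2 + u l ^ 2 * v l := by
    intro j l; ring
  simp only [e, Finset.sum_add_distrib, Finset.sum_sub_distrib, ← Finset.mul_sum,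
    ← Finset.sum_mul, hu, hv, Finset.sum_const, card_univ, Fintype.card_fin, nsmul_eq_mul]
  have e2 : ∀ j, u j ^ 2 * ((n : ℝ) * v j) = n * (u j ^ 2 * v j) := fun j => by ring
  simp only [e2, ← Finset.mul_sum]
  ring

theorem sum_sq_diff' (u : Fin n → ℝ) (hu : ∑ i, u i = 0) :
    ∑ j, ∑ l, (u j - u l) ^ 2 = 2 * n * ∑ j, u j ^ 2 := by
  have e : ∀ j l, (u j - u l) ^ 2 = u j ^ 2 - 2 * u j * u l + u l ^ 2 := by
    intro j l; ring
  simp only [e, Finset.sum_add_distrib, Finset.sum_sub_distrib, ← Finset.mul_sum,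
    ← Finset.sum_mul, hu, Finset.sum_const, card_univ, Fintype.card_fin, nsmul_eq_mul]
  ring

theorem dsw_sq_sum (a : Fin n → Fin n → ℝ) (hrow : ∀ i, ∑ j, a i j = 0)
    (hcol : ∀ j, ∑ i, a i j = 0) :
    ∑ i, ∑ k, ∑ j, ∑ l, dsw a i k j l ^ 2 = 4 * (n : ℝ) ^ 2 * ∑ i, ∑ j, a i j ^ 2 := by
  have e : ∀ i k, ∑ j, ∑ l, dsw a i k j l ^ 2 = 2 * n * ∑ j, (a i j - a k j) ^ 2 := by
    intro i k
    rw [← sum_sq_diff' (fun j => a i j - a k j) (by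
      simp only [Finset.sum_sub_distrib, hrow, sub_zero])]
    refine Finset.sum_congr rfl fun j _ => Finset.sum_congr rfl fun l _ => ?_
    unfold dsw; ring
  simp only [e, ← Finset.mul_sum]
  have e2 : ∑ i, ∑ k, ∑ j, (a i j - a k j) ^ 2 = ∑ j, ∑ i, ∑ k, (a i j - a k j) ^ 2 := by
    rw [Finset.sum_comm]
    rw [Finset.sum_congr rfl fun k _ => Finset.sum_comm, Finset.sum_comm]
    refine Finset.sum_congr rfl fun j _ => ?_
    rw [Finset.sum_comm]
  rw [e2]
  have e3 : ∀ j, ∑ i, ∑ k, (a i j - a k j) ^ 2 = 2 * n * ∑ i, a i j ^ 2 := fun j =>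
    sum_sq_diff' (fun i => a i j) (hcol j)
  simp only [e3, ← Finset.mul_sum]
  rw [Finset.sum_comm]
  ring

theorem dsw_cu_sum (a : Fin n → Fin n → ℝ) (hrow : ∀ i, ∑ j, a i j = 0)
    (hcol : ∀ j, ∑ i, a i j = 0) :
    ∑ i, ∑ k, ∑ j, ∑ l, dsw a i k j l ^ 2 * (a i j + a k l + (a i l + a k j)) =
      4 * (n : ℝ) ^ 2 * ∑ i, ∑ j, a i j ^ 3 := by
  have e : ∀ i k, ∑ j, ∑ l, dsw a i k j l ^ 2 * (a i j + a k l + (a i l + a k j)) =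
      2 * n * ∑ j, (a i j - a k j) ^ 2 * (a i j + a k j) := by
    intro i k
    rw [← sum_sq_diff (fun j => a i j - a k j) (fun j => a i j + a k j) (by
      simp only [Finset.sum_sub_distrib, hrow, sub_zero])  (by
      simp only [Finset.sum_add_distrib, hrow, add_zero])]
    refine Finset.sum_congr rfl fun j _ => Finset.sum_congr rfl fun l _ => ?_
    unfold dsw; ring
  simp only [e, ← Finset.mul_sum]
  have e2 : ∑ i, ∑ k, ∑ j, (a i j - a k j) ^ 2 * (a i j + a k j) =
      ∑ j, ∑ i, ∑ k, (a i j - a k j) ^ 2 * (a i j + a k j) := by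
    rw [Finset.sum_comm]
    rw [Finset.sum_congr rfl fun k _ => Finset.sum_comm, Finset.sum_comm]
    refine Finset.sum_congr rfl fun j _ => ?_
    rw [Finset.sum_comm]
  rw [e2]
  have e3 : ∀ j, ∑ i, ∑ k, (a i j - a k j) ^ 2 * (a i j + a k j) =
      2 * n * ∑ i, a i j ^ 2 * a i j := fun j =>
    sum_sq_diff (fun i => a i j) (fun i => a i j) (hcol j) (hcol j)
  simp only [e3, ← Finset.mul_sum]
  rw [Finset.sum_comm]
  have e4 : ∀ i j, a i j ^ 2 * a i j = a i j ^ 3 := fun i j => by ring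
  simp only [e4]
  ring

theorem sum4_w (w : Fin n → Fin n → ℝ) :
    ∑ i, ∑ k, ∑ j, ∑ l, (w i j + w i l + w k j + w k l) = 4 * (n : ℝ) ^ 2 * ∑ i, ∑ j, w i j := by
  simp only [Finset.sum_add_distrib, Finset.sum_const, card_univ, Fintype.card_fin, nsmul_eq_mul,
    ← Finset.mul_sum]
  ring

/-- Sum of the four majorants of a 2 by 2 minor. -/
noncomputable def ss (a : Fin n → Fin n → ℝ) (i k j l : Fin n) : ℝ :=
  bb a i j + bb a i l + bb a k j + bb a k l

theorem ss_nonneg (a : Fin n → Fin n → ℝ) (i k j l : Fin n) : 0 ≤ ss a i k j l := by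
  unfold ss
  have := bb_nonneg a i j
  have := bb_nonneg a i l
  have := bb_nonneg a k j
  have := bb_nonneg a k l
  linarith

theorem bb4_sum (a : Fin n → Fin n → ℝ) (hn : 0 < n) (D : ℝ)
    (h4 : ∑ i, ∑ j, a i j ^ 4 = n * D ^ 2) : ∑ i, ∑ j, bb a i j ^ 4 ≤ 16 * (n * D ^ 2) := by
  rw [← h4]
  refine le_trans (le_of_eq ?_) (b2_sq_sum a hn)
  refine Finset.sum_congr rfl fun i _ => Finset.sum_congr rfl fun j _ => ?_
  rw [← bb_sq]; ring

theorem bb3_sum (a : Fin n → Fin n → ℝ) (hn : 0 < n) (D : ℝ) (hD : 0 ≤ D)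
    (h2 : ∑ i, ∑ j, a i j ^ 2 = n - 1)
    (h4 : ∑ i, ∑ j, a i j ^ 4 = n * D ^ 2) : ∑ i, ∑ j, bb a i j ^ 3 ≤ 8 * (n * D) := by
  have hn' : (0 : ℝ) < n := by exact_mod_cast hn
  have h := Finset.sum_mul_sq_le_sq_mul_sq (univ : Finset (Fin n × Fin n))
    (fun p => bb a p.1 p.2) (fun p => bb a p.1 p.2 ^ 2)
  simp only [Fintype.sum_prod_type] at h
  have e1 : ∑ i, ∑ j, bb a i j ^ 2 ≤ 4 * n := by
    simp only [bb_sq]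
    rw [b2_tot_sum a hn, h2]; linarith
  have e2 := bb4_sum a hn D h4
  have e3 : ∀ i j, bb a i j * bb a i j ^ 2 = bb a i j ^ 3 := fun i j => by ring
  have e4 : ∀ i j, (bb a i j ^ 2) ^ 2 = bb a i j ^ 4 := fun i j => by ring
  simp only [e3, e4] at h
  refine le_trans (le_abs_self _) (abs_le_of_sq_le_sq ?_ (by positivity))
  refine h.trans ((mul_le_mul e1 e2 ?_ (by positivity)).trans (le_of_eq (by ring)))
  exact Finset.sum_nonneg fun i _ => Finset.sum_nonneg fun j _ => by positivity

theorem ss4_sum (a : Fin n → Fin n → ℝ) (hn : 0 < n) (D : ℝ)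
    (h4 : ∑ i, ∑ j, a i j ^ 4 = n * D ^ 2) :
    ∑ i, ∑ k, ∑ j, ∑ l, ss a i k j l ^ 4 ≤ 4096 * ((n : ℝ) ^ 3 * D ^ 2) := by
  have hn' : (0 : ℝ) < n := by exact_mod_cast hn
  have key : ∀ w x y z : ℝ, (w + x + y + z) ^ 4 ≤ 64 * (w ^ 4 + x ^ 4 + y ^ 4 + z ^ 4) := by
    intro w x y z
    have h1 : (w + x + y + z) ^ 2 ≤ 4 * (w ^ 2 + x ^ 2 + y ^ 2 + z ^ 2) := by
      nlinarith [sq_nonneg (w - x), sq_nonneg (w - y), sq_nonneg (w - z), sq_nonneg (x - y),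
        sq_nonneg (x - z), sq_nonneg (y - z)]
    have h2 : (w ^ 2 + x ^ 2 + y ^ 2 + z ^ 2) ^ 2 ≤ 4 * (w ^ 4 + x ^ 4 + y ^ 4 + z ^ 4) := by
      nlinarith [sq_nonneg (w ^ 2 - x ^ 2), sq_nonneg (w ^ 2 - y ^ 2), sq_nonneg (w ^ 2 - z ^ 2),
        sq_nonneg (x ^ 2 - y ^ 2), sq_nonneg (x ^ 2 - z ^ 2), sq_nonneg (y ^ 2 - z ^ 2)]
    have h3 := pow_le_pow_left₀ (sq_nonneg (w + x + y + z)) h1 2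
    calc (w + x + y + z) ^ 4 = ((w + x + y + z) ^ 2) ^ 2 := by ring
      _ ≤ _ := h3
      _ = 16 * (w ^ 2 + x ^ 2 + y ^ 2 + z ^ 2) ^ 2 := by ring
      _ ≤ _ := by linarith
  calc _ ≤ ∑ i, ∑ k, ∑ j, ∑ l, 64 * (bb a i j ^ 4 + bb a i l ^ 4 + bb a k j ^ 4 + bb a k l ^ 4) :=
        Finset.sum_le_sum fun i _ => Finset.sum_le_sum fun k _ => Finset.sum_le_sum fun j _ =>
          Finset.sum_le_sum fun l _ => key _ _ _ _
    _ = 64 * (4 * (n : ℝ) ^ 2 * ∑ i, ∑ j, bb a i j ^ 4) := by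
        simp only [← Finset.mul_sum]
        rw [sum4_w (fun i j => bb a i j ^ 4)]
    _ ≤ 64 * (4 * (n : ℝ) ^ 2 * (16 * (n * D ^ 2))) := by
        have := bb4_sum a hn D h4
        gcongr
    _ = _ := by ring

theorem ss3_sum (a : Fin n → Fin n → ℝ) (hn : 0 < n) (D : ℝ) (hD : 0 ≤ D)
    (h2 : ∑ i, ∑ j, a i j ^ 2 = n - 1)
    (h4 : ∑ i, ∑ j, a i j ^ 4 = n * D ^ 2) :
    ∑ i, ∑ k, ∑ j, ∑ l, ss a i k j l ^ 3 ≤ 512 * ((n : ℝ) ^ 3 * D) := by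
  have hn' : (0 : ℝ) < n := by exact_mod_cast hn
  have key2 : ∀ w x : ℝ, 0 ≤ w → 0 ≤ x → (w + x) ^ 3 ≤ 4 * (w ^ 3 + x ^ 3) := by
    intro w x hw hx
    nlinarith [mul_nonneg (add_nonneg hw hx) (sq_nonneg (w - x))]
  have key : ∀ w x y z : ℝ, 0 ≤ w → 0 ≤ x → 0 ≤ y → 0 ≤ z →
      (w + x + y + z) ^ 3 ≤ 16 * (w ^ 3 + x ^ 3 + y ^ 3 + z ^ 3) := by
    intro w x y z hw hx hy hz
    have h1 := key2 (w + x) (y + z) (by linarith) (by linarith)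
    have h2 := key2 w x hw hx
    have h3 := key2 y z hy hz
    have : w + x + y + z = (w + x) + (y + z) := by ring
    rw [this]
    linarith
  calc _ ≤ ∑ i, ∑ k, ∑ j, ∑ l, 16 * (bb a i j ^ 3 + bb a i l ^ 3 + bb a k j ^ 3 + bb a k l ^ 3) :=
        Finset.sum_le_sum fun i _ => Finset.sum_le_sum fun k _ => Finset.sum_le_sum fun j _ =>
          Finset.sum_le_sum fun l _ => key _ _ _ _ (bb_nonneg _ _ _) (bb_nonneg _ _ _)
            (bb_nonneg _ _ _) (bb_nonneg _ _ _)
    _ = 16 * (4 * (n : ℝ) ^ 2 * ∑ i, ∑ j, bb a i j ^ 3) := by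
        simp only [← Finset.mul_sum]
        rw [sum4_w (fun i j => bb a i j ^ 3)]
    _ ≤ 16 * (4 * (n : ℝ) ^ 2 * (8 * (n * D))) := by
        have := bb3_sum a hn D hD h2 h4
        gcongr
    _ = _ := by ring

theorem dsw_le (a : Fin n → Fin n → ℝ) (i k j l : Fin n) : |dsw a i k j l| ≤ ss a i k j l := by
  unfold dsw ss
  have h1 := abs_le.1 (abs_le_bb a i j)
  have h2 := abs_le.1 (abs_le_bb a i l)
  have h3 := abs_le.1 (abs_le_bb a k j)
  have h4 := abs_le.1 (abs_le_bb a k l)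
  rw [abs_le]; constructor <;> linarith

theorem xy_le (a : Fin n → Fin n → ℝ) (i k j l : Fin n) :
    |a i j + a k l| + |a i l + a k j| ≤ ss a i k j l := by
  unfold ss
  have h1 := abs_le_bb a i j
  have h2 := abs_le_bb a i l
  have h3 := abs_le_bb a k j
  have h4 := abs_le_bb a k l
  have := abs_add_le (a i j) (a k l)
  have := abs_add_le (a i l) (a k j)
  linarith

theorem dsw_zero (a : Fin n → Fin n → ℝ) (i k j l : Fin n) (h : i = k ∨ j = l) :
    dsw a i k j l = 0 := by
  unfold dsw
  rcases h with h | h <;> subst h <;> ring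

theorem er_card (i k : Fin n) (hik : i ≠ k) : ((univ.erase i).erase k).card = n - 2 := by
  rw [Finset.card_erase_of_mem (by simp [hik.symm]), Finset.card_erase_of_mem (by simp)]
  simp; omega

theorem two_step1 (a : Fin n → Fin n → ℝ) (hn : 16 ≤ n) (f : ℝ → ℝ) (L : ℝ) (hL0 : 0 ≤ L)
    (hL : LipH a f L) (i k j l : Fin n) (hik : i ≠ k) (hjl : j ≠ l) :
    |gE a ((univ.erase i).erase k) ((univ.erase j).erase l) f 0 - gE a univ univ f 0| ≤
      9 * L * ss a i k j l := by
  have h1 := step1 a hn f L hL0 hL univ univ rfl (by simp) i j (by simp) (by simp) 0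
  have h2 := step1 a hn f L hL0 hL (univ.erase i) (univ.erase j)
    (by rw [Finset.card_erase_of_mem (by simp), Finset.card_erase_of_mem (by simp)])
    (by rw [Finset.card_erase_of_mem (by simp)]; simp; omega) k l (by simp [hik.symm])
    (by simp [hjl.symm]) 0
  rw [abs_sub_comm]
  calc _ ≤ _ := abs_sub_le _ (gE a (univ.erase i) (univ.erase j) f 0) _
    _ ≤ 9 * L * bb a i j + 9 * L * bb a k l := add_le_add h1 h2
    _ ≤ _ := by
      unfold ss
      have e1 := mul_nonneg hL0 (bb_nonneg a i l)
      have e2 := mul_nonneg hL0 (bb_nonneg a k j)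
      nlinarith

theorem point1 (a : Fin n → Fin n → ℝ) (hn : 16 ≤ n) (f0 f1 : ℝ → ℝ)
    (hd : ∀ t, HasDerivAt f0 (f1 t) t) (L : ℝ) (hL0 : 0 ≤ L)
    (hL : LipH a f1 L) (i k j l : Fin n) :
    |dsw a i k j l * (gE a ((univ.erase i).erase k) ((univ.erase j).erase l) f0 (a i j + a k l) -
      gE a ((univ.erase i).erase k) ((univ.erase j).erase l) f0 (a i l + a k j)) -
      dsw a i k j l ^ 2 * gE a univ univ f1 0| ≤ 10 * L * ss a i k j l ^ 3 := by
  have hs := ss_nonneg a i k j l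
  by_cases h : i = k ∨ j = l
  · rw [dsw_zero a i k j l h]; simp; positivity
  push Not at h
  have h1 := two_step1 a hn f1 L hL0 hL i k j l h.1 h.2
  have h2 := taylor1 _ _ L (gE_hasDeriv a ((univ.erase i).erase k) ((univ.erase j).erase l)
    f0 f1 hd) (hL _ _ (by rw [er_card i k h.1, er_card j l h.2])
      (by rw [er_card i k h.1]; omega)) (a i j + a k l) (a i l + a k j)
  have e : a i j + a k l - (a i l + a k j) = dsw a i k j l := by unfold dsw; ring
  rw [e] at h2
  have hd1 := dsw_le a i k j l
  have hx := xy_le a i k j l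
  set d := dsw a i k j l
  set s := ss a i k j l
  set g1 := gE a ((univ.erase i).erase k) ((univ.erase j).erase l) f1 0
  set u := gE a ((univ.erase i).erase k) ((univ.erase j).erase l) f0 (a i j + a k l)
  set v := gE a ((univ.erase i).erase k) ((univ.erase j).erase l) f0 (a i l + a k j)
  calc |d * (u - v) - d ^ 2 * gE a univ univ f1 0| =
        |d * (u - v - d * g1) + d ^ 2 * (g1 - gE a univ univ f1 0)| := by congr 1; ring
    _ ≤ |d| * |u - v - d * g1| + |d| ^ 2 * |g1 - gE a univ univ f1 0| := by
        refine (abs_add_le _ _).trans (le_of_eq ?_)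
        rw [abs_mul, abs_mul, abs_pow]
    _ ≤ s * (L * s * s) + s ^ 2 * (9 * L * s) := by
        have : L * |d| * (|a i j + a k l| + |a i l + a k j|) ≤ L * s * s := by gcongr
        gcongr
        exact h2.trans this
    _ = _ := by ring

theorem abs_sum4_le (f g : Fin n → Fin n → Fin n → Fin n → ℝ)
    (h : ∀ i k j l, |f i k j l| ≤ g i k j l) :
    |∑ i, ∑ k, ∑ j, ∑ l, f i k j l| ≤ ∑ i, ∑ k, ∑ j, ∑ l, g i k j l :=
  (Finset.abs_sum_le_sum_abs _ _).trans (Finset.sum_le_sum fun i _ =>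
    (Finset.abs_sum_le_sum_abs _ _).trans (Finset.sum_le_sum fun k _ =>
      (Finset.abs_sum_le_sum_abs _ _).trans (Finset.sum_le_sum fun j _ =>
        (Finset.abs_sum_le_sum_abs _ _).trans (Finset.sum_le_sum fun l _ => h i k j l))))

theorem rem1 (a : Fin n → Fin n → ℝ) (hn : 16 ≤ n) (hrow : ∀ i, ∑ j, a i j = 0)
    (hcol : ∀ j, ∑ i, a i j = 0) (D : ℝ) (hD : 0 ≤ D)
    (h2 : ∑ i, ∑ j, a i j ^ 2 = n - 1) (h4 : ∑ i, ∑ j, a i j ^ 4 = n * D ^ 2)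
    (f0 f1 : ℝ → ℝ) (hd : ∀ t, HasDerivAt f0 (f1 t) t) (L : ℝ) (hL0 : 0 ≤ L)
    (hL : LipH a f1 L) :
    |permExp (fun π => rankT a π * f0 (rankT a π)) - permExp (fun π => f1 (rankT a π))| ≤
      2560 * L * D := by
  have hn' : (16 : ℝ) ≤ n := by exact_mod_cast hn
  have hst := stein_sum a (by omega) hrow hcol f0
  have hq : permExp (fun π => f1 (rankT a π)) = gE a univ univ f1 0 := by
    rw [gE_univ]; simp
  rw [hq]
  have hsq := dsw_sq_sum a hrow hcol
  rw [h2] at hsq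
  have hb := abs_sum4_le _ _ (point1 a hn f0 f1 hd L hL0 hL)
  simp only [Finset.sum_sub_distrib (s := (univ : Finset (Fin n))) , ← Finset.mul_sum,
    ← Finset.sum_mul] at hb
  rw [← hst, hsq] at hb
  have hss := ss3_sum a (by omega) D hD h2 h4
  set E := permExp (fun π => rankT a π * f0 (rankT a π))
  set q := gE a univ univ f1 0
  have hc : 4 * (n : ℝ) ^ 2 * (n - 1) * E - 4 * (n : ℝ) ^ 2 * (n - 1) * q =
      4 * (n : ℝ) ^ 2 * (n - 1) * (E - q) := by ring
  rw [hc, abs_mul, abs_of_nonneg (mul_nonneg (by positivity) (by linarith))] at hb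
  have h5 : 2 * (n : ℝ) ^ 3 ≤ 4 * (n : ℝ) ^ 2 * (n - 1) := by
    nlinarith [sq_nonneg (n : ℝ), mul_nonneg (sq_nonneg (n : ℝ)) (by linarith : (0 : ℝ) ≤ n - 2)]
  have h6 : 2 * (n : ℝ) ^ 3 * |E - q| ≤ 2 * (n : ℝ) ^ 3 * (2560 * L * D) := by
    calc _ ≤ 4 * (n : ℝ) ^ 2 * (n - 1) * |E - q| := by gcongr
      _ ≤ _ := hb
      _ ≤ 10 * L * (512 * ((n : ℝ) ^ 3 * D)) := by gcongr
      _ = _ := by ring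
  exact le_of_mul_le_mul_left h6 (by positivity)

end SteinRem

end PartE

section PartE2

section SteinRem2
variable {n : ℕ}

theorem cf_le1 (a : Fin n → Fin n → ℝ) (hn : 16 ≤ n) (hrow : ∀ i, ∑ j, a i j = 0)
    (hcol : ∀ j, ∑ i, a i j = 0) (i k j l : Fin n) :
    |cf a univ univ i j| ≤ 4 / n * ss a i k j l := by
  have hn' : (16 : ℝ) ≤ n := by exact_mod_cast hn
  have r : ∀ i j, ∑ l ∈ univ.erase j, a i l = - a i j := by
    intro i j
    have := Finset.add_sum_erase univ (fun l => a i l) (mem_univ j)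
    rw [hrow] at this; linarith
  have c : ∀ i j, ∑ k ∈ univ.erase i, a k j = - a i j := by
    intro i j
    have := Finset.add_sum_erase univ (fun k => a k j) (mem_univ i)
    rw [hcol] at this; linarith
  have hm1 : ((n - 1 : ℕ) : ℝ) = (n : ℝ) - 1 := by
    rw [Nat.cast_sub (by omega)]; simp
  have e : cf a univ univ i j = - a i j / (n - 1) := by
    unfold cf
    have hcd : ((univ.erase i).card : ℝ) = n - 1 := by
      rw [Finset.card_erase_of_mem (by simp)]; simp [hm1]
    have hcd2 : ((univ.erase j).card : ℝ) = n - 1 := by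
      rw [Finset.card_erase_of_mem (by simp)]; simp [hm1]
    simp only [Finset.sum_sub_distrib, Finset.sum_add_distrib, Finset.sum_const, nsmul_eq_mul,
      hcd, hcd2, ← Finset.mul_sum, r, c, Finset.sum_neg_distrib]
    rw [Finset.card_univ, Fintype.card_fin]
    have : (n : ℝ) - 1 ≠ 0 := by linarith
    field_simp
    ring
  rw [e, abs_div, abs_neg, abs_of_pos (by linarith : (0 : ℝ) < (n : ℝ) - 1)]
  have h1 : |a i j| ≤ ss a i k j l := by
    unfold ss
    have := abs_le_bb a i j
    have := bb_nonneg a i l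
    have := bb_nonneg a k j
    have := bb_nonneg a k l
    linarith
  have hs := ss_nonneg a i k j l
  rw [div_le_iff₀ (by linarith)]
  have h2 : (1 : ℝ) ≤ 4 / n * (n - 1) := by
    rw [div_mul_eq_mul_div, le_div_iff₀ (by linarith)]; linarith
  nlinarith

theorem cf_le2 (a : Fin n → Fin n → ℝ) (hn : 16 ≤ n) (hrow : ∀ i, ∑ j, a i j = 0)
    (hcol : ∀ j, ∑ i, a i j = 0) (i k j l : Fin n) (hik : i ≠ k) (hjl : j ≠ l) :
    |cf a (univ.erase i) (univ.erase j) k l| ≤ 5 / n * ss a i k j l := by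
  have hn' : (16 : ℝ) ≤ n := by exact_mod_cast hn
  have r : ∀ p, ∑ q ∈ (univ.erase j).erase l, a p q = - a p j - a p l := by
    intro p
    have h1 := Finset.add_sum_erase univ (fun l => a p l) (mem_univ j)
    have h2 := Finset.add_sum_erase (univ.erase j) (fun l => a p l) (by simp [hjl.symm] : l ∈ _)
    rw [hrow] at h1; linarith
  have c : ∀ q, ∑ p ∈ (univ.erase i).erase k, a p q = - a i q - a k q := by
    intro q
    have h1 := Finset.add_sum_erase univ (fun k => a k q) (mem_univ i)
    have h2 := Finset.add_sum_erase (univ.erase i) (fun k => a k q) (by simp [hik.symm] : k ∈ _)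
    rw [hcol] at h1; linarith
  have hm2 : ((n - 2 : ℕ) : ℝ) = (n : ℝ) - 2 := by
    rw [Nat.cast_sub (by omega)]; simp
  have hm1 : ((n - 1 : ℕ) : ℝ) = (n : ℝ) - 1 := by
    rw [Nat.cast_sub (by omega)]; simp
  have hcd0 : ((univ.erase i).card : ℝ) = n - 1 := by
    rw [Finset.card_erase_of_mem (by simp)]; simp [hm1]
  have e : cf a (univ.erase i) (univ.erase j) k l =
      (a k l + (- a k j - a k l) + (- a i l - a k l)) / (n - 1) -
      (a i j + a i l + a k j + a k l) / ((n - 1) * (n - 2)) := by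
    unfold cf
    have hcd : (((univ.erase i).erase k).card : ℝ) = n - 2 := by rw [er_card i k hik, hm2]
    have hcd2 : (((univ.erase j).erase l).card : ℝ) = n - 2 := by rw [er_card j l hjl, hm2]
    simp only [Finset.sum_sub_distrib, Finset.sum_add_distrib, Finset.sum_const, nsmul_eq_mul,
      hcd, hcd2, ← Finset.mul_sum, r, c, Finset.sum_neg_distrib, hcd0]
    have h1 : (n : ℝ) - 1 ≠ 0 := by linarith
    have h2 : (n : ℝ) - 2 ≠ 0 := by linarith
    have h3 : (n : ℝ) - 1 - 1 = n - 2 := by ring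
    rw [h3]
    field_simp
    ring
  have hs := ss_nonneg a i k j l
  have h1 := abs_le.1 (abs_le_bb a i j)
  have h2 := abs_le.1 (abs_le_bb a i l)
  have h3 := abs_le.1 (abs_le_bb a k j)
  have h4 := abs_le.1 (abs_le_bb a k l)
  have b1 : |a k l + (- a k j - a k l) + (- a i l - a k l)| ≤ ss a i k j l := by
    unfold ss; rw [abs_le]; constructor <;> linarith
  have b2 : |a i j + a i l + a k j + a k l| ≤ ss a i k j l := by
    unfold ss; rw [abs_le]; constructor <;> linarith
  have p1 : (0 : ℝ) < n - 1 := by linarith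
  have p2 : (0 : ℝ) < (n - 1) * (n - 2) := mul_pos p1 (by linarith)
  rw [e]
  refine (abs_sub _ _).trans ?_
  rw [abs_div, abs_div, abs_of_pos p1, abs_of_pos p2]
  have q1 : |a k l + (- a k j - a k l) + (- a i l - a k l)| / ((n : ℝ) - 1) ≤
      2 / n * ss a i k j l := by
    rw [div_le_iff₀ p1]
    have : (1 : ℝ) ≤ 2 / n * (n - 1) := by
      rw [div_mul_eq_mul_div, le_div_iff₀ (by linarith)]; linarith
    nlinarith
  have q2 : |a i j + a i l + a k j + a k l| / (((n : ℝ) - 1) * (n - 2)) ≤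
      2 / n * ss a i k j l := by
    rw [div_le_iff₀ p2]
    have : (1 : ℝ) ≤ 2 / n * ((n - 1) * (n - 2)) := by
      rw [div_mul_eq_mul_div, le_div_iff₀ (by linarith)]; nlinarith
    nlinarith
  have q3 : 0 ≤ 1 / (n : ℝ) * ss a i k j l := by positivity
  have q4 : 5 / (n : ℝ) * ss a i k j l = 2 / n * ss a i k j l + 2 / n * ss a i k j l +
    1 / n * ss a i k j l := by ring
  linarith

theorem two_step2 (a : Fin n → Fin n → ℝ) (hn : 16 ≤ n) (hrow : ∀ i, ∑ j, a i j = 0)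
    (hcol : ∀ j, ∑ i, a i j = 0) (f1 f2 : ℝ → ℝ)
    (hd : ∀ t, HasDerivAt f1 (f2 t) t) (L P : ℝ) (hL0 : 0 ≤ L)
    (hL : LipH a f2 L) (hP : |gE a univ univ f2 0| ≤ P)
    (i k j l : Fin n) (hik : i ≠ k) (hjl : j ≠ l) :
    |gE a ((univ.erase i).erase k) ((univ.erase j).erase l) f1 0 - gE a univ univ f1 0| ≤
      2010 * L * ss a i k j l ^ 2 + 9 * P / n * ss a i k j l := by
  have h0 := step1 a hn f2 L hL0 hL univ univ rfl (by simp) i j (by simp) (by simp) 0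
  rw [abs_sub_comm] at h0
  have h1 := step2 a hn f1 f2 hd L hL0 hL univ univ rfl (by simp) i j (by simp) (by simp)
    (gE a univ univ f2 0) 0 le_rfl (by simp)
  have h2 := step2 a hn f1 f2 hd L hL0 hL (univ.erase i) (univ.erase j)
    (by rw [Finset.card_erase_of_mem (by simp), Finset.card_erase_of_mem (by simp)])
    (by rw [Finset.card_erase_of_mem (by simp)]; simp; omega) k l (by simp [hik.symm])
    (by simp [hjl.symm]) (gE a univ univ f2 0) (bb a i j) (bb_nonneg _ _ _) h0
  have c1 := cf_le1 a hn hrow hcol i k j l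
  have c2 := cf_le2 a hn hrow hcol i k j l hik hjl
  have hs := ss_nonneg a i k j l
  have hP0 : 0 ≤ P := (abs_nonneg _).trans hP
  set p := gE a univ univ f2 0
  set g0 := gE a univ univ f1 0
  set g1 := gE a (univ.erase i) (univ.erase j) f1 0
  set g2 := gE a ((univ.erase i).erase k) ((univ.erase j).erase l) f1 0
  have m1 : |p * cf a univ univ i j| ≤ P * (4 / n * ss a i k j l) := by
    rw [abs_mul]; gcongr
  have m2 : |p * cf a (univ.erase i) (univ.erase j) k l| ≤ P * (5 / n * ss a i k j l) := by
    rw [abs_mul]; gcongr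
  have hsq : 2 * bb a i j ^ 2 + bb a k l ^ 2 ≤ 2 * ss a i k j l ^ 2 := by
    unfold ss
    have b1 := bb_nonneg a i j
    have b2 := bb_nonneg a i l
    have b3 := bb_nonneg a k j
    have b4 := bb_nonneg a k l
    nlinarith [mul_nonneg b1 b2, mul_nonneg b1 b3, mul_nonneg b1 b4, mul_nonneg b2 b3,
      mul_nonneg b2 b4, mul_nonneg b3 b4]
  have hsq' := mul_le_mul_of_nonneg_left hsq hL0
  rw [abs_sub_comm]
  calc |g0 - g2| = |(g0 - g1 - p * cf a univ univ i j) + (g1 - g2 -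
          p * cf a (univ.erase i) (univ.erase j) k l) + (p * cf a univ univ i j) +
          p * cf a (univ.erase i) (univ.erase j) k l| := by congr 1; ring
    _ ≤ |g0 - g1 - p * cf a univ univ i j| + |g1 - g2 -
          p * cf a (univ.erase i) (univ.erase j) k l| + |p * cf a univ univ i j| +
          |p * cf a (univ.erase i) (univ.erase j) k l| :=
        (abs_add_le _ _).trans (add_le_add ((abs_add_le _ _).trans
          (add_le_add (abs_add_le _ _) le_rfl)) le_rfl)
    _ ≤ 1005 * L * (bb a i j ^ 2 + 0 ^ 2) + 1005 * L * (bb a k l ^ 2 + bb a i j ^ 2) +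
        P * (4 / n * ss a i k j l) + P * (5 / n * ss a i k j l) := by gcongr
    _ = 1005 * (L * (2 * bb a i j ^ 2 + bb a k l ^ 2)) + 9 * P / n * ss a i k j l := by ring
    _ ≤ _ := by linarith

theorem point2 (a : Fin n → Fin n → ℝ) (hn : 16 ≤ n) (hrow : ∀ i, ∑ j, a i j = 0)
    (hcol : ∀ j, ∑ i, a i j = 0) (f0 f1 f2 : ℝ → ℝ)
    (hd0 : ∀ t, HasDerivAt f0 (f1 t) t) (hd : ∀ t, HasDerivAt f1 (f2 t) t) (L P : ℝ) (hL0 : 0 ≤ L)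
    (hL : LipH a f2 L) (hP : |gE a univ univ f2 0| ≤ P) (i k j l : Fin n) :
    |dsw a i k j l * (gE a ((univ.erase i).erase k) ((univ.erase j).erase l) f0 (a i j + a k l) -
      gE a ((univ.erase i).erase k) ((univ.erase j).erase l) f0 (a i l + a k j)) -
      dsw a i k j l ^ 2 * gE a univ univ f1 0 -
      dsw a i k j l ^ 2 * (a i j + a k l + (a i l + a k j)) * (gE a univ univ f2 0 / 2)| ≤
      2020 * L * ss a i k j l ^ 4 + 9 * P / n * ss a i k j l ^ 3 := by
  have hs := ss_nonneg a i k j l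
  have hP0 : 0 ≤ P := (abs_nonneg _).trans hP
  by_cases h : i = k ∨ j = l
  · rw [dsw_zero a i k j l h]; simp; positivity
  push Not at h
  have h1 := two_step1 a hn f2 L hL0 hL i k j l h.1 h.2
  have h1' := two_step2 a hn hrow hcol f1 f2 hd L P hL0 hL hP i k j l h.1 h.2
  have h2 := taylor2 _ _ _ L (gE_hasDeriv a ((univ.erase i).erase k) ((univ.erase j).erase l)
    f0 f1 hd0) (gE_hasDeriv a ((univ.erase i).erase k) ((univ.erase j).erase l)
    f1 f2 hd) (hL _ _ (by rw [er_card i k h.1, er_card j l h.2])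
      (by rw [er_card i k h.1]; omega)) (a i j + a k l) (a i l + a k j)
  have e : a i j + a k l - (a i l + a k j) = dsw a i k j l := by unfold dsw; ring
  have e2 : (a i j + a k l) ^ 2 - (a i l + a k j) ^ 2 =
    dsw a i k j l * (a i j + a k l + (a i l + a k j)) := by unfold dsw; ring
  rw [e, e2] at h2
  have hd1 := dsw_le a i k j l
  have hx := xy_le a i k j l
  have hx2 : |a i j + a k l + (a i l + a k j)| ≤ ss a i k j l := (abs_add_le _ _).trans hx
  set d := dsw a i k j l
  set s := ss a i k j l
  set w := a i j + a k l + (a i l + a k j)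
  set g1 := gE a ((univ.erase i).erase k) ((univ.erase j).erase l) f1 0
  set g2 := gE a ((univ.erase i).erase k) ((univ.erase j).erase l) f2 0
  set u := gE a ((univ.erase i).erase k) ((univ.erase j).erase l) f0 (a i j + a k l)
  set v := gE a ((univ.erase i).erase k) ((univ.erase j).erase l) f0 (a i l + a k j)
  set q := gE a univ univ f1 0
  set p := gE a univ univ f2 0
  have h3 : L * |d| * (|a i j + a k l| + |a i l + a k j|) ^ 2 ≤ L * s * s ^ 2 := by gcongr
  calc |d * (u - v) - d ^ 2 * q - d ^ 2 * w * (p / 2)| =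
        |d * (u - v - d * g1 - d * w / 2 * g2) + d ^ 2 * (g1 - q) +
          d ^ 2 * (w * ((g2 - p) * (1 / 2)))| := by congr 1; ring
    _ ≤ |d| * |u - v - d * g1 - d * w / 2 * g2| + |d| ^ 2 * |g1 - q| +
          |d| ^ 2 * (|w| * (|g2 - p| * (1 / 2))) := by
        refine (abs_add_le _ _).trans (add_le_add ((abs_add_le _ _).trans (le_of_eq ?_))
          (le_of_eq ?_))
        · rw [abs_mul, abs_mul, abs_pow]
        · rw [abs_mul, abs_mul, abs_mul, abs_pow, abs_of_pos (by norm_num : (0 : ℝ) < 1 / 2)]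
    _ ≤ s * (L * s * s ^ 2) + s ^ 2 * (2010 * L * s ^ 2 + 9 * P / n * s) +
          s ^ 2 * (s * (9 * L * s * (1 / 2))) := by
        have := h2.trans h3
        gcongr
    _ = (2015.5 * L * s ^ 4) + 9 * P / n * s ^ 3 := by ring
    _ ≤ _ := by
      gcongr; norm_num

theorem rem2 (a : Fin n → Fin n → ℝ) (hn : 16 ≤ n) (hrow : ∀ i, ∑ j, a i j = 0)
    (hcol : ∀ j, ∑ i, a i j = 0) (D lam : ℝ) (hD : 0 ≤ D)
    (h2 : ∑ i, ∑ j, a i j ^ 2 = n - 1) (h4 : ∑ i, ∑ j, a i j ^ 4 = n * D ^ 2)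
    (h3 : ∑ i, ∑ j, a i j ^ 3 = n * lam) (hlam : |lam| ≤ D)
    (f0 f1 f2 : ℝ → ℝ) (hd0 : ∀ t, HasDerivAt f0 (f1 t) t)
    (hd : ∀ t, HasDerivAt f1 (f2 t) t) (L P : ℝ) (hL0 : 0 ≤ L)
    (hL : LipH a f2 L) (hP : |permExp (fun π => f2 (rankT a π))| ≤ P) :
    |permExp (fun π => rankT a π * f0 (rankT a π)) - permExp (fun π => f1 (rankT a π)) -
      lam / 2 * permExp (fun π => f2 (rankT a π))| ≤
      4200000 * L * D ^ 2 + 2400 * (P * D / n) := by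
  have hn' : (16 : ℝ) ≤ n := by exact_mod_cast hn
  have hst := stein_sum a (by omega) hrow hcol f0
  have hq : permExp (fun π => f1 (rankT a π)) = gE a univ univ f1 0 := by
    rw [gE_univ]; simp
  have hp : permExp (fun π => f2 (rankT a π)) = gE a univ univ f2 0 := by
    rw [gE_univ]; simp
  rw [hp] at hP
  rw [hq, hp]
  have hP0 : 0 ≤ P := (abs_nonneg _).trans hP
  have hsq := dsw_sq_sum a hrow hcol
  rw [h2] at hsq
  have hcu := dsw_cu_sum a hrow hcol
  rw [h3] at hcu
  have hb2 : |(∑ i, ∑ k, ∑ j, ∑ l, dsw a i k j l *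
      (gE a ((univ.erase i).erase k) ((univ.erase j).erase l) f0 (a i j + a k l) -
      gE a ((univ.erase i).erase k) ((univ.erase j).erase l) f0 (a i l + a k j))) -
      (∑ i, ∑ k, ∑ j, ∑ l, dsw a i k j l ^ 2) * gE a univ univ f1 0 -
      (∑ i, ∑ k, ∑ j, ∑ l, dsw a i k j l ^ 2 * (a i j + a k l + (a i l + a k j))) *
        (gE a univ univ f2 0 / 2)| ≤ 2020 * L * (∑ i, ∑ k, ∑ j, ∑ l, ss a i k j l ^ 4) +
        9 * P / n * (∑ i, ∑ k, ∑ j, ∑ l, ss a i k j l ^ 3) := by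
    simp only [Finset.mul_sum, Finset.sum_mul]
    simp only [← Finset.sum_sub_distrib, ← Finset.sum_add_distrib]
    exact abs_sum4_le _ _ (point2 a hn hrow hcol f0 f1 f2 hd0 hd L P hL0 hL hP)
  rw [← hst, hsq, hcu] at hb2
  have hss3 := ss3_sum a (by omega) D hD h2 h4
  have hss4 := ss4_sum a (by omega) D h4
  set E := permExp (fun π => rankT a π * f0 (rankT a π))
  set q := gE a univ univ f1 0
  set p := gE a univ univ f2 0
  have hc : 4 * (n : ℝ) ^ 2 * (n - 1) * E - 4 * (n : ℝ) ^ 2 * (n - 1) * q -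
      4 * (n : ℝ) ^ 2 * (n * lam) * (p / 2) =
      4 * (n : ℝ) ^ 2 * (n - 1) * (E - q - lam / 2 * p) - 2 * (n : ℝ) ^ 2 * (lam * p) := by ring
  rw [hc] at hb2
  have h7 : |2 * (n : ℝ) ^ 2 * (lam * p)| ≤ 2 * (n : ℝ) ^ 2 * (D * P) := by
    rw [abs_mul, abs_of_nonneg (by positivity : (0 : ℝ) ≤ 2 * (n : ℝ) ^ 2), abs_mul]
    gcongr
  have h8 : |4 * (n : ℝ) ^ 2 * (n - 1) * (E - q - lam / 2 * p)| ≤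
      2020 * L * (4096 * ((n : ℝ) ^ 3 * D ^ 2)) + 9 * P / n * (512 * ((n : ℝ) ^ 3 * D)) +
      2 * (n : ℝ) ^ 2 * (D * P) := by
    calc _ = |(4 * (n : ℝ) ^ 2 * (n - 1) * (E - q - lam / 2 * p) - 2 * (n : ℝ) ^ 2 * (lam * p))
            + 2 * (n : ℝ) ^ 2 * (lam * p)| := by congr 1; ring
      _ ≤ _ := abs_add_le _ _
      _ ≤ _ := add_le_add (hb2.trans (by gcongr)) h7
  rw [abs_mul, abs_of_nonneg (mul_nonneg (by positivity) (by linarith))] at h8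
  have h5 : 2 * (n : ℝ) ^ 3 ≤ 4 * (n : ℝ) ^ 2 * (n - 1) := by
    nlinarith [sq_nonneg (n : ℝ), mul_nonneg (sq_nonneg (n : ℝ)) (by linarith : (0 : ℝ) ≤ n - 2)]
  have h6 : 2 * (n : ℝ) ^ 3 * |E - q - lam / 2 * p| ≤
      2 * (n : ℝ) ^ 3 * (4136960 * L * D ^ 2 + 2305 * (P * D / n)) := by
    calc _ ≤ 4 * (n : ℝ) ^ 2 * (n - 1) * |E - q - lam / 2 * p| := by gcongr
      _ ≤ _ := h8
      _ = _ := by field_simp; ring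
  refine (le_of_mul_le_mul_left h6 (by positivity)).trans ?_
  gcongr <;> norm_num

end SteinRem2

end PartE2

section PartF

section Kernels

/-- Positive part. -/
noncomputable def Jp (x : ℝ) : ℝ := max x 0

/-- Truncated powers. -/
noncomputable def J2 (x : ℝ) : ℝ := Jp x ^ 2 / 2

/-- Truncated powers. -/
noncomputable def J3 (x : ℝ) : ℝ := Jp x ^ 3 / 6

/-- Truncated powers. -/
noncomputable def J4 (x : ℝ) : ℝ := Jp x ^ 4 / 24

theorem Jp_pos {x : ℝ} (h : 0 ≤ x) : Jp x = x := max_eq_left h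
theorem Jp_neg {x : ℝ} (h : x ≤ 0) : Jp x = 0 := max_eq_right h
theorem Jp_nonneg (x : ℝ) : 0 ≤ Jp x := le_max_right _ _

theorem Jpow_hasDeriv (m : ℕ) (x : ℝ) :
    HasDerivAt (fun x => Jp x ^ (m + 2)) ((m + 2 : ℕ) * Jp x ^ (m + 1)) x := by
  rcases lt_trichotomy x 0 with h | h | h
  · rw [Jp_neg h.le]
    have : (fun x => Jp x ^ (m + 2)) =ᶠ[nhds x] fun _ => (0 : ℝ) := by
      filter_upwards [gt_mem_nhds h] with y hy
      rw [Jp_neg (le_of_lt hy)]; simp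
    refine ((hasDerivAt_const x (0 : ℝ)).congr_of_eventuallyEq this).congr_deriv (by simp)
  · subst h
    rw [Jp_neg le_rfl]
    have h0 : ((m + 2 : ℕ) : ℝ) * 0 ^ (m + 1) = 0 := by simp
    rw [h0, hasDerivAt_iff_isLittleO]
    simp only [Jp_neg le_rfl, sub_zero, smul_zero]
    have h1 : (fun x : ℝ => x ^ (m + 2)) =o[nhds 0] fun x : ℝ => x := by
      have := Asymptotics.isLittleO_pow_pow (𝕜 := ℝ) (show 1 < m + 2 by omega)
      simpa using this
    refine Asymptotics.IsBigO.trans_isLittleO ?_ h1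
    refine Asymptotics.IsBigO.of_bound 1 (Filter.Eventually.of_forall fun y => ?_)
    rw [one_mul]
    simp only [ne_eq, Nat.add_eq_zero_iff, OfNat.ofNat_ne_zero, and_false, not_false_eq_true,
      zero_pow, sub_zero, norm_pow, Real.norm_eq_abs]
    refine pow_le_pow_left₀ (abs_nonneg _) ?_ _
    rw [abs_of_nonneg (Jp_nonneg y)]
    exact max_le (le_abs_self _) (abs_nonneg _)
  · rw [Jp_pos h.le]
    have : (fun x => Jp x ^ (m + 2)) =ᶠ[nhds x] fun x => x ^ (m + 2) := by
      filter_upwards [lt_mem_nhds h] with y hy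
      rw [Jp_pos (le_of_lt hy)]
    exact (hasDerivAt_pow (m + 2) x).congr_of_eventuallyEq this

theorem J2_hasDeriv (x : ℝ) : HasDerivAt J2 (Jp x) x := by
  refine ((Jpow_hasDeriv 0 x).div_const 2).congr_deriv ?_
  simp
theorem J3_hasDeriv (x : ℝ) : HasDerivAt J3 (J2 x) x := by
  refine ((Jpow_hasDeriv 1 x).div_const 6).congr_deriv ?_
  unfold J2; push_cast; ring
theorem J4_hasDeriv (x : ℝ) : HasDerivAt J4 (J3 x) x := by
  refine ((Jpow_hasDeriv 2 x).div_const 24).congr_deriv ?_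
  unfold J3; push_cast; ring

/-- Normalized second central difference. -/
noncomputable def sdf (D : ℝ) (f : ℝ → ℝ) (x : ℝ) : ℝ := (f (x + D) - 2 * f x + f (x - D)) / D ^ 2

theorem sdf_hasDeriv (D : ℝ) (f f' : ℝ → ℝ) (hf : ∀ x, HasDerivAt f (f' x) x) (x : ℝ) :
    HasDerivAt (sdf D f) (sdf D f' x) x := by
  have h1 := (hf (x + D)).comp_add_const x D
  have h2 := (hf (x - D)).comp_sub_const x D
  exact ((h1.sub ((hf x).const_mul 2)).add h2).div_const (D ^ 2)

theorem sdf_Jp_nonneg (D : ℝ) (x : ℝ) : 0 ≤ sdf D Jp x := by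
  unfold sdf
  apply div_nonneg _ (sq_nonneg D)
  unfold Jp
  rcases max_cases (x + D) 0 with h1 | h1 <;> rcases max_cases x 0 with h2 | h2 <;>
    rcases max_cases (x - D) 0 with h3 | h3 <;> linarith

theorem sdf_Jp_le (D : ℝ) (hD : 0 < D) (x : ℝ) : sdf D Jp x ≤ 1 / D := by
  unfold sdf
  rw [div_le_div_iff₀ (by positivity) hD]
  have : Jp (x + D) - 2 * Jp x + Jp (x - D) ≤ D := by
    unfold Jp
    rcases max_cases (x + D) 0 with h1 | h1 <;> rcases max_cases x 0 with h2 | h2 <;>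
      rcases max_cases (x - D) 0 with h3 | h3 <;> linarith
  nlinarith

theorem Jpow_mid (D : ℝ) (hD : 0 < D) (x : ℝ) (h1 : -D < x) (h2 : x < D) :
    Jp (x - D) = 0 ∧ 0 ≤ Jp x ∧ Jp x ≤ D ∧ 0 ≤ Jp (x + D) ∧ Jp (x + D) ≤ 2 * D := by
  refine ⟨Jp_neg (by linarith), Jp_nonneg _, max_le h2.le hD.le, Jp_nonneg _,
    max_le (by linarith) (by linarith)⟩

theorem kern1 (D : ℝ) (hD : 0 < D) (x : ℝ) :
    |x * sdf D J2 x - sdf D J3 x| ≤ 5 * D := by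
  rcases le_or_gt x (-D) with h | h
  · unfold sdf J2 J3
    rw [Jp_neg (by linarith : x + D ≤ 0), Jp_neg (by linarith : x ≤ 0),
      Jp_neg (by linarith : x - D ≤ 0)]
    simp; positivity
  rcases le_or_gt D x with h' | h'
  · unfold sdf J2 J3
    rw [Jp_pos (by linarith : 0 ≤ x + D), Jp_pos (by linarith : 0 ≤ x),
      Jp_pos (by linarith : 0 ≤ x - D)]
    have : x * (((x + D) ^ 2 / 2 - 2 * (x ^ 2 / 2) + (x - D) ^ 2 / 2) / D ^ 2) -
      ((x + D) ^ 3 / 6 - 2 * (x ^ 3 / 6) + (x - D) ^ 3 / 6) / D ^ 2 = 0 := by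
      field_simp; ring
    rw [this]; simp; positivity
  obtain ⟨e0, e1, e2, e3, e4⟩ := Jpow_mid D hD x h h'
  have hx : |x| ≤ D := abs_le.2 ⟨h.le, h'.le⟩
  have hh : |sdf D J2 x| ≤ 2 := by
    unfold sdf J2
    rw [e0, abs_div, abs_of_pos (by positivity : 0 < D ^ 2), div_le_iff₀ (by positivity)]
    have p1 := pow_le_pow_left₀ e1 e2 2
    have p2 := pow_le_pow_left₀ e3 e4 2
    rw [abs_le]; constructor <;> nlinarith [sq_nonneg (Jp x), sq_nonneg (Jp (x + D))]
  have hs : |sdf D J3 x| ≤ 2 * D := by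
    unfold sdf J3
    rw [e0, abs_div, abs_of_pos (by positivity : 0 < D ^ 2), div_le_iff₀ (by positivity)]
    have p1 := pow_le_pow_left₀ e1 e2 3
    have p2 := pow_le_pow_left₀ e3 e4 3
    have p3 := pow_nonneg e1 3
    have p4 := pow_nonneg e3 3
    have p5 := pow_pos hD 3
    rw [abs_le]; constructor <;> nlinarith
  calc _ ≤ |x * sdf D J2 x| + |sdf D J3 x| := abs_sub _ _
    _ ≤ D * 2 + 2 * D := by rw [abs_mul]; gcongr
    _ ≤ _ := by linarith

theorem kern2 (D : ℝ) (hD : 0 < D) (x : ℝ) :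
    |x * sdf D J3 x - 2 * sdf D J4 x| ≤ 4 * D ^ 2 := by
  rcases le_or_gt x (-D) with h | h
  · unfold sdf J3 J4
    rw [Jp_neg (by linarith : x + D ≤ 0), Jp_neg (by linarith : x ≤ 0),
      Jp_neg (by linarith : x - D ≤ 0)]
    simp; positivity
  rcases le_or_gt D x with h' | h'
  · unfold sdf J3 J4
    rw [Jp_pos (by linarith : 0 ≤ x + D), Jp_pos (by linarith : 0 ≤ x),
      Jp_pos (by linarith : 0 ≤ x - D)]
    have : x * (((x + D) ^ 3 / 6 - 2 * (x ^ 3 / 6) + (x - D) ^ 3 / 6) / D ^ 2) -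
      2 * (((x + D) ^ 4 / 24 - 2 * (x ^ 4 / 24) + (x - D) ^ 4 / 24) / D ^ 2) = - (D ^ 2 / 6) := by
      field_simp; ring
    rw [this, abs_neg, abs_of_pos (by positivity)]
    nlinarith [sq_nonneg D]
  obtain ⟨e0, e1, e2, e3, e4⟩ := Jpow_mid D hD x h h'
  have hx : |x| ≤ D := abs_le.2 ⟨h.le, h'.le⟩
  have hs : |sdf D J3 x| ≤ 2 * D := by
    unfold sdf J3
    rw [e0, abs_div, abs_of_pos (by positivity : 0 < D ^ 2), div_le_iff₀ (by positivity)]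
    have p1 := pow_le_pow_left₀ e1 e2 3
    have p2 := pow_le_pow_left₀ e3 e4 3
    have p3 := pow_nonneg e1 3
    have p4 := pow_nonneg e3 3
    have p5 := pow_pos hD 3
    rw [abs_le]; constructor <;> nlinarith
  have hq : |sdf D J4 x| ≤ D ^ 2 := by
    unfold sdf J4
    rw [e0, abs_div, abs_of_pos (by positivity : 0 < D ^ 2), div_le_iff₀ (by positivity)]
    have p1 := pow_le_pow_left₀ e1 e2 4
    have p2 := pow_le_pow_left₀ e3 e4 4
    have p3 := pow_nonneg e1 4
    have p4 := pow_nonneg e3 4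
    have p5 := pow_pos hD 4
    rw [abs_le]; constructor <;> nlinarith
  calc _ ≤ |x * sdf D J3 x| + |2 * sdf D J4 x| := abs_sub _ _
    _ ≤ D * (2 * D) + 2 * D ^ 2 := by
        rw [abs_mul, abs_mul, abs_of_pos (by norm_num : (0 : ℝ) < 2)]; gcongr
    _ ≤ _ := by nlinarith

theorem Jp_right (x : ℝ) : HasDerivWithinAt Jp (if 0 ≤ x then 1 else 0) (Set.Ici x) x := by
  split_ifs with h
  · refine (hasDerivWithinAt_id x _).congr (fun y hy => ?_) (Jp_pos h)
    exact Jp_pos (le_trans h hy)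
  · push Not at h
    have : Jp =ᶠ[nhds x] fun _ => (0 : ℝ) := by
      filter_upwards [gt_mem_nhds h] with y hy
      exact Jp_neg (le_of_lt hy)
    exact ((hasDerivAt_const x (0 : ℝ)).congr_of_eventuallyEq this).hasDerivWithinAt

theorem Jp_left (x : ℝ) : HasDerivWithinAt Jp (if 0 < x then 1 else 0) (Set.Iic x) x := by
  split_ifs with h
  · have : Jp =ᶠ[nhds x] fun x => x := by
      filter_upwards [lt_mem_nhds h] with y hy
      exact Jp_pos (le_of_lt hy)
    exact ((hasDerivAt_id x).congr_of_eventuallyEq this).hasDerivWithinAt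
  · push Not at h
    refine (hasDerivWithinAt_const x _ (0 : ℝ)).congr (fun y hy => ?_) (Jp_neg h)
    exact Jp_neg (le_trans hy h)

theorem Jp_cont : Continuous Jp := by unfold Jp; fun_prop

variable {m : ℕ}

theorem permExp_hasDerivWithin (φ : Equiv.Perm (Fin m) → ℝ → ℝ) (φ' : Equiv.Perm (Fin m) → ℝ)
    (s : Set ℝ) (x : ℝ) (h : ∀ π, HasDerivWithinAt (φ π) (φ' π) s x) :
    HasDerivWithinAt (fun x => permExp (fun π => φ π x)) (permExp φ') s x := by
  unfold permExp
  exact (HasDerivWithinAt.fun_sum fun π _ => h π).div_const _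

theorem permExp_hasDeriv (φ : Equiv.Perm (Fin m) → ℝ → ℝ) (φ' : Equiv.Perm (Fin m) → ℝ)
    (x : ℝ) (h : ∀ π, HasDerivAt (φ π) (φ' π) x) :
    HasDerivAt (fun x => permExp (fun π => φ π x)) (permExp φ') x := by
  unfold permExp
  exact (HasDerivAt.fun_sum fun π _ => h π).div_const _

theorem permExp_add (f g : Equiv.Perm (Fin m) → ℝ) :
    permExp (fun π => f π + g π) = permExp f + permExp g := by
  unfold permExp; rw [Finset.sum_add_distrib, add_div]
theorem permExp_sub (f g : Equiv.Perm (Fin m) → ℝ) :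
    permExp (fun π => f π - g π) = permExp f - permExp g := by
  unfold permExp; rw [Finset.sum_sub_distrib, sub_div]
theorem permExp_mul (c : ℝ) (g : Equiv.Perm (Fin m) → ℝ) :
    permExp (fun π => c * g π) = c * permExp g := by
  unfold permExp; rw [← Finset.mul_sum, mul_div_assoc]
theorem permExp_div (g : Equiv.Perm (Fin m) → ℝ) (c : ℝ) :
    permExp (fun π => g π / c) = permExp g / c := by
  unfold permExp; rw [← Finset.sum_div, div_right_comm]
theorem permExp_const (c : ℝ) : permExp (fun _ : Equiv.Perm (Fin m) => c) = c := by
  unfold permExp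
  rw [Finset.sum_const, Finset.card_univ, Fintype.card_perm, Fintype.card_fin, nsmul_eq_mul]
  have : (Nat.factorial m : ℝ) ≠ 0 := by exact_mod_cast Nat.factorial_ne_zero m
  field_simp
theorem permExp_mono (f g : Equiv.Perm (Fin m) → ℝ) (h : ∀ π, f π ≤ g π) :
    permExp f ≤ permExp g := by
  unfold permExp
  exact div_le_div_of_nonneg_right (Finset.sum_le_sum fun π _ => h π) (by positivity)
theorem permExp_abs_le (f : Equiv.Perm (Fin m) → ℝ) (c : ℝ) (h : ∀ π, |f π| ≤ c) :
    |permExp f| ≤ c := by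
  rw [abs_le]
  constructor
  · have := permExp_mono (fun _ => -c) f (fun π => (abs_le.1 (h π)).1)
    rwa [permExp_const] at this
  · have := permExp_mono f (fun _ => c) (fun π => (abs_le.1 (h π)).2)
    rwa [permExp_const] at this

theorem permExp_cont (φ : Equiv.Perm (Fin m) → ℝ → ℝ) (h : ∀ π, Continuous (φ π)) :
    Continuous (fun x => permExp (fun π => φ π x)) := by
  unfold permExp
  exact (continuous_finsetSum _ fun π _ => h π).div_const _

theorem mean_right (f f' : ℝ → ℝ) (M : ℝ) (u v : ℝ) (huv : u ≤ v) (hc : Continuous f)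
    (hd : ∀ x ∈ Set.Ico u v, HasDerivWithinAt f (f' x) (Set.Ici x) x)
    (hb : ∀ x ∈ Set.Ico u v, |f' x| ≤ M) : |f v - f u| ≤ M * (v - u) := by
  exact norm_image_sub_le_of_norm_deriv_right_le_segment hc.continuousOn hd
    (fun x hx => hb x hx) v ⟨huv, le_rfl⟩

theorem k_lip (B : Matrix (Fin m) (Fin m) ℝ) (D M : ℝ) (hD : 0 < D)
    (hM : ∀ z, |Fr B (z + D) - 2 * Fr B z + Fr B (z - D)| ≤ M * D ^ 2) (u v : ℝ) :
    |permExp (fun π => sdf D Jp (u - rankT B π)) - permExp (fun π => sdf D Jp (v - rankT B π))| ≤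
      M * |u - v| := by
  wlog huv : v ≤ u generalizing u v
  · rw [abs_sub_comm, abs_sub_comm u v]; exact this v u (by linarith)
  rw [abs_of_nonneg (by linarith : 0 ≤ u - v)]
  have hJ : ∀ c x : ℝ, HasDerivWithinAt (fun x => Jp (x + c)) (if 0 ≤ x + c then 1 else 0)
      (Set.Ici x) x := by
    intro c x
    have h1 := (Jp_right (x + c)).scomp x (h := fun x => x + c) (s := Set.Ici x)
      ((hasDerivWithinAt_id x _).add_const c)
      (fun y hy => by simpa using hy)
    simpa [Function.comp_def] using h1
  refine mean_right (fun x => permExp (fun π => sdf D Jp (x - rankT B π)))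
    (fun z => (Fr B (z + D) - 2 * Fr B z + Fr B (z - D)) / D ^ 2) M v u huv ?_ ?_ ?_
  · refine permExp_cont _ fun π => ?_
    unfold sdf
    have := Jp_cont
    fun_prop
  · intro x _
    have h := permExp_hasDerivWithin (fun π x => sdf D Jp (x - rankT B π)) (fun π =>
      ((if rankT B π ≤ x + D then 1 else 0) - 2 * (if rankT B π ≤ x then 1 else 0) +
        (if rankT B π ≤ x - D then (1 : ℝ) else 0)) / D ^ 2) (Set.Ici x) x (fun π => by
        have h1 := hJ (D - rankT B π) x
        have h2 := hJ (- rankT B π) x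
        have h3 := hJ (- D - rankT B π) x
        have h4 := (((h1.sub (h2.const_mul 2)).add h3).div_const (D ^ 2))
        have a1 : (fun y => sdf D Jp (y - rankT B π)) = fun x =>
            (Jp (x + (D - rankT B π)) - 2 * Jp (x + -rankT B π) +
              Jp (x + (-D - rankT B π))) / D ^ 2 := by
          ext y
          unfold sdf
          rw [show y - rankT B π + D = y + (D - rankT B π) by ring,
            show y - rankT B π - D = y + (-D - rankT B π) by ring, sub_eq_add_neg y]
        have a2 : (rankT B π ≤ x + D) = (0 ≤ x + (D - rankT B π)) := by
          rw [eq_iff_iff]; constructor <;> intro h <;> linarith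
        have a3 : (rankT B π ≤ x) = (0 ≤ x + -rankT B π) := by
          rw [eq_iff_iff]; constructor <;> intro h <;> linarith
        have a4 : (rankT B π ≤ x - D) = (0 ≤ x + (-D - rankT B π)) := by
          rw [eq_iff_iff]; constructor <;> intro h <;> linarith
        rw [a1]
        simp only [a2, a3, a4]
        exact h4)
    rw [permExp_div, permExp_add, permExp_sub, permExp_mul] at h
    exact h
  · intro x _
    rw [abs_div, abs_of_pos (by positivity : 0 < D ^ 2), div_le_iff₀ (by positivity)]
    exact hM x

theorem F_G (B : Matrix (Fin m) (Fin m) ℝ) (D C1 : ℝ) (hD : 0 < D)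
    (hM : ∀ z y, 0 ≤ y → y ≤ D → |Fr B (z + y) - 2 * Fr B z + Fr B (z - y)| ≤ C1 * D ^ 2) (z : ℝ) :
    |Fr B z - permExp (fun π => sdf D J2 (z - rankT B π))| ≤ C1 * D ^ 2 := by
  have hC : 0 ≤ C1 * D ^ 2 := (abs_nonneg _).trans (hM 0 0 le_rfl hD.le)
  set S0 : ℝ → ℝ := fun x => permExp (fun π => Jp (x - rankT B π)) with hS0
  set Q0 : ℝ → ℝ := fun x => permExp (fun π => J2 (x - rankT B π)) with hQ0
  have hQd : ∀ x, HasDerivAt Q0 (S0 x) x := fun x =>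
    permExp_hasDeriv _ _ x fun π => (J2_hasDeriv _).comp_sub_const x (rankT B π)
  have hSc : Continuous S0 := permExp_cont _ fun π => Jp_cont.comp (by fun_prop)
  have hSr : ∀ x, HasDerivWithinAt S0 (Fr B x) (Set.Ici x) x := by
    intro x
    refine permExp_hasDerivWithin _ _ _ x fun π => ?_
    have h1 := (Jp_right (x - rankT B π)).scomp x (h := fun x => x - rankT B π) (s := Set.Ici x)
      ((hasDerivWithinAt_id x _).sub_const (rankT B π))
      (fun y hy => by simpa using hy)
    simpa [Function.comp_def] using h1
  have hSl : ∀ x, HasDerivWithinAt S0 (permExp (fun π => if rankT B π < x then (1 : ℝ) else 0))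
      (Set.Iic x) x := by
    intro x
    refine permExp_hasDerivWithin _ _ _ x fun π => ?_
    have h1 := (Jp_left (x - rankT B π)).scomp x (h := fun x => x - rankT B π) (s := Set.Iic x)
      ((hasDerivWithinAt_id x _).sub_const (rankT B π))
      (fun y hy => by simpa using hy)
    simpa [Function.comp_def] using h1
  set M : ℝ → ℝ := fun v => S0 (z + v) - S0 (z - v) - 2 * v * Fr B z with hMdef
  have hMb : ∀ v, 0 ≤ v → v ≤ D → |M v| ≤ C1 * D ^ 2 * v := by
    intro v hv hvD
    have h := mean_right M (fun v => Fr B (z + v) +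
      permExp (fun π => if rankT B π < z - v then (1 : ℝ) else 0) - 2 * Fr B z) (C1 * D ^ 2) 0 v hv
      (by rw [hMdef]; fun_prop) ?_ ?_
    · have h0 : M 0 = 0 := by simp [hMdef]
      rw [h0, sub_zero, sub_zero] at h; exact h
    · intro x _
      have h1 := (hSr (z + x)).scomp x (h := fun x => z + x) (s := Set.Ici x)
        ((hasDerivWithinAt_id x _).const_add z) (fun y hy => by simpa using hy)
      have h2 := (hSl (z - x)).scomp x (h := fun x => z - x) (s := Set.Ici x)
        ((hasDerivWithinAt_id x _).const_sub z) (fun y hy => by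
          have : x ≤ y := hy
          simp only [Set.mem_Iic]; linarith)
      have h3 := ((hasDerivWithinAt_id x (Set.Ici x)).const_mul 2).mul_const (Fr B z)
      refine ((h1.sub h2).sub h3).congr_deriv ?_
      simp
    · intro x hx
      have hev : ∀ᶠ w in nhdsWithin x (Set.Ioi x), ∀ π : Equiv.Perm (Fin m),
          (rankT B π ≤ z + w ↔ rankT B π ≤ z + x) ∧ (rankT B π ≤ z - w ↔ rankT B π < z - x) := by
        rw [Filter.eventually_all]
        intro π
        have ha : ∀ᶠ w in nhdsWithin x (Set.Ioi x), (rankT B π ≤ z + w ↔ rankT B π ≤ z + x) := by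
          by_cases h : rankT B π ≤ z + x
          · filter_upwards [self_mem_nhdsWithin] with w hw
            have : x < w := hw
            simp only [h, iff_true]; linarith
          · have h' : x < rankT B π - z := by linarith
            filter_upwards [mem_nhdsWithin_of_mem_nhds (gt_mem_nhds h')] with w hw
            simp only [h, iff_false, not_le]; linarith
        have hb : ∀ᶠ w in nhdsWithin x (Set.Ioi x), (rankT B π ≤ z - w ↔ rankT B π < z - x) := by
          by_cases h : rankT B π < z - x
          · have h' : x < z - rankT B π := by linarith
            filter_upwards [mem_nhdsWithin_of_mem_nhds (gt_mem_nhds h')] with w hw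
            simp only [h, iff_true]; linarith
          · filter_upwards [self_mem_nhdsWithin] with w hw
            have : x < w := hw
            simp only [h, iff_false, not_le]; linarith
        exact ha.and hb
      have hev2 : ∀ᶠ w in nhdsWithin x (Set.Ioi x), w < D :=
        mem_nhdsWithin_of_mem_nhds (gt_mem_nhds (lt_of_lt_of_le hx.2 hvD))
      have hev3 : ∀ᶠ w in nhdsWithin x (Set.Ioi x), x < w := self_mem_nhdsWithin
      obtain ⟨w, hw1, hw2, hw3⟩ := (hev.and (hev2.and hev3)).exists
      have e1 : Fr B (z + w) = Fr B (z + x) := by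
        unfold Fr; congr 1; ext π; simp only [(hw1 π).1]
      have e2 : Fr B (z - w) = permExp (fun π => if rankT B π < z - x then (1 : ℝ) else 0) := by
        unfold Fr; congr 1; ext π; simp only [(hw1 π).2]
      have := hM z w (by linarith [hx.1]) hw2.le
      rw [e1, e2] at this
      refine le_trans (le_of_eq ?_) this
      congr 1; ring
  set N : ℝ → ℝ := fun v => Q0 (z + v) - 2 * Q0 z + Q0 (z - v) - v ^ 2 * Fr B z with hN
  have hNd : ∀ v, HasDerivAt N (M v) v := by
    intro v
    have h1 := (hQd (z + v)).comp_const_add z v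
    have h2 := (hQd (z - v)).comp_const_sub z v
    have h3 := ((hasDerivAt_id v).pow 2).mul_const (Fr B z)
    refine (((h1.sub_const (2 * Q0 z)).add h2).sub h3).congr_deriv ?_
    simp [hMdef]; ring
  have hNb := mean_right N M (C1 * D ^ 2 * D) 0 D hD.le
    (continuous_iff_continuousAt.2 fun v => (hNd v).continuousAt)
    (fun x _ => (hNd x).hasDerivWithinAt) (fun x hx => (hMb x hx.1 hx.2.le).trans
      (mul_le_mul_of_nonneg_left hx.2.le hC))
  have h0 : N 0 = 0 := by simp [hN]; ring
  rw [h0] at hNb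
  have e : permExp (fun π => sdf D J2 (z - rankT B π)) = (Q0 (z + D) - 2 * Q0 z + Q0 (z - D)) / D ^ 2 := by
    rw [hQ0]
    simp only
    rw [← permExp_mul, ← permExp_sub, ← permExp_add, ← permExp_div]
    congr 1; ext π
    unfold sdf
    rw [show z - rankT B π + D = z + D - rankT B π by ring,
      show z - rankT B π - D = z - D - rankT B π by ring]
  have e2 : Fr B z - permExp (fun π => sdf D J2 (z - rankT B π)) = - N D / D ^ 2 := by
    rw [e, hN]; field_simp; ring
  rw [e2, abs_div, abs_neg, abs_of_pos (by positivity : 0 < D ^ 2), div_le_iff₀ (by positivity)]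
  simp only [sub_zero] at hNb
  linarith

end Kernels

end PartF

section PartG

section Ode

theorem second_deriv_max (w w' w'' : ℝ → ℝ) (hw : ∀ x, HasDerivAt w (w' x) x)
    (hw' : ∀ x, HasDerivAt w' (w'' x) x) (x : ℝ) (hx : ∀ y, w y ≤ w x) :
    w' x = 0 ∧ w'' x ≤ 0 := by
  have hmax : IsLocalMax w x := Filter.Eventually.of_forall hx
  have h0 : w' x = 0 := hmax.hasDerivAt_eq_zero (hw x)
  refine ⟨h0, ?_⟩
  by_contra hpos
  push Not at hpos
  have hd : deriv w = w' := funext fun y => (hw y).deriv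
  have hd2 : deriv (deriv w) x = w'' x := by rw [hd]; exact (hw' x).deriv
  have hmin : IsLocalMin w x := isLocalMin_of_deriv_deriv_pos (by rw [hd2]; exact hpos)
    (by rw [hd, h0]) (hw x).continuousAt
  have hc : w =ᶠ[nhds x] fun _ => w x := by
    filter_upwards [hmin] with y hy
    exact le_antisymm (hx y) hy
  have h1 : w' =ᶠ[nhds x] fun _ => 0 := by
    have := hc.deriv
    rw [hd] at this
    simpa using this
  have h2 := h1.deriv_eq
  rw [(hw' x).deriv] at h2
  simp at h2
  linarith

/-- Barrier function. -/
noncomputable def bar (x : ℝ) : ℝ := Real.sqrt (1 + x ^ 2)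

theorem bar_pos (x : ℝ) : 0 < bar x := Real.sqrt_pos.2 (by positivity)
theorem bar_sq (x : ℝ) : bar x ^ 2 = 1 + x ^ 2 := Real.sq_sqrt (by positivity)

theorem bar_deriv (x : ℝ) : HasDerivAt bar (x / bar x) x := by
  have h := (((hasDerivAt_id x).pow 2).const_add 1).sqrt (by simp; positivity)
  refine h.congr_deriv ?_
  unfold bar
  simp
  field_simp

theorem bar_deriv2 (x : ℝ) : HasDerivAt (fun x => x / bar x)
    ((1 * bar x - x * (x / bar x)) / bar x ^ 2) x :=
  (hasDerivAt_id x).div (bar_deriv x) (bar_pos x).ne'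

theorem max_princ1 (u u' u'' : ℝ → ℝ) (hu : ∀ x, HasDerivAt u (u' x) x)
    (hu' : ∀ x, HasDerivAt u' (u'' x) x) (K e c : ℝ) (hc : 1 ≤ c) (he : 0 ≤ e)
    (hK : ∀ x, |u x| ≤ K) (h : ∀ x, -e ≤ u'' x + x * u' x - c * u x) (z : ℝ) : u z ≤ e := by
  have key : ∀ η : ℝ, 0 < η → u z ≤ e + η * bar z := by
    intro η hη
    have hK0 : 0 ≤ K := (abs_nonneg _).trans (hK 0)
    set w : ℝ → ℝ := fun x => u x - η * bar x with hw
    have hwd : ∀ x, HasDerivAt w (u' x - η * (x / bar x)) x := fun x =>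
      (hu x).sub ((bar_deriv x).const_mul η)
    have hwd2 : ∀ x, HasDerivAt (fun x => u' x - η * (x / bar x))
      (u'' x - η * ((1 * bar x - x * (x / bar x)) / bar x ^ 2)) x := fun x =>
      (hu' x).sub ((bar_deriv2 x).const_mul η)
    set R : ℝ := 2 * K / η + 1 with hR
    have hR0 : 0 ≤ R := by positivity
    have hηR : η * R = 2 * K + η := by rw [hR]; field_simp
    obtain ⟨x0, hx0, hmax⟩ := (isCompact_Icc (a := -R) (b := R)).exists_isMaxOn
      ⟨0, by constructor <;> linarith⟩
      (continuous_iff_continuousAt.2 fun x => (hwd x).continuousAt).continuousOn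
    have hglob : ∀ y, w y ≤ w x0 := by
      intro y
      by_cases hy : y ∈ Set.Icc (-R) R
      · exact hmax hy
      · have hy' : R < |y| := by
          by_contra hcon
          push Not at hcon
          exact hy (abs_le.1 hcon)
        have h0 : w 0 ≤ w x0 := hmax (by constructor <;> linarith)
        refine le_trans ?_ h0
        have hb0 : bar 0 = 1 := by unfold bar; simp
        have hby : |y| ≤ bar y := by
          unfold bar; exact Real.abs_le_sqrt (by linarith)
        have h1 := (abs_le.1 (hK y)).2
        have h2 := (abs_le.1 (hK 0)).1
        have h3 : η * R ≤ η * bar y := mul_le_mul_of_nonneg_left (hy'.le.trans hby) hη.le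
        simp only [hw, hb0]
        linarith
    obtain ⟨f1, f2⟩ := second_deriv_max w _ _ hwd hwd2 x0 hglob
    have hb := bar_pos x0
    have hbs := bar_sq x0
    have hx := h x0
    have hwz := hglob z
    simp only [hw] at hwz
    have g1 : u' x0 = η * (x0 / bar x0) := by linarith
    have g2 : (1 * bar x0 - x0 * (x0 / bar x0)) / bar x0 ^ 2 + x0 * (x0 / bar x0) ≤ bar x0 := by
      have e1 : (1 * bar x0 - x0 * (x0 / bar x0)) / bar x0 ^ 2 = 1 / bar x0 ^ 3 := by
        field_simp
        nlinarith
      have e2 : x0 * (x0 / bar x0) = bar x0 - 1 / bar x0 := by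
        field_simp
        nlinarith
      have hb1 : 1 ≤ bar x0 := by
        unfold bar; rw [Real.one_le_sqrt]; nlinarith [sq_nonneg x0]
      have e3 : 1 / bar x0 ^ 3 ≤ 1 / bar x0 := by
        apply one_div_le_one_div_of_le hb
        nlinarith [sq_nonneg (bar x0 - 1), sq_nonneg (bar x0)]
      rw [e1, e2]; linarith
    have g3 := mul_le_mul_of_nonneg_left g2 hη.le
    rw [g1] at hx
    have g4 : c * (u x0 - η * bar x0) ≤ e := by
      have : η * bar x0 ≤ c * (η * bar x0) := le_mul_of_one_le_left (by positivity) hc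
      nlinarith
    have g5 : u x0 - η * bar x0 ≤ e := by
      by_cases hs : u x0 - η * bar x0 ≤ 0
      · linarith
      · push Not at hs
        exact le_trans (le_mul_of_one_le_left hs.le hc) g4
    linarith
  refine le_of_forall_pos_le_add fun ε hε => ?_
  have := key (ε / bar z) (div_pos hε (bar_pos z))
  rwa [div_mul_cancel₀ _ (bar_pos z).ne'] at this

theorem max_princ (u u' u'' : ℝ → ℝ) (hu : ∀ x, HasDerivAt u (u' x) x)
    (hu' : ∀ x, HasDerivAt u' (u'' x) x) (K e c : ℝ) (hc : 1 ≤ c)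
    (hK : ∀ x, |u x| ≤ K) (h : ∀ x, |u'' x + x * u' x - c * u x| ≤ e) (z : ℝ) : |u z| ≤ e := by
  have he : 0 ≤ e := (abs_nonneg _).trans (h 0)
  rw [abs_le']
  refine ⟨max_princ1 u u' u'' hu hu' K e c hc he hK (fun x => (abs_le.1 (h x)).1) z, ?_⟩
  refine max_princ1 (fun x => - u x) (fun x => - u' x) (fun x => - u'' x) (fun x => (hu x).neg)
    (fun x => (hu' x).neg) K e c hc he (fun x => by rw [abs_neg]; exact hK x) (fun x => ?_) z
  have := (abs_le.1 (h x)).2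
  linarith

theorem Wexp_deriv (x : ℝ) : HasDerivAt (fun x : ℝ => Real.exp (x ^ 2 / 2))
    (Real.exp (x ^ 2 / 2) * x) x := by
  have h := (((hasDerivAt_id x).pow 2).div_const 2).exp
  refine h.congr_deriv ?_
  simp

theorem ode_mono (v v' : ℝ → ℝ) (hv : ∀ x, HasDerivAt v (v' x) x) (e : ℝ) (he : 0 ≤ e)
    (h : ∀ x, |v' x + x * v x| ≤ e) :
    Monotone (fun x => 2 * e * (Real.exp (x ^ 2 / 2) * (x / (1 + x ^ 2))) +
      Real.exp (x ^ 2 / 2) * v x) := by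
  have hd : ∀ x, HasDerivAt (fun x => 2 * e * (Real.exp (x ^ 2 / 2) * (x / (1 + x ^ 2))) +
      Real.exp (x ^ 2 / 2) * v x)
      (2 * e * (Real.exp (x ^ 2 / 2) * ((1 + x ^ 4) / (1 + x ^ 2) ^ 2)) +
        Real.exp (x ^ 2 / 2) * (v' x + x * v x)) x := by
    intro x
    have h1 : HasDerivAt (fun x : ℝ => 1 + x ^ 2) (2 * x) x := by
      refine (((hasDerivAt_id x).pow 2).const_add 1).congr_deriv ?_
      simp
    have h2 := (hasDerivAt_id x).div h1 (by positivity)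
    have h3 := (((Wexp_deriv x).mul h2).const_mul (2 * e)).add ((Wexp_deriv x).mul (hv x))
    refine h3.congr_deriv ?_
    simp only [id, Pi.div_apply]
    have : (1 + x ^ 2) ≠ 0 := by positivity
    field_simp
    ring
  refine monotone_of_deriv_nonneg (fun x => (hd x).differentiableAt) fun x => ?_
  rw [(hd x).deriv]
  have hE := Real.exp_pos (x ^ 2 / 2)
  have h1 := (abs_le.1 (h x)).1
  have h2 : (1 : ℝ) / 2 ≤ (1 + x ^ 4) / (1 + x ^ 2) ^ 2 := by
    rw [div_le_div_iff₀ (by norm_num) (by positivity)]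
    nlinarith [sq_nonneg (x ^ 2 - 1)]
  have h3 : 2 * e * (1 / 2) ≤ 2 * e * ((1 + x ^ 4) / (1 + x ^ 2) ^ 2) :=
    mul_le_mul_of_nonneg_left h2 (by linarith)
  have h4 : 0 ≤ Real.exp (x ^ 2 / 2) * (2 * e * ((1 + x ^ 4) / (1 + x ^ 2) ^ 2) +
    (v' x + x * v x)) := mul_nonneg hE.le (by linarith)
  linarith

theorem ode_bd (v v' : ℝ → ℝ) (hv : ∀ x, HasDerivAt v (v' x) x) (e : ℝ)
    (h : ∀ x, |v' x + x * v x| ≤ e) (z : ℝ) :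
    |Real.exp (z ^ 2 / 2) * v z - v 0| ≤ 2 * e * (Real.exp (z ^ 2 / 2) * (|z| / (1 + z ^ 2))) := by
  have he : 0 ≤ e := (abs_nonneg _).trans (h 0)
  have m1 := ode_mono v v' hv e he h
  have m2 := ode_mono (fun x => - v x) (fun x => - v' x) (fun x => (hv x).neg) e he (fun x => by
    rw [← abs_neg]; refine le_trans (le_of_eq ?_) (h x); congr 1; ring)
  rcases le_total 0 z with hz | hz
  · have a1 := m1 hz
    have a2 := m2 hz
    simp at a1 a2
    rw [abs_of_nonneg hz, abs_le]
    constructor <;> linarith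
  · have a1 := m1 hz
    have a2 := m2 hz
    simp at a1 a2
    rw [abs_of_nonpos hz, abs_le, neg_div]
    constructor <;> linarith

theorem ode_second (u u' u'' : ℝ → ℝ) (hu : ∀ x, HasDerivAt u (u' x) x)
    (hu' : ∀ x, HasDerivAt u' (u'' x) x) (e e' : ℝ)
    (hK : ∀ x, |u x| ≤ e') (h : ∀ x, |u'' x + x * u' x| ≤ e) (z : ℝ) :
    |u'' z| ≤ 5 * e + 4 * e' := by
  have he : 0 ≤ e := (abs_nonneg _).trans (h 0)
  have he' : 0 ≤ e' := (abs_nonneg _).trans (hK 0)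
  have hu0 : |u' 0| ≤ 2 * (2 * e' + e) := by
    obtain ⟨ξ, hξ, hx⟩ := exists_hasDerivAt_eq_slope u u' (zero_lt_one)
      (continuous_iff_continuousAt.2 fun x => (hu x).continuousAt).continuousOn
      (fun x _ => hu x)
    have h1 : |u' ξ| ≤ 2 * e' := by
      rw [hx]; simp only [sub_zero, div_one]
      have := abs_sub (u 1) (u 0)
      linarith [hK 1, hK 0]
    have h2 := ode_bd u' u'' hu' e h ξ
    have h3 : |ξ| / (1 + ξ ^ 2) ≤ 1 / 2 := by
      rw [div_le_div_iff₀ (by positivity) (by norm_num), ← sq_abs]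
      nlinarith [sq_nonneg (|ξ| - 1)]
    have h4 : Real.exp (ξ ^ 2 / 2) ≤ 2 := by
      have a1 : ξ ^ 2 / 2 ≤ 1 / 2 := by nlinarith [hξ.1, hξ.2]
      have a2 : Real.exp (1 / 2) ^ 2 ≤ 2 ^ 2 := by
        rw [← Real.exp_nat_mul]; norm_num
        linarith [Real.exp_one_lt_d9]
      have a3 := abs_le_of_sq_le_sq' a2 (by norm_num)
      exact (Real.exp_le_exp.2 a1).trans a3.2
    have hE := Real.exp_pos (ξ ^ 2 / 2)
    calc |u' 0| = |Real.exp (ξ ^ 2 / 2) * u' ξ - (Real.exp (ξ ^ 2 / 2) * u' ξ - u' 0)| := by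
          congr 1; ring
      _ ≤ Real.exp (ξ ^ 2 / 2) * |u' ξ| + |Real.exp (ξ ^ 2 / 2) * u' ξ - u' 0| := by
          refine (abs_sub _ _).trans (le_of_eq ?_)
          rw [abs_mul, abs_of_pos hE]
      _ ≤ 2 * (2 * e') + 2 * e * (2 * (1 / 2)) := by
          refine add_le_add (by gcongr) (h2.trans (by gcongr))
      _ = _ := by ring
  have h2 := ode_bd u' u'' hu' e h z
  have hE := Real.exp_pos (z ^ 2 / 2)
  have h3 : |z * u' z| ≤ |u' 0| + 2 * e := by
    have b1 : Real.exp (z ^ 2 / 2) * |u' z| ≤ |u' 0| +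
        2 * e * (Real.exp (z ^ 2 / 2) * (|z| / (1 + z ^ 2))) := by
      calc _ = |(Real.exp (z ^ 2 / 2) * u' z - u' 0) + u' 0| := by
            rw [sub_add_cancel, abs_mul, abs_of_pos hE]
        _ ≤ _ := abs_add_le _ _
        _ ≤ _ := by linarith
    have b2 : |z| ≤ Real.exp (z ^ 2 / 2) := by
      have := Real.add_one_le_exp (z ^ 2 / 2)
      have h5 : |z| ≤ z ^ 2 / 2 + 1 := by rw [← sq_abs]; nlinarith [sq_nonneg (|z| - 1)]
      linarith
    have b3 : |z| * (|z| / (1 + z ^ 2)) ≤ 1 := by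
      rw [← mul_div_assoc, div_le_one (by positivity), ← pow_two, sq_abs]; linarith
    have b4 := mul_le_mul_of_nonneg_left b1 (abs_nonneg z)
    have b5 : Real.exp (z ^ 2 / 2) * |z * u' z| ≤ Real.exp (z ^ 2 / 2) * (|u' 0| + 2 * e) := by
      rw [abs_mul]
      calc _ = |z| * (Real.exp (z ^ 2 / 2) * |u' z|) := by ring
        _ ≤ _ := b4
        _ = |z| * |u' 0| + 2 * e * Real.exp (z ^ 2 / 2) * (|z| * (|z| / (1 + z ^ 2))) := by ring
        _ ≤ Real.exp (z ^ 2 / 2) * |u' 0| + 2 * e * Real.exp (z ^ 2 / 2) * 1 := by gcongr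
        _ = _ := by ring
    exact le_of_mul_le_mul_left b5 hE
  calc |u'' z| = |(u'' z + z * u' z) - z * u' z| := by congr 1; ring
    _ ≤ _ := abs_sub _ _
    _ ≤ e + (|u' 0| + 2 * e) := add_le_add (h z) h3
    _ ≤ _ := by linarith

theorem ode_main (u u' u'' : ℝ → ℝ) (hu : ∀ x, HasDerivAt u (u' x) x)
    (hu' : ∀ x, HasDerivAt u' (u'' x) x) (K e c : ℝ) (hc : 1 ≤ c) (hc2 : c ≤ 2)
    (hK : ∀ x, |u x| ≤ K) (h : ∀ x, |u'' x + x * u' x - c * u x| ≤ e) (z : ℝ) :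
    |u'' z| ≤ 19 * e := by
  have h1 := max_princ u u' u'' hu hu' K e c hc hK h
  have h2 : ∀ x, |u'' x + x * u' x| ≤ 3 * e := by
    intro x
    calc |u'' x + x * u' x| = |(u'' x + x * u' x - c * u x) + c * u x| := by congr 1; ring
      _ ≤ _ := abs_add_le _ _
      _ ≤ e + 2 * e := by
        refine add_le_add (h x) ?_
        rw [abs_mul, abs_of_nonneg (by linarith : 0 ≤ c)]
        have := h1 x
        gcongr
      _ = _ := by ring
  have := ode_second u u' u'' hu hu' (3 * e) e h1 h2 z
  linarith

end Ode

section Gauss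

theorem gaussD_eq : gaussD = ProbabilityTheory.gaussianPDFReal 0 1 := by
  ext x
  unfold gaussD ProbabilityTheory.gaussianPDFReal
  simp

theorem gaussD_int : Integrable gaussD := by
  rw [gaussD_eq]; exact ProbabilityTheory.integrable_gaussianPDFReal 0 1

theorem gaussD_total : ∫ x, gaussD x = 1 := by
  rw [gaussD_eq]; exact ProbabilityTheory.integral_gaussianPDFReal_eq_one 0 (by norm_num)

theorem gaussD_pos (x : ℝ) : 0 < gaussD x := by
  unfold gaussD; positivity

theorem gaussD_cont : Continuous gaussD := by
  unfold gaussD; fun_prop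

theorem gaussD_deriv (x : ℝ) : HasDerivAt gaussD (- x * gaussD x) x := by
  have h := ((((hasDerivAt_id x).pow 2).neg).div_const 2).exp.const_mul (Real.sqrt (2 * Real.pi))⁻¹
  refine h.congr_deriv ?_
  unfold gaussD
  simp
  ring

theorem gaussCDF_deriv (x : ℝ) : HasDerivAt gaussCDF (gaussD x) x := by
  have e : gaussCDF = fun x => gaussCDF 0 + ∫ t in (0 : ℝ)..x, gaussD t := by
    ext y
    have := intervalIntegral.integral_Iic_sub_Iic (μ := volume) (f := gaussD) (a := 0) (b := y)
      gaussD_int.integrableOn gaussD_int.integrableOn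
    unfold gaussCDF
    linarith
  rw [e]
  exact (intervalIntegral.integral_hasDerivAt_right (gaussD_cont.intervalIntegrable _ _)
    (gaussD_cont.stronglyMeasurableAtFilter _ _) gaussD_cont.continuousAt).const_add _

theorem gaussCDF_nonneg (x : ℝ) : 0 ≤ gaussCDF x :=
  setIntegral_nonneg measurableSet_Iic fun t _ => (gaussD_pos t).le

theorem gaussCDF_le_one (x : ℝ) : gaussCDF x ≤ 1 := by
  rw [← gaussD_total]
  exact setIntegral_le_integral gaussD_int (Filter.Eventually.of_forall fun t => (gaussD_pos t).le)

theorem gaussCDF_symm (x : ℝ) : gaussCDF (-x) = 1 - gaussCDF x := by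
  have h1 : gaussCDF (-x) = ∫ t in Set.Ioi x, gaussD t := by
    unfold gaussCDF
    have := integral_comp_neg_Iic (-x) gaussD
    rw [neg_neg] at this
    rw [← this]
    refine setIntegral_congr_fun measurableSet_Iic fun t _ => ?_
    unfold gaussD; simp
  have h2 := intervalIntegral.integral_Iic_add_Ioi (μ := volume) (f := gaussD) (b := x)
    gaussD_int.integrableOn gaussD_int.integrableOn
  rw [gaussD_total] at h2
  rw [h1]; unfold gaussCDF; linarith

theorem gauss_sq_int : Integrable (fun x => x ^ 2 * gaussD x) := by
  have h := integrable_rpow_mul_exp_neg_mul_sq (b := 1 / 2) (by norm_num) (s := 2) (by norm_num)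
  have h2 := h.const_mul (Real.sqrt (2 * Real.pi))⁻¹
  refine h2.congr (Filter.Eventually.of_forall fun x => ?_)
  simp only [Real.rpow_two]
  unfold gaussD
  rw [show -(1 / 2) * x ^ 2 = -(x ^ 2) / 2 by ring]
  ring

theorem gauss_tail : ∃ K : ℝ, 0 ≤ K ∧ ∀ x ≤ 0, x ^ 2 * gaussCDF x ≤ K := by
  refine ⟨∫ x, x ^ 2 * gaussD x, integral_nonneg fun x => ?_, fun x hx => ?_⟩
  · have := gaussD_pos x; positivity
  · unfold gaussCDF
    rw [← integral_const_mul]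
    refine le_trans (setIntegral_mono_on (gaussD_int.const_mul _).integrableOn
      gauss_sq_int.integrableOn measurableSet_Iic fun t ht => ?_) (setIntegral_le_integral
      gauss_sq_int (Filter.Eventually.of_forall fun t => ?_))
    · have h1 : t ≤ x := ht
      have : x ^ 2 ≤ t ^ 2 := by nlinarith
      exact mul_le_mul_of_nonneg_right this (gaussD_pos t).le
    · have := gaussD_pos t
      simp only [Pi.zero_apply]
      positivity

theorem gaussD_le (x : ℝ) : gaussD x * (1 + x ^ 2 / 2) ≤ 1 := by
  unfold gaussD
  have h1 : (1 : ℝ) ≤ Real.sqrt (2 * Real.pi) := by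
    rw [Real.one_le_sqrt]; linarith [Real.pi_gt_three]
  have h2 := Real.add_one_le_exp (x ^ 2 / 2)
  have h3 : (Real.sqrt (2 * Real.pi))⁻¹ ≤ 1 := inv_le_one_of_one_le₀ h1
  have h4 : Real.exp (-(x ^ 2) / 2) * (1 + x ^ 2 / 2) ≤ 1 := by
    rw [neg_div, Real.exp_neg, inv_mul_le_iff₀ (Real.exp_pos _)]; linarith
  rw [mul_assoc]
  exact mul_le_one₀ h3 (by positivity) h4

end Gauss

end PartG

section PartI

section CoreBounds
variable {n : ℕ}

theorem sdf_J3_near (D : ℝ) (hD : 0 < D) (x : ℝ) : |sdf D J3 x - Jp x| ≤ 3 * D := by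
  rcases le_or_gt x (-D) with h | h
  · unfold sdf J3
    rw [Jp_neg (by linarith : x + D ≤ 0), Jp_neg (by linarith : x ≤ 0),
      Jp_neg (by linarith : x - D ≤ 0)]
    simp; linarith
  rcases le_or_gt D x with h' | h'
  · unfold sdf J3
    rw [Jp_pos (by linarith : 0 ≤ x + D), Jp_pos (by linarith : 0 ≤ x),
      Jp_pos (by linarith : 0 ≤ x - D)]
    have : ((x + D) ^ 3 / 6 - 2 * (x ^ 3 / 6) + (x - D) ^ 3 / 6) / D ^ 2 - x = 0 := by
      field_simp; ring
    rw [this, abs_zero]; linarith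
  · obtain ⟨h0, h1, h2, h3, h4⟩ := Jpow_mid D hD x h h'
    unfold sdf J3
    rw [h0]
    have e1 : Jp x ^ 3 ≤ D ^ 3 := pow_le_pow_left₀ h1 h2 3
    have e2 : Jp (x + D) ^ 3 ≤ (2 * D) ^ 3 := pow_le_pow_left₀ h3 h4 3
    have e3 : 0 ≤ Jp x ^ 3 := by positivity
    have e4 : 0 ≤ Jp (x + D) ^ 3 := by positivity
    have u : (Jp (x + D) ^ 3 / 6 - 2 * (Jp x ^ 3 / 6) + 0 ^ 3 / 6) / D ^ 2 ≤ 2 * D := by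
      rw [div_le_iff₀ (by positivity)]; nlinarith [pow_pos hD 3]
    have l : - (2 * D) ≤ (Jp (x + D) ^ 3 / 6 - 2 * (Jp x ^ 3 / 6) + 0 ^ 3 / 6) / D ^ 2 := by
      rw [le_div_iff₀ (by positivity)]; nlinarith [pow_pos hD 3]
    rw [abs_le]; constructor <;> linarith

theorem sdf_J4_near (D : ℝ) (hD : 0 < D) (x : ℝ) : |sdf D J4 x - J2 x| ≤ 2 * D ^ 2 := by
  have hD2 : 0 < D ^ 2 := by positivity
  rcases le_or_gt x (-D) with h | h
  · unfold sdf J4 J2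
    rw [Jp_neg (by linarith : x + D ≤ 0), Jp_neg (by linarith : x ≤ 0),
      Jp_neg (by linarith : x - D ≤ 0)]
    simp; linarith
  rcases le_or_gt D x with h' | h'
  · unfold sdf J4 J2
    rw [Jp_pos (by linarith : 0 ≤ x + D), Jp_pos (by linarith : 0 ≤ x),
      Jp_pos (by linarith : 0 ≤ x - D)]
    have : ((x + D) ^ 4 / 24 - 2 * (x ^ 4 / 24) + (x - D) ^ 4 / 24) / D ^ 2 - x ^ 2 / 2
        = D ^ 2 / 12 := by
      field_simp; ring
    rw [this, abs_of_pos (by positivity)]; linarith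
  · obtain ⟨h0, h1, h2, h3, h4⟩ := Jpow_mid D hD x h h'
    unfold sdf J4 J2
    rw [h0]
    have e1 : Jp x ^ 4 ≤ D ^ 4 := pow_le_pow_left₀ h1 h2 4
    have e2 : Jp (x + D) ^ 4 ≤ (2 * D) ^ 4 := pow_le_pow_left₀ h3 h4 4
    have e3 : 0 ≤ Jp x ^ 4 := by positivity
    have e4 : 0 ≤ Jp (x + D) ^ 4 := by positivity
    have e5 : Jp x ^ 2 ≤ D ^ 2 := pow_le_pow_left₀ h1 h2 2
    have e6 : 0 ≤ Jp x ^ 2 := by positivity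
    have u : (Jp (x + D) ^ 4 / 24 - 2 * (Jp x ^ 4 / 24) + 0 ^ 4 / 24) / D ^ 2 ≤ D ^ 2 := by
      rw [div_le_iff₀ (by positivity)]; nlinarith [pow_pos hD 4]
    have l : - (D ^ 2) ≤ (Jp (x + D) ^ 4 / 24 - 2 * (Jp x ^ 4 / 24) + 0 ^ 4 / 24) / D ^ 2 := by
      rw [le_div_iff₀ (by positivity)]; nlinarith [pow_pos hD 4]
    rw [abs_le]; constructor <;> linarith

theorem Jp_shift (z t : ℝ) : |Jp (z - t) - Jp z| ≤ |t| := by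
  unfold Jp
  refine (abs_max_sub_max_le_abs _ _ _).trans ?_
  rw [show z - t - z = -t by ring, abs_neg]

theorem J2_shift (z t : ℝ) : |J2 (z - t) - J2 z + t * Jp z| ≤ t ^ 2 := by
  unfold J2
  rcases le_total 0 z with h | h <;> rcases le_total 0 (z - t) with h' | h'
  · rw [Jp_pos h, Jp_pos h', abs_le]; constructor <;> nlinarith [sq_nonneg t]
  · rw [Jp_pos h, Jp_neg h', abs_le]; constructor <;> nlinarith [sq_nonneg t]
  · rw [Jp_neg h, Jp_pos h', abs_le]; constructor <;> nlinarith [sq_nonneg t]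
  · rw [Jp_neg h, Jp_neg h', abs_le]; constructor <;> nlinarith [sq_nonneg t]

theorem rankT_bdd (a : Matrix (Fin n) (Fin n) ℝ) : ∃ B : ℝ, 0 ≤ B ∧ ∀ π, |rankT a π| ≤ B :=
  ⟨∑ π, |rankT a π|, Finset.sum_nonneg fun _ _ => abs_nonneg _, fun π =>
    Finset.single_le_sum (f := fun π => |rankT a π|) (fun _ _ => abs_nonneg _) (mem_univ π)⟩

theorem rankT_mean (a : Fin n → Fin n → ℝ) (hn : 2 ≤ n) (hrow : ∀ i, ∑ j, a i j = 0)
    (hcol : ∀ j, ∑ i, a i j = 0) : permExp (fun π => rankT a π) = 0 := by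
  have h := stein_sum a hn hrow hcol (fun _ => 1)
  have e : ∀ (R C : Finset (Fin n)) (x y : ℝ), gE a R C (fun _ => 1) x - gE a R C (fun _ => 1) y
      = 0 := by
    intro R C x y; simp [gE]
  simp only [e, mul_zero, Finset.sum_const_zero, mul_one] at h
  have h2 : (2 : ℝ) ≤ n := by exact_mod_cast hn
  rcases mul_eq_zero.1 h with h | h
  · exfalso
    have : 0 < 4 * (n : ℝ) ^ 2 * ((n : ℝ) - 1) := by
      have : 0 < (n : ℝ) - 1 := by linarith
      positivity
    linarith
  · exact h

theorem gaussD_le_one (x : ℝ) : gaussD x ≤ 1 := by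
  have := gaussD_le x
  nlinarith [gaussD_pos x, mul_nonneg (gaussD_pos x).le (sq_nonneg x)]

theorem abs_mul_gaussD (x : ℝ) : |x * gaussD x| ≤ 1 := by
  have := gaussD_le x
  have hp := gaussD_pos x
  rw [abs_le]; constructor <;> nlinarith [mul_nonneg hp.le (sq_nonneg (x - 1)),
    mul_nonneg hp.le (sq_nonneg (x + 1))]

theorem gauss_poly_abs (x : ℝ) : |gaussD x * (x ^ 2 - 1)| ≤ 2 := by
  have := gaussD_le x
  have hp := gaussD_pos x
  have h2 := mul_nonneg hp.le (sq_nonneg x)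
  rw [abs_le]; constructor <;> nlinarith

/-- First gaussian primitive is within bounded distance of the positive part. -/
theorem gauss_S_bdd : ∃ K : ℝ, 0 ≤ K ∧ ∀ z, |z * gaussCDF z + gaussD z - Jp z| ≤ K := by
  obtain ⟨K, hK, h⟩ := gauss_tail
  refine ⟨K + 2, by linarith, fun z => ?_⟩
  have key : ∀ x ≤ 0, |x * gaussCDF x| ≤ K + 1 := by
    intro x hx
    have h1 := h x hx
    have h2 := gaussCDF_nonneg x
    have h3 := gaussCDF_le_one x
    rw [abs_le]
    constructor <;> nlinarith [mul_nonneg h2 (sq_nonneg (x + 1)), mul_nonneg h2 (sq_nonneg x)]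
  have hp := gaussD_pos z
  have h1 := gaussD_le_one z
  rcases le_total z 0 with hz | hz
  · rw [Jp_neg hz]
    have := abs_le.1 (key z hz)
    rw [abs_le]; constructor <;> linarith [this.1, this.2]
  · rw [Jp_pos hz]
    have := abs_le.1 (key (-z) (by linarith))
    rw [gaussCDF_symm] at this
    rw [abs_le]; constructor <;> linarith [this.1, this.2]

theorem gauss_Q_bdd (lam : ℝ) : ∃ K : ℝ, 0 ≤ K ∧ ∀ z,
    |((z ^ 2 + 1) * gaussCDF z + z * gaussD z) / 2 - lam / 6 * gaussD z - J2 z| ≤ K := by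
  obtain ⟨K, hK, h⟩ := gauss_tail
  refine ⟨K + 2 + |lam|, by positivity, fun z => ?_⟩
  have hp := gaussD_pos z
  have h1 := gaussD_le_one z
  have h2 := abs_le.1 (abs_mul_gaussD z)
  have h3 : |lam / 6 * gaussD z| ≤ |lam| := by
    rw [abs_mul, abs_of_pos hp, abs_div, abs_of_pos (by norm_num : (0 : ℝ) < 6)]
    have := abs_nonneg lam
    nlinarith
  have h3 := abs_le.1 h3
  have h0 := gaussCDF_nonneg z
  have h4 := gaussCDF_le_one z
  unfold J2
  rcases le_total z 0 with hz | hz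
  · rw [Jp_neg hz]
    have := h z hz
    have t := mul_nonneg (sq_nonneg z) h0
    rw [abs_le]; constructor <;> linarith [h3.1, h3.2, h2.1, h2.2]
  · rw [Jp_pos hz]
    have := h (-z) (by linarith)
    rw [gaussCDF_symm] at this
    have t := mul_nonneg (sq_nonneg z) (sub_nonneg.2 h4)
    rw [neg_sq] at this
    rw [abs_le]; constructor <;> linarith [h3.1, h3.2, h2.1, h2.2]

theorem permExp_near (f g : Equiv.Perm (Fin n) → ℝ) (c : ℝ) (h : ∀ π, |f π - g π| ≤ c) :
    |permExp f - permExp g| ≤ c := by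
  rw [← permExp_sub]; exact permExp_abs_le _ _ h

theorem S_bdd (a : Matrix (Fin n) (Fin n) ℝ) (D : ℝ) (hD : 0 < D) : ∃ K : ℝ, ∀ z,
    |permExp (fun π => sdf D J3 (z - rankT a π)) - (z * gaussCDF z + gaussD z)| ≤ K := by
  obtain ⟨B, hB, h⟩ := rankT_bdd a
  obtain ⟨K, hK, hg⟩ := gauss_S_bdd
  refine ⟨3 * D + B + K, fun z => ?_⟩
  have h1 : |permExp (fun π => sdf D J3 (z - rankT a π)) - permExp (fun _ : Equiv.Perm (Fin n) => Jp z)|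
      ≤ 3 * D + B := by
    refine permExp_near _ _ _ fun π => ?_
    have := abs_add_le (sdf D J3 (z - rankT a π) - Jp (z - rankT a π)) (Jp (z - rankT a π) - Jp z)
    rw [sub_add_sub_cancel] at this
    linarith [sdf_J3_near D hD (z - rankT a π), Jp_shift z (rankT a π), h π]
  rw [permExp_const] at h1
  have h2 := hg z
  rw [abs_le] at *
  constructor <;> linarith [h1.1, h1.2, h2.1, h2.2]

theorem Q_bdd (a : Matrix (Fin n) (Fin n) ℝ) (D lam : ℝ) (hD : 0 < D)
    (hm : permExp (fun π => rankT a π) = 0) : ∃ K : ℝ, ∀ z,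
    |permExp (fun π => sdf D J4 (z - rankT a π)) -
      (((z ^ 2 + 1) * gaussCDF z + z * gaussD z) / 2 - lam / 6 * gaussD z)| ≤ K := by
  obtain ⟨B, hB, h⟩ := rankT_bdd a
  obtain ⟨K, hK, hg⟩ := gauss_Q_bdd lam
  refine ⟨2 * D ^ 2 + B ^ 2 + K, fun z => ?_⟩
  have h1 : |permExp (fun π => sdf D J4 (z - rankT a π)) -
      permExp (fun π => J2 z - Jp z * rankT a π)| ≤ 2 * D ^ 2 + B ^ 2 := by
    refine permExp_near _ _ _ fun π => ?_
    have := abs_add_le (sdf D J4 (z - rankT a π) - J2 (z - rankT a π))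
      (J2 (z - rankT a π) - J2 z + rankT a π * Jp z)
    have e : sdf D J4 (z - rankT a π) - J2 (z - rankT a π) +
      (J2 (z - rankT a π) - J2 z + rankT a π * Jp z) =
      sdf D J4 (z - rankT a π) - (J2 z - Jp z * rankT a π) := by ring
    rw [e] at this
    have hb : rankT a π ^ 2 ≤ B ^ 2 := sq_le_sq' (by linarith [(abs_le.1 (h π)).1])
      (abs_le.1 (h π)).2
    linarith [sdf_J4_near D hD (z - rankT a π), J2_shift z (rankT a π)]
  rw [permExp_sub, permExp_const, permExp_mul, hm, mul_zero, sub_zero] at h1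
  have h2 := hg z
  rw [abs_le] at *
  constructor <;> linarith [h1.1, h1.2, h2.1, h2.2]

theorem E_hasDeriv (a : Matrix (Fin n) (Fin n) ℝ) (D : ℝ) (f f' : ℝ → ℝ)
    (hf : ∀ x, HasDerivAt f (f' x) x) (z : ℝ) :
    HasDerivAt (fun z => permExp (fun π => sdf D f (z - rankT a π)))
      (permExp (fun π => sdf D f' (z - rankT a π))) z :=
  permExp_hasDeriv (fun π z => sdf D f (z - rankT a π)) _ z fun π =>
    (sdf_hasDeriv D f f' hf (z - rankT a π)).comp_sub_const z (rankT a π)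

theorem refl_hasDeriv (D : ℝ) (f f' : ℝ → ℝ) (hf : ∀ x, HasDerivAt f (f' x) x) (z t : ℝ) :
    HasDerivAt (fun t => sdf D f (z - t)) (- sdf D f' (z - t)) t :=
  (sdf_hasDeriv D f f' hf (z - t)).comp_const_sub z t

theorem LipH_neg (a : Fin n → Fin n → ℝ) (f : ℝ → ℝ) (L : ℝ) (h : LipH a f L) :
    LipH a (fun t => - f t) L := by
  intro R C hc hR x y
  have := h R C hc hR x y
  have e : ∀ x, gE a R C (fun t => - f t) x = - gE a R C f x := by
    intro x; unfold gE; rw [Finset.sum_neg_distrib, neg_div]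
  rw [e, e, ← abs_neg]
  convert this using 2
  ring

theorem permExp_neg (g : Equiv.Perm (Fin n) → ℝ) :
    permExp (fun π => - g π) = - permExp g := by
  unfold permExp; rw [Finset.sum_neg_distrib, neg_div]

/-- The density estimate. -/
theorem dens_est (a : Fin n → Fin n → ℝ) (hn : 16 ≤ n) (hrow : ∀ i, ∑ j, a i j = 0)
    (hcol : ∀ j, ∑ i, a i j = 0) (D : ℝ) (hD : 0 < D)
    (h2 : ∑ i, ∑ j, a i j ^ 2 = (n : ℝ) - 1) (h4 : ∑ i, ∑ j, a i j ^ 4 = n * D ^ 2)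
    (C : ℝ) (hC : 0 ≤ C) (hL : ∀ z, LipH a (fun t => sdf D Jp (z - t)) C) (z : ℝ) :
    |permExp (fun π => sdf D Jp (z - rankT a π)) - gaussD z| ≤ 19 * (2560 * C * D + 5 * D) := by
  obtain ⟨K, hK⟩ := S_bdd a D hD
  refine ode_main
    (fun z => permExp (fun π => sdf D J3 (z - rankT a π)) - (z * gaussCDF z + gaussD z))
    (fun z => permExp (fun π => sdf D J2 (z - rankT a π)) - gaussCDF z)
    (fun z => permExp (fun π => sdf D Jp (z - rankT a π)) - gaussD z)
    (fun x => ?_) (fun x => ?_) K _ 1 le_rfl (by norm_num) hK (fun x => ?_) z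
  · refine (E_hasDeriv a D J3 J2 J3_hasDeriv x).sub ?_
    refine (((hasDerivAt_id x).mul (gaussCDF_deriv x)).add (gaussD_deriv x)).congr_deriv ?_
    simp
  · exact (E_hasDeriv a D J2 Jp J2_hasDeriv x).sub (gaussCDF_deriv x)
  · have r := rem1 a hn hrow hcol D hD.le h2 h4 (fun t => sdf D J2 (x - t))
      (fun t => - sdf D Jp (x - t)) (refl_hasDeriv D J2 Jp J2_hasDeriv x) C hC
      (LipH_neg a _ C (hL x))
    have k : |permExp (fun π => (x - rankT a π) * sdf D J2 (x - rankT a π) -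
        sdf D J3 (x - rankT a π))| ≤ 5 * D :=
      permExp_abs_le _ _ fun π => kern1 D hD _
    have e : permExp (fun π => rankT a π * sdf D J2 (x - rankT a π)) =
        x * permExp (fun π => sdf D J2 (x - rankT a π)) -
          permExp (fun π => sdf D J3 (x - rankT a π)) -
          permExp (fun π => (x - rankT a π) * sdf D J2 (x - rankT a π) -
            sdf D J3 (x - rankT a π)) := by
      rw [← permExp_mul, ← permExp_sub, ← permExp_sub]
      congr 1; ext π; ring
    rw [permExp_neg, e] at r
    rw [abs_le] at *
    constructor <;> linarith [r.1, r.2, k.1, k.2]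

theorem core (a : Fin n → Fin n → ℝ) (hn : 16 ≤ n) (hrow : ∀ i, ∑ j, a i j = 0)
    (hcol : ∀ j, ∑ i, a i j = 0) (D lam : ℝ) (hD : 0 < D)
    (h2 : ∑ i, ∑ j, a i j ^ 2 = (n : ℝ) - 1) (h4 : ∑ i, ∑ j, a i j ^ 4 = n * D ^ 2)
    (h3 : ∑ i, ∑ j, a i j ^ 3 = n * lam) (hlam : |lam| ≤ D) (hnD : 1 / (n : ℝ) ≤ 4 * D ^ 2)
    (C : ℝ) (hC : 0 ≤ C) (hL : ∀ z, LipH a (fun t => sdf D Jp (z - t)) C) (z : ℝ) :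
    |permExp (fun π => sdf D J2 (z - rankT a π)) -
      (gaussCDF z - gaussD z * (lam / 6) * (z ^ 2 - 1))| ≤ (100000000 * C + 200000) * D ^ 2 := by
  obtain ⟨K, hK⟩ := Q_bdd a D lam hD (rankT_mean a (by omega) hrow hcol)
  have main := ode_main
    (fun z => permExp (fun π => sdf D J4 (z - rankT a π)) -
      (((z ^ 2 + 1) * gaussCDF z + z * gaussD z) / 2 - lam / 6 * gaussD z))
    (fun z => permExp (fun π => sdf D J3 (z - rankT a π)) -
      (z * gaussCDF z + gaussD z + lam / 6 * (z * gaussD z)))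
    (fun z => permExp (fun π => sdf D J2 (z - rankT a π)) -
      (gaussCDF z - gaussD z * (lam / 6) * (z ^ 2 - 1)))
    (fun x => ?_) (fun x => ?_) K ((4200000 * C + 9600 + 4 + 30000 * C + 50) * D ^ 2) 2
      (by norm_num) le_rfl hK (fun x => ?_) z
  · refine main.trans ?_
    have := sq_nonneg D
    nlinarith [mul_nonneg hC this]
  · refine (E_hasDeriv a D J4 J3 J4_hasDeriv x).sub ?_
    have hh := ((((((hasDerivAt_id x).pow 2).add_const 1).mul (gaussCDF_deriv x)).add
      ((hasDerivAt_id x).mul (gaussD_deriv x))).div_const 2).sub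
      ((gaussD_deriv x).const_mul (lam / 6))
    refine hh.congr_deriv ?_
    simp
    ring
  · refine (E_hasDeriv a D J3 J2 J3_hasDeriv x).sub ?_
    have hh := (((hasDerivAt_id x).mul (gaussCDF_deriv x)).add (gaussD_deriv x)).add
      (((hasDerivAt_id x).mul (gaussD_deriv x)).const_mul (lam / 6))
    refine hh.congr_deriv ?_
    simp
    ring
  · have hP : |permExp (fun π => sdf D Jp (x - rankT a π))| ≤ 1 / D :=
      permExp_abs_le _ _ fun π => by
        rw [abs_of_nonneg (sdf_Jp_nonneg D _)]; exact sdf_Jp_le D hD _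
    have hdd : ∀ t, HasDerivAt (fun t => - sdf D J2 (x - t)) (sdf D Jp (x - t)) t := fun t => by
      exact (refl_hasDeriv D J2 Jp J2_hasDeriv x t).fun_neg.congr_deriv (neg_neg _)
    have r := rem2 a hn hrow hcol D lam hD.le h2 h4 h3 hlam (fun t => sdf D J3 (x - t))
      (fun t => - sdf D J2 (x - t)) (fun t => sdf D Jp (x - t))
      (refl_hasDeriv D J3 J2 J3_hasDeriv x) hdd C (1 / D) hC (hL x) hP
    have k : |permExp (fun π => (x - rankT a π) * sdf D J3 (x - rankT a π) -
        2 * sdf D J4 (x - rankT a π))| ≤ 4 * D ^ 2 :=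
      permExp_abs_le _ _ fun π => kern2 D hD _
    have e : permExp (fun π => rankT a π * sdf D J3 (x - rankT a π)) =
        x * permExp (fun π => sdf D J3 (x - rankT a π)) -
          2 * permExp (fun π => sdf D J4 (x - rankT a π)) -
          permExp (fun π => (x - rankT a π) * sdf D J3 (x - rankT a π) -
            2 * sdf D J4 (x - rankT a π)) := by
      rw [← permExp_mul, ← permExp_mul, ← permExp_sub, ← permExp_sub]
      congr 1; ext π; ring
    have d := dens_est a hn hrow hcol D hD h2 h4 C hC hL x
    have d2 : |lam / 2 * (permExp (fun π => sdf D Jp (x - rankT a π)) - gaussD x)| ≤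
        (30000 * C + 50) * D ^ 2 := by
      rw [abs_mul, abs_div, abs_of_pos (by norm_num : (0 : ℝ) < 2)]
      calc _ ≤ D / 2 * (19 * (2560 * C * D + 5 * D)) := by gcongr
        _ ≤ _ := by nlinarith [mul_nonneg hC (sq_nonneg D), sq_nonneg D]
    have hs : 1 / D * D / (n : ℝ) = 1 / n := by
      rw [one_div_mul_cancel hD.ne']
    rw [permExp_neg, e, hs] at r
    rw [abs_le] at r k d2 ⊢
    constructor <;> linarith [r.1, r.2, k.1, k.2, d2.1, d2.2]

end CoreBounds

end PartI

section Assembly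
variable {n : ℕ}

theorem hatM_row (A : Matrix (Fin n) (Fin n) ℝ) (hn : 2 ≤ n) (i : Fin n) :
    ∑ j, hatM A i j = 0 := by
  have h0 : (n : ℝ) ≠ 0 := by positivity
  unfold hatM
  rw [← Finset.sum_div]
  have : ∑ j, ctr A i j = 0 := by
    unfold ctr colMean rowMean totMean
    simp only [Finset.sum_add_distrib, Finset.sum_sub_distrib, Finset.sum_const, Finset.card_univ,
      Fintype.card_fin, nsmul_eq_mul, ← Finset.sum_div]
    rw [Finset.sum_comm (f := fun j i => A i j)]
    field_simp
    ring
  rw [this, zero_div]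

theorem hatM_col (A : Matrix (Fin n) (Fin n) ℝ) (hn : 2 ≤ n) (j : Fin n) :
    ∑ i, hatM A i j = 0 := by
  have h0 : (n : ℝ) ≠ 0 := by positivity
  unfold hatM
  rw [← Finset.sum_div]
  have : ∑ i, ctr A i j = 0 := by
    unfold ctr colMean rowMean totMean
    simp only [Finset.sum_add_distrib, Finset.sum_sub_distrib, Finset.sum_const, Finset.card_univ,
      Fintype.card_fin, nsmul_eq_mul, ← Finset.sum_div]
    field_simp
    ring
  rw [this, zero_div]

theorem rankTstd_eq (A : Matrix (Fin n) (Fin n) ℝ) (hn : 2 ≤ n) (π : Equiv.Perm (Fin n)) :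
    rankTstd A π = rankT (hatM A) π := by
  have h0 : (n : ℝ) ≠ 0 := by positivity
  unfold rankTstd rankT hatM
  rw [← Finset.sum_div]
  congr 1
  unfold ctr
  simp only [Finset.sum_add_distrib, Finset.sum_sub_distrib, Finset.sum_const, Finset.card_univ,
      Fintype.card_fin, nsmul_eq_mul]
  rw [Equiv.sum_comp π (fun j => colMean A j)]
  unfold muM colMean rowMean totMean
  rw [← Finset.sum_div, ← Finset.sum_div, Finset.sum_comm (f := fun j i => A i j)]
  field_simp
  ring

theorem Fstd_eq (A : Matrix (Fin n) (Fin n) ℝ) (hn : 2 ≤ n) (z : ℝ) :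
    Fstd A z = Fr (hatM A) z := by
  unfold Fstd Fr
  simp only [rankTstd_eq A hn]

theorem hatM_sq (A : Matrix (Fin n) (Fin n) ℝ) (hn : 2 ≤ n) (hs : 0 < sdev A) :
    ∑ i, ∑ j, hatM A i j ^ 2 = (n : ℝ) - 1 := by
  have h2 : (2 : ℝ) ≤ n := by exact_mod_cast hn
  have h1 : (n : ℝ) - 1 ≠ 0 := by linarith
  have hp : 0 < sigma2 A := Real.sqrt_pos.1 hs
  have he : sdev A ^ 2 = sigma2 A := Real.sq_sqrt hp.le
  have hne : sdev A ^ 2 ≠ 0 := by positivity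
  unfold hatM
  simp only [div_pow, ← Finset.sum_div]
  rw [div_eq_iff hne, he]
  unfold sigma2
  field_simp

theorem hatM_four (A : Matrix (Fin n) (Fin n) ℝ) (hn : 2 ≤ n) :
    ∑ i, ∑ j, hatM A i j ^ 4 = (n : ℝ) * DM A ^ 2 := by
  have h0 : (n : ℝ) ≠ 0 := by positivity
  have e : ∀ x : ℝ, |x| ^ 4 = x ^ 4 := fun x => by
    rw [show 4 = 2 * 2 from rfl, pow_mul, sq_abs, ← pow_mul]
  unfold DM
  rw [Real.sq_sqrt]
  · unfold deltaM
    simp only [e]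
    field_simp
  · unfold deltaM; positivity

theorem hatM_three (A : Matrix (Fin n) (Fin n) ℝ) (hn : 2 ≤ n) :
    ∑ i, ∑ j, hatM A i j ^ 3 = (n : ℝ) * lam1 A := by
  have h0 : (n : ℝ) ≠ 0 := by positivity
  unfold lam1
  field_simp

theorem DM_inv (A : Matrix (Fin n) (Fin n) ℝ) (hn : 2 ≤ n) (hs : 0 < sdev A) :
    1 / (n : ℝ) ≤ 4 * DM A ^ 2 := by
  have h2 : (2 : ℝ) ≤ n := by exact_mod_cast hn
  have h := Finset.sum_mul_sq_le_sq_mul_sq (univ : Finset (Fin n × Fin n)) (fun _ => (1 : ℝ))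
    (fun p => hatM A p.1 p.2 ^ 2)
  have e2 := hatM_sq A hn hs
  have e4 := hatM_four A hn
  rw [← Fintype.sum_prod_type'] at e2 e4
  simp only [one_mul, ← pow_mul, one_pow, Finset.sum_const, Finset.card_univ, Fintype.card_prod,
    Fintype.card_fin, nsmul_eq_mul, mul_one] at h
  rw [e2, e4] at h
  push_cast at h
  have hn0 : (0 : ℝ) < n := by linarith
  rw [div_le_iff₀ hn0]
  have h3 : (n : ℝ) ^ 2 ≤ 4 * ((n : ℝ) - 1) ^ 2 := by nlinarith
  have h5 : (n : ℝ) ^ 2 * 1 ≤ (n : ℝ) ^ 2 * (4 * DM A ^ 2 * n) := by nlinarith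
  exact le_of_mul_le_mul_left h5 (by positivity)

theorem DM_pos (A : Matrix (Fin n) (Fin n) ℝ) (hn : 2 ≤ n) (hs : 0 < sdev A) : 0 < DM A := by
  have h := DM_inv A hn hs
  have h0 : 0 ≤ DM A := Real.sqrt_nonneg _
  have hn0 : (0 : ℝ) < n := by positivity
  have h1 : 0 < 1 / (n : ℝ) := by positivity
  rcases h0.lt_or_eq with h2 | h2
  · exact h2
  · rw [← h2] at h; norm_num at h; linarith [show 0 < (n : ℝ)⁻¹ by positivity]

theorem lam1_le (A : Matrix (Fin n) (Fin n) ℝ) (hn : 2 ≤ n) (hs : 0 < sdev A) :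
    |lam1 A| ≤ DM A := by
  have h2 : (2 : ℝ) ≤ n := by exact_mod_cast hn
  have h := Finset.sum_mul_sq_le_sq_mul_sq (univ : Finset (Fin n × Fin n))
    (fun p => hatM A p.1 p.2) (fun p => hatM A p.1 p.2 ^ 2)
  have e2 := hatM_sq A hn hs
  have e3 := hatM_three A hn
  have e4 := hatM_four A hn
  rw [← Fintype.sum_prod_type'] at e2 e3 e4
  simp only [← pow_mul, ← pow_succ'] at h
  rw [e2, e4, e3] at h
  have hn0 : (0 : ℝ) < n := by linarith
  refine abs_le_of_sq_le_sq ?_ (Real.sqrt_nonneg _)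
  have h5 : (n : ℝ) ^ 2 * lam1 A ^ 2 ≤ (n : ℝ) ^ 2 * DM A ^ 2 := by
    nlinarith [mul_nonneg hn0.le (sq_nonneg (DM A))]
  exact le_of_mul_le_mul_left h5 (by positivity)

theorem diter_two (y z : ℝ) (G : ℝ → ℝ) :
    Δiter y 2 G (z - y) = G (z + y) - 2 * G z + G (z - y) := by
  simp only [Δiter, Function.iterate_succ, Function.iterate_zero, Function.comp, id]
  rw [sub_add_cancel]; ring

theorem edge_err (A : Matrix (Fin n) (Fin n) ℝ) (hn : 2 ≤ n) (hs : 0 < sdev A) (z : ℝ) :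
    |Fstd A z - edge1 A z| ≤ 2 + DM A ^ 2 := by
  have h1 : 0 ≤ Fstd A z := by
    have := permExp_mono (m := n) (fun _ => 0) (fun π => if rankTstd A π ≤ z then (1 : ℝ) else 0)
      (fun π => by split_ifs <;> norm_num)
    rwa [permExp_const] at this
  have h2 : Fstd A z ≤ 1 := by
    have := permExp_mono (m := n) (fun π => if rankTstd A π ≤ z then (1 : ℝ) else 0) (fun _ => 1)
      (fun π => by split_ifs <;> norm_num)
    rwa [permExp_const] at this
  have h3 := gaussCDF_nonneg z
  have h4 := gaussCDF_le_one z
  have h5 : |gaussD z * (lam1 A / 6) * (z ^ 2 - 1)| ≤ DM A / 3 := by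
    rw [show gaussD z * (lam1 A / 6) * (z ^ 2 - 1) = lam1 A * (gaussD z * (z ^ 2 - 1)) / 6 by ring,
      abs_div, abs_mul, abs_of_pos (by norm_num : (0 : ℝ) < 6)]
    have := mul_le_mul (lam1_le A hn hs) (gauss_poly_abs z) (abs_nonneg _) (Real.sqrt_nonneg _)
    unfold DM at *
    linarith
  unfold edge1
  have h6 := sq_nonneg (DM A - 1)
  rw [abs_le] at *
  constructor <;> nlinarith [h5.1, h5.2]

theorem big_n (A : Matrix (Fin n) (Fin n) ℝ) (hn : 16 ≤ n) (hs : 0 < sdev A) (C1 : ℝ) (hC : 0 < C1)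
    (H : ∀ r : ℕ, r ≤ min 8 (n - 1) →
            ∀ ρ γ : Fin (n - r) → Fin n, StrictMono ρ → StrictMono γ →
              ∀ z y : ℝ, 0 ≤ y → y ≤ DM A →
                |Δiter y 2 (Fr (fun i j => hatM A (ρ i) (γ j))) z| ≤
                  C1 * (DM A ^ 2 + y ^ 2)) (z : ℝ) :
    |Fstd A z - edge1 A z| ≤ (1000000000 * C1 + 1000000) * DM A ^ 2 := by
  have hn2 : 2 ≤ n := by omega
  have hD := DM_pos A hn2 hs
  have H' : ∀ r : ℕ, r ≤ min 8 (n - 1) →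
            ∀ ρ γ : Fin (n - r) → Fin n, StrictMono ρ → StrictMono γ →
              ∀ z y : ℝ, 0 ≤ y → y ≤ DM A →
                |Fr (fun i j => hatM A (ρ i) (γ j)) (z + y) -
                  2 * Fr (fun i j => hatM A (ρ i) (γ j)) z +
                  Fr (fun i j => hatM A (ρ i) (γ j)) (z - y)| ≤ (2 * C1) * DM A ^ 2 := by
    intro r hr ρ γ hρ hγ z y hy hyD
    have := H r hr ρ γ hρ hγ (z - y) y hy hyD
    rw [diter_two] at this
    refine this.trans ?_
    have : y ^ 2 ≤ DM A ^ 2 := pow_le_pow_left₀ hy hyD 2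
    nlinarith
  have hL : ∀ z, LipH (hatM A) (fun t => sdf (DM A) Jp (z - t)) (2 * C1) := by
    intro z R C hRC hR x y
    have hle : R.card ≤ n := by simpa using Finset.card_le_univ R
    have hr : R.card = n - (n - R.card) := by omega
    have hc : C.card = n - (n - R.card) := by omega
    have ex := gE_eq_perm R C hr hc (hatM A) (fun t => sdf (DM A) Jp (z - t)) x
    have ey := gE_eq_perm R C hr hc (hatM A) (fun t => sdf (DM A) Jp (z - t)) y
    have key := k_lip (fun i j => hatM A (R.orderEmbOfFin hr i) (C.orderEmbOfFin hc j)) (DM A)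
      (2 * C1) hD (fun w => H' (n - R.card) (by omega) _ _ (R.orderEmbOfFin hr).strictMono
        (C.orderEmbOfFin hc).strictMono w (DM A) hD.le le_rfl) (z - x) (z - y)
    rw [show z - x - (z - y) = -(x - y) by ring, abs_neg] at key
    simp only [sub_sub] at key
    exact (le_of_eq (congrArg abs (congrArg₂ (fun u v : ℝ => u - v) ex ey))).trans key
  have hF := F_G (hatM A) (DM A) (2 * C1) hD (fun w y hy hyD =>
    H' 0 (by omega) id id strictMono_id strictMono_id w y hy hyD) z
  have hcore := core (hatM A) hn (hatM_row A hn2) (hatM_col A hn2) (DM A) (lam1 A) hD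
    (hatM_sq A hn2 hs) (hatM_four A hn2) (hatM_three A hn2) (lam1_le A hn2 hs) (DM_inv A hn2 hs)
    (2 * C1) (by linarith) hL z
  rw [Fstd_eq A hn2]
  have t := abs_add_le (Fr (hatM A) z - permExp (fun π => sdf (DM A) J2 (z - rankT (hatM A) π)))
    (permExp (fun π => sdf (DM A) J2 (z - rankT (hatM A) π)) - edge1 A z)
  rw [sub_add_sub_cancel] at t
  unfold edge1 at t ⊢
  nlinarith [mul_pos hC (pow_pos hD 2), pow_pos hD 2]

end Assembly

/-- first-order Edgeworth expansion for linear rank statistics.  The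
submatrices `B ∈ N(8, Â)` are parametrized by the number `r ≤ min 8 (n−1)` of deleted
rows/columns and strictly monotone maps selecting the kept rows and columns. -/
theorem rank_statistic_first_order_edgeworth :
    ∃ K2 : ℝ, 0 < K2 ∧ ∃ K3 : ℝ, 0 < K3 ∧
      ∀ (n : ℕ), 2 ≤ n → ∀ A : Matrix (Fin n) (Fin n) ℝ, 0 < sdev A →
        ∀ C1 : ℝ, 0 < C1 →
          (∀ r : ℕ, r ≤ min 8 (n - 1) →
            ∀ ρ γ : Fin (n - r) → Fin n, StrictMono ρ → StrictMono γ →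
              ∀ z y : ℝ, 0 ≤ y → y ≤ DM A →
                |Δiter y 2 (Fr (fun i j => hatM A (ρ i) (γ j))) z| ≤
                  C1 * (DM A ^ 2 + y ^ 2)) →
          ∀ z : ℝ, |Fstd A z - edge1 A z| ≤ (K2 * C1 + K3) * DM A ^ 2 := by
  refine ⟨1000000000, by norm_num, 1000000, by norm_num, ?_⟩
  intro n hn A hs C1 hC H z
  rcases le_or_gt 16 n with h | h
  · exact big_n A h hs C1 hC H z
  · have h1 := DM_inv A hn hs
    have h2 := edge_err A hn hs z
    have h3 : (1 : ℝ) / 16 ≤ 1 / (n : ℝ) := by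
      have : (n : ℝ) ≤ 16 := by exact_mod_cast h.le
      have : (0 : ℝ) < n := by positivity
      gcongr
    nlinarith [mul_nonneg hC.le (sq_nonneg (DM A))]
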